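/- arXiv:2007.00070 — 3 statements merged into one kernel-verified Lean document; each statement's English description precedes it below -/
import Mathlib

section
/- Fix integers d ≥ 2 and m ≥ 1. Suppose A ⊆ ℤ^m is d-sparse and stable in (ℤ^m,+). Then A belongs to the Boolean algebra of subsets of ℤ^m generated by the sets β + (C(a₁;δ₁) + ⋯ + C(a_k;δ_k)), where k ∈ ℕ, β, a₁, …, a_k ∈ ℤ^m, δ₁, …, δ_k are positive integers, + of sets denotes Minkowski sum, and the empty sum is {0}. -/
/-- A language is regular if it is recognized by a DFA with finitely many states. -/
def RegularLang {α : Type} (L : Set (List α)) : Prop :=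
  ∃ (Q : Type) (_ : Fintype Q) (M : DFA α Q), M.accepts = L

/-- A language is sparse if it is regular and the number of its words of length at most `k`
is bounded by `C·(k^p + 1)`. -/
def SparseLang {α : Type} (L : Set (List α)) : Prop :=
  RegularLang L ∧ ∃ C p : ℕ, ∀ k : ℕ,
    {σ ∈ L | σ.length ≤ k}.Finite ∧ {σ ∈ L | σ.length ≤ k}.ncard ≤ C * (k ^ p + 1)

/-- The canonical base-`d` representation of an integer (least significant digit first,
no trailing zeroes; digits of a negative integer are negated). -/
def canonRep (d : ℕ) (a : ℤ) : List ℤ :=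
  if 0 ≤ a then (Nat.digits d a.toNat).map fun k => (k : ℤ)
  else (Nat.digits d (-a).toNat).map fun k => -(k : ℤ)

/-- The canonical base-`d` representation of a tuple in `ℤ^m`: componentwise canonical
representations padded with trailing zeroes to a common length. -/
def canonRepVec (d : ℕ) {m : ℕ} (a : Fin m → ℤ) : List (Fin m → ℤ) :=
  List.ofFn fun j : Fin (Finset.univ.sup fun i => (canonRep d (a i)).length) =>
    fun i => (canonRep d (a i)).getD (j : ℕ) 0

/-- A set `A ⊆ ℤ^m` is `d`-sparse if its language of canonical representations is sparse. -/
def SparseVec (d : ℕ) {m : ℕ} (A : Set (Fin m → ℤ)) : Prop :=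
  SparseLang (canonRepVec d '' A)

/-- An `N`-ladder for a binary relation. -/
def HasLadder {X Y : Type*} (R : X → Y → Prop) (N : ℕ) : Prop :=
  ∃ (a : Fin (N + 1) → X) (b : Fin (N + 1) → Y), ∀ i j, R (a i) (b j) ↔ i ≤ j

/-- A binary relation is stable if for some `N` it admits no `N`-ladder. -/
def StableRel {X Y : Type*} (R : X → Y → Prop) : Prop := ∃ N : ℕ, ¬ HasLadder R N

/-- A subset of an abelian group is stable in the group if `x + y ∈ A` is a stable relation. -/
def StableIn {G : Type*} [AddCommGroup G] (A : Set G) : Prop :=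
  StableRel fun x y : G => x + y ∈ A

/-- `C(a;δ) = {a + d^δ·a + d^{2δ}·a + ⋯ + d^{nδ}·a : n ∈ ℕ}` in `ℤ^m`. -/
def CsetVec (d : ℤ) {m : ℕ} (a : Fin m → ℤ) (δ : ℕ) : Set (Fin m → ℤ) :=
  {x | ∃ n : ℕ, x = ∑ i ∈ Finset.range (n + 1), d ^ (i * δ) • a}

/-- Membership in the Boolean algebra of sets generated by a family `S`. -/
inductive InBoolAlg {X : Type*} (S : Set (Set X)) : Set X → Prop
  | base : ∀ s ∈ S, InBoolAlg S s
  | empty : InBoolAlg S ∅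
  | compl : ∀ s, InBoolAlg S s → InBoolAlg S sᶜ
  | union : ∀ s t, InBoolAlg S s → InBoolAlg S t → InBoolAlg S (s ∪ t)

/-!
Pumping shows that in an automaton accepting subexponentially many words, the loops at a useful
state are determined by their lengths. If `δ` is a common multiple of loop lengths, then, reading
words in blocks of length `δ`, Arden's lemma presents the language as a finite union of expressions
`u₀ v₁∗ u₁ v₂∗ u₂ ⋯` with all `vᵢ` of length `δ`. Hence `A` is built from points by unions and by
prepending base-`D` digits, once or repeatedly, where `D = d ^ δ`. Expanding the repetitions covers
`A` by finitely many sets `U` of sums `β + ∑ i, (1 + D + ⋯ + D ^ (f i - 1)) • a i`, and it remains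
to describe `A ∩ U`.

Prepending a fixed digit `b` many times eventually does not affect membership in `A`, because a
nonzero vector is not divisible by all powers of `D`. Taking `b = ∑ i, a i` removes the smallest of
the exponents `f i`, so by induction membership in `A` is constant on spread-out exponents with a
given position of the minimum. Stability makes the constant independent of this position, as
otherwise comparing two exponents would give ladders. If the exponents are not spread out, one of
them is bounded or differs from another by a bounded amount, so the sum lies in one of finitely many
sets with fewer summands, and induction on the number of summands applies.
-/

open Filter Function

section BooleanAlgebra

variable {X : Type*} {F : Set (Set X)} {A U : Set X}

theorem InBoolAlg.of_mem_closure (hA : A ∈ BooleanSubalgebra.closure F) : InBoolAlg F A :=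
  BooleanSubalgebra.closure_bot_sup_induction (fun s hs ↦ .base s hs) .empty
    (fun s _ t _ hs ht ↦ .union s t hs ht) (fun s _ hs ↦ .compl s hs) hA

theorem InBoolAlg.mono {F' : Set (Set X)} (hF : F ⊆ F') (hA : InBoolAlg F A) : InBoolAlg F' A := by
  induction hA with
  | base s hs => exact .base s (hF hs)
  | empty => exact .empty
  | compl s _ ih => exact .compl s ih
  | union s t _ _ hs ht => exact .union s t hs ht

theorem inter_mem_booleanSubalgebra {B : BooleanSubalgebra (Set X)} {ι : Type*} [Finite ι]
    {K : ι → Set X} {P : Prop} (hU : U ∈ B) (hK : ∀ i, K i ∈ B) (hAK : ∀ i, A ∩ K i ∈ B)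
    (h : ∀ x ∈ U, (x ∈ A ↔ P) ∨ ∃ i, x ∈ K i) : A ∩ U ∈ B := by
  have hin : U ∩ ⋃ i, A ∩ K i ∈ B := B.inf_mem hU (BooleanSubalgebra.iSup_mem hAK)
  have hout : U \ ⋃ i, K i ∈ B := B.sdiff_mem hU (BooleanSubalgebra.iSup_mem hK)
  by_cases hP : P
  · convert B.sup_mem hin hout using 1
    ext x
    simp only [Set.sup_eq_union, Set.mem_inter_iff, Set.mem_union, Set.mem_iUnion, Set.mem_sdiff]
    grind
  · convert hin using 1
    ext x
    simp only [Set.mem_inter_iff, Set.mem_iUnion]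
    grind

end BooleanAlgebra

section Stability

theorem StableRel.comap {X Y X' Y' : Type*} {R : X → Y → Prop} (hR : StableRel R) (f : X' → X)
    (g : Y' → Y) : StableRel fun x y ↦ R (f x) (g y) :=
  hR.imp fun _ hN ⟨a, b, hab⟩ ↦ hN ⟨f ∘ a, g ∘ b, hab⟩

theorem StableIn.preimage {G : Type*} [AddCommGroup G] {A : Set G} (hA : StableIn A) {f g : G → G}
    (hfg : ∀ x y, f (x + y) = f x + g y) : StableIn (f ⁻¹' A) := by
  simpa only [StableIn, Set.mem_preimage, hfg] using StableRel.comap hA f g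

end Stability

namespace DSparse

/-! ### Sets defined by prepending digits -/

section Repunit

variable {R : Type*} [CommRing R] (D : R)

/-- The generalized repunit `1 + D + ⋯ + D ^ (e - 1)`, whose base-`D` expansion consists of `e`
digits `1`. -/
def repunit (e : ℕ) : R := ∑ i ∈ Finset.range e, D ^ i

@[simp]
theorem repunit_zero : repunit D 0 = 0 := Finset.sum_range_zero _

@[simp]
theorem repunit_one : repunit D 1 = 1 := by simp [repunit]

theorem repunit_add (e f : ℕ) : repunit D (e + f) = repunit D e + D ^ e * repunit D f := by
  simp only [repunit, Finset.sum_range_add, Finset.mul_sum, pow_add]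

theorem pow_eq_one_add_mul_repunit (e : ℕ) : D ^ e = 1 + (D - 1) * repunit D e := by
  rw [repunit, mul_geom_sum, add_sub_cancel]

end Repunit

section Prepend

variable {R G : Type*} [CommRing R] [AddCommGroup G] [Module R G] (D : R)

/-- Prepending the digit `c` to a base-`D` expansion, least significant digit first. -/
def prepend (c x : G) : G := c + D • x

theorem iterate_prepend (c x : G) (e : ℕ) :
    (prepend D c)^[e] x = repunit D e • c + D ^ e • x := by
  induction e with
  | zero => simp
  | succ e ih =>
    rw [iterate_succ_apply', ih, prepend, add_comm e, repunit_add, repunit_one, pow_add, pow_one]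
    module

theorem _root_.StableIn.preimage_iterate_prepend {A : Set G} (hA : StableIn A) (c : G) (e : ℕ) :
    StableIn ((prepend D c)^[e] ⁻¹' A) :=
  hA.preimage (g := (D ^ e • ·)) fun x y ↦ by simp only [iterate_prepend]; module

variable {D}

theorem prepend_eq_add_prepend_iff {b c t x y : G} :
    prepend D c y = t + prepend D b x ↔ D • (y - x) = t + b - c := by
  simp only [prepend, smul_sub]
  grind

theorem preimage_prepend_image_prepend (hD : IsSMulRegular G D) {b c s t : G}
    (hs : D • s = t + b - c) (S : Set G) :
    prepend D b ⁻¹' ((t + ·) ⁻¹' (prepend D c '' S)) = (s + ·) ⁻¹' S := by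
  ext x
  simp only [Set.mem_preimage, Set.mem_image, prepend_eq_add_prepend_iff, ← hs, hD.eq_iff,
    sub_eq_iff_eq_add, exists_eq_right]

theorem preimage_prepend_image_prepend_eq_empty_or (hD : IsSMulRegular G D) (b c t : G)
    (S : Set G) :
    prepend D b ⁻¹' ((t + ·) ⁻¹' (prepend D c '' S)) = ∅ ∨
      ∃ s, D • s = t + b - c ∧
        prepend D b ⁻¹' ((t + ·) ⁻¹' (prepend D c '' S)) = (s + ·) ⁻¹' S := by
  refine or_iff_not_imp_left.2 fun hne ↦ ?_
  obtain ⟨x, y, -, hy⟩ := Set.nonempty_iff_ne_empty.2 hne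
  have hs := prepend_eq_add_prepend_iff.1 hy
  exact ⟨y - x, hs, preimage_prepend_image_prepend hD hs S⟩

theorem iUnion_iterate_image_eq {X : Type*} (f : X → X) (S : Set X) :
    ⋃ e, f^[e] '' S = S ∪ f '' ⋃ e, f^[e] '' S := by
  conv_lhs => rw [← Set.union_iUnion_nat_succ, iterate_zero, Set.image_id]
  simp only [iterate_succ', Set.image_comp, Set.image_iUnion]

end Prepend

section SparseSets

variable {R G : Type*} [CommRing R] [AddCommGroup G] [Module R G] {D : R}

variable (D) in
/-- The sets of values of sparse languages of base-`D` expansions: digits may be prepended once,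
or an arbitrary number of times. -/
inductive IsSparseSet : Set G → Prop
  | empty : IsSparseSet ∅
  | singleton (x : G) : IsSparseSet {x}
  | union {S T : Set G} : IsSparseSet S → IsSparseSet T → IsSparseSet (S ∪ T)
  | translate (t : G) {S : Set G} : IsSparseSet S → IsSparseSet ((t + ·) ⁻¹' S)
  | image_prepend (c : G) {S : Set G} : IsSparseSet S → IsSparseSet (prepend D c '' S)
  | iUnion_image_prepend (c : G) {S : Set G} : IsSparseSet S →
      IsSparseSet (⋃ e, (prepend D c)^[e] '' S)

variable (D) in
theorem singleton_eq_image_prepend (x : G) : {x} = prepend D (x - D • x) '' {x} := by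
  simp [prepend]

theorem IsSparseSet.preimage_prepend_translate (hD : IsSMulRegular G D) {S : Set G}
    (hS : IsSparseSet D S) (b t : G) : IsSparseSet D (prepend D b ⁻¹' ((t + ·) ⁻¹' S)) := by
  have image_case {S : Set G} (hS : IsSparseSet D S) (c t : G) :
      IsSparseSet D (prepend D b ⁻¹' ((t + ·) ⁻¹' (prepend D c '' S))) := by
    obtain h | ⟨s, -, h⟩ := preimage_prepend_image_prepend_eq_empty_or hD b c t S <;> rw [h]
    exacts [.empty, hS.translate s]
  induction hS generalizing t with
  | empty => exact .empty
  | singleton x =>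
    rw [singleton_eq_image_prepend D x]
    exact image_case (.singleton x) _ t
  | union _ _ hS hT => exact (hS t).union (hT t)
  | translate s _ hS => simpa only [← Set.preimage_comp, comp_def, add_assoc] using hS (s + t)
  | image_prepend c hS _ => exact image_case hS c t
  | iUnion_image_prepend c hS ih =>
    rw [iUnion_iterate_image_eq, Set.preimage_union, Set.preimage_union]
    exact (ih t).union (image_case (hS.iUnion_image_prepend c) c t)

theorem IsSparseSet.preimage_iterate_prepend (hD : IsSMulRegular G D) {S : Set G}
    (hS : IsSparseSet D S) (b : G) (e : ℕ) : IsSparseSet D ((prepend D b)^[e] ⁻¹' S) := by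
  induction e with
  | zero => exact hS
  | succ e ih => simpa [iterate_succ, Set.preimage_comp] using ih.preimage_prepend_translate hD b 0

theorem eventuallyConst_add_one_iff {X : Type*} {u : ℕ → X} :
    EventuallyConst (fun e ↦ u (e + 1)) atTop ↔ EventuallyConst u atTop := by
  conv_rhs => rw [EventuallyConst, ← map_add_atTop_eq_nat 1, map_map]
  rfl

theorem eventuallyConst_of_eq_union {X : Type*} {u v : ℕ → Set X} (hv : EventuallyConst v atTop)
    (huv : ∀ e, u (e + 1) = v (e + 1) ∪ u e) : EventuallyConst u atTop := by
  obtain ⟨N, hN⟩ := eventuallyConst_atTop.1 hv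
  have hstep (e : ℕ) (he : N ≤ e) : u (e + 1) = v N ∪ u e := by rw [huv, hN _ (by lia)]
  refine eventuallyConst_atTop_nat.2 ⟨N + 1, fun e he ↦ ?_⟩
  obtain ⟨e, rfl⟩ := Nat.exists_eq_add_of_le' he
  rw [← add_assoc, hstep (e + N + 1) (by lia), hstep (e + N) (by lia), ← Set.union_assoc,
    Set.union_self]

variable (D) in
theorem eq_zero_of_forall_exists_pow_smul_eq [IsHausdorff (Ideal.span {D}) G] {x : G}
    (hx : ∀ n : ℕ, ∃ y, D ^ n • y = x) : x = 0 := by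
  refine IsHausdorff.haus ‹_› x fun n ↦ SModEq.zero.2 ?_
  rw [Ideal.span_singleton_pow, Submodule.ideal_span_singleton_smul,
    Submodule.mem_smul_pointwise_iff_exists]
  simpa using hx n

section

variable [IsHausdorff (Ideal.span {D}) G]

theorem eventuallyConst_preimage_of_eq_union (hD : IsSMulRegular G D) {b c : G} {S Z : Set G}
    (hZ : Z = S ∪ prepend D c '' Z)
    (hS : ∀ t, EventuallyConst (fun e ↦ (prepend D b)^[e] ⁻¹' ((t + ·) ⁻¹' S)) atTop) (t : G) :
    EventuallyConst (fun e ↦ (prepend D b)^[e] ⁻¹' ((t + ·) ⁻¹' Z)) atTop := by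
  have hsucc (t : G) (e : ℕ) : (prepend D b)^[e + 1] ⁻¹' ((t + ·) ⁻¹' Z) =
      (prepend D b)^[e + 1] ⁻¹' ((t + ·) ⁻¹' S) ∪
        (prepend D b)^[e] ⁻¹' (prepend D b ⁻¹' ((t + ·) ⁻¹' (prepend D c '' Z))) := by
    conv_lhs => rw [hZ]
    simp only [Set.preimage_union, iterate_succ', Set.preimage_comp]
  -- The translation `t` is carried to `s` with `D • s = t + b - c`, and `w s = w t / D`.
  set w : G → G := fun t ↦ D • t - t - b + c with hw
  by_cases ht : w t = 0
  · have hfix : prepend D b ⁻¹' ((t + ·) ⁻¹' (prepend D c '' Z)) = (t + ·) ⁻¹' Z :=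
      preimage_prepend_image_prepend hD (by grind) Z
    exact eventuallyConst_of_eq_union (hS t) fun e ↦ by rw [hsucc, hfix]
  · obtain ⟨n, hn⟩ : ∃ n : ℕ, ¬∃ y, D ^ n • y = w t := by
      by_contra! h
      exact ht (eq_zero_of_forall_exists_pow_smul_eq D h)
    clear ht
    induction n generalizing t with
    | zero => simp at hn
    | succ n ih =>
      rw [← eventuallyConst_add_one_iff]
      simp only [hsucc]
      refine (eventuallyConst_add_one_iff.2 (hS t)).comp₂ (· ∪ ·) ?_
      obtain h | ⟨s, hs, h⟩ := preimage_prepend_image_prepend_eq_empty_or hD b c t Z <;>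
        simp only [h]
      · exact .const ∅
      · refine ih s fun ⟨y, hy⟩ ↦ hn ⟨y, ?_⟩
        rw [pow_succ', mul_smul, hy]
        simp only [hw, smul_add, smul_sub, hs]
        grind

theorem IsSparseSet.eventuallyConst_preimage_translate (hD : IsSMulRegular G D) {S : Set G}
    (hS : IsSparseSet D S) (b t : G) :
    EventuallyConst (fun e ↦ (prepend D b)^[e] ⁻¹' ((t + ·) ⁻¹' S)) atTop := by
  induction hS generalizing t with
  | empty => exact .const ∅
  | singleton x =>
    have hx : {x} = ∅ ∪ prepend D (x - D • x) '' {x} := by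
      rw [Set.empty_union, ← singleton_eq_image_prepend]
    exact eventuallyConst_preimage_of_eq_union hD hx (fun _ ↦ .const ∅) t
  | union _ _ hS hT => exact (hS t).comp₂ (· ∪ ·) (hT t)
  | translate s _ hS => simpa only [← Set.preimage_comp, comp_def, add_assoc] using hS (s + t)
  | @image_prepend c S _ ih =>
    rw [← eventuallyConst_add_one_iff]
    simp only [iterate_succ', Set.preimage_comp]
    obtain h | ⟨s, -, h⟩ := preimage_prepend_image_prepend_eq_empty_or hD b c t S <;> simp only [h]
    exacts [.const ∅, ih s]
  | iUnion_image_prepend c _ ih =>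
    exact eventuallyConst_preimage_of_eq_union hD (iUnion_iterate_image_eq _ _) ih t

end

end SparseSets

/-! ### Stable sets and spread exponents -/

section Spread

variable {R G : Type*} [CommRing R] [AddCommGroup G] [Module R G] {D : R} {n T : ℕ}

/-- Exponents that are at least `T` and pairwise at least `T` apart: the generic position in which
membership of `repunitSum D a f` in a stable sparse set does not depend on `f`. -/
def Spread (T : ℕ) (f : Fin n → ℕ) : Prop :=
  (∀ i, T ≤ f i) ∧ Pairwise fun i j ↦ f i + T ≤ f j ∨ f j + T ≤ f i

theorem Spread.mono {T' : ℕ} {f : Fin n → ℕ} (hf : Spread T f) (hT : T' ≤ T) : Spread T' f :=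
  ⟨fun i ↦ hT.trans (hf.1 i), fun i j hij ↦ by have := hf.2 hij; lia⟩

theorem spread_mul {h : Fin n → ℕ} (hpos : ∀ i, 0 < h i) (hinj : Injective h) (T : ℕ) :
    Spread T fun i ↦ T * h i := by
  refine ⟨fun i ↦ Nat.le_mul_of_pos_right T (hpos i), fun i j hij ↦ ?_⟩
  simp only [← mul_add_one]
  exact (hinj.ne hij).lt_or_gt.imp (Nat.mul_le_mul_left T) (Nat.mul_le_mul_left T)

theorem Spread.sub_succAbove {f : Fin (n + 1) → ℕ} (hf : Spread T f) {i : Fin (n + 1)}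
    (hi : ∀ k, f i ≤ f k) : Spread T fun j ↦ f (i.succAbove j) - f i := by
  refine ⟨fun j ↦ ?_, fun j k hjk ↦ ?_⟩
  · have := hf.1 i
    have := hf.2 (i.succAbove_ne j)
    have := hi (i.succAbove j)
    lia
  · have := hf.2 (i.succAbove_right_injective.ne hjk)
    have := hi (i.succAbove j)
    have := hi (i.succAbove k)
    lia

variable (D) in
/-- `∑ i, (1 + D + ⋯ + D ^ (f i - 1)) • a i`. For `D = d ^ δ` and positive `f i` this is the general
element of `C(a 0; δ) + ⋯ + C(a (n - 1); δ)`. -/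
def repunitSum (a : Fin n → G) (f : Fin n → ℕ) : G := ∑ i, repunit D (f i) • a i

theorem iterate_prepend_repunitSum (a : Fin n → G) (β c : G) (f : Fin n → ℕ) (e : ℕ) :
    (prepend D c)^[e] (β + repunitSum D a f) =
      β + repunit D e • (c + (D - 1) • β - ∑ i, a i) + repunitSum D a fun i ↦ e + f i := by
  simp only [iterate_prepend, repunitSum, repunit_add, add_smul, mul_smul, Finset.sum_add_distrib,
    ← Finset.smul_sum]
  rw [pow_eq_one_add_mul_repunit D e]
  module

theorem repunitSum_eq_iterate_prepend (a : Fin (n + 1) → G) {f : Fin (n + 1) → ℕ} {i : Fin (n + 1)}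
    (hi : ∀ k, f i ≤ f k) :
    repunitSum D a f = (prepend D (∑ k, a k))^[f i]
      (repunitSum D (i.removeNth a) fun j ↦ f (i.succAbove j) - f i) := by
  rw [← zero_add (repunitSum D (i.removeNth a) _), iterate_prepend_repunitSum]
  simp only [repunitSum, Fin.sum_univ_succAbove _ i, Fin.removeNth_apply, hi, add_tsub_cancel_of_le]
  module

theorem exists_spread_min_mem {S : Set G} (hS : StableIn S) (a : Fin n → G) {i j : Fin n}
    (hij : i ≠ j) (h : ∀ f, Spread T f → (∀ k, f i ≤ f k) → repunitSum D a f ∈ S) :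
    ∃ f, Spread T f ∧ (∀ k, f j ≤ f k) ∧ repunitSum D a f ∈ S := by
  by_contra! hj
  obtain ⟨N, hN⟩ := hS
  -- The exponent of `a i` is the smallest when `p ≤ q`, that of `a j` is when `q < p`.
  let e (p q : ℕ) (k : Fin n) : ℕ :=
    if k = i then 2 * p + 1 else if k = j then 2 * q + 2 else 2 * N + 3 + k
  have hspread (p q : Fin (N + 1)) : Spread T fun k ↦ T * e p q k :=
    spread_mul (fun k ↦ by grind) (fun k l hkl ↦ by grind) T
  have hsum (p q : ℕ) : repunitSum D a (fun k ↦ T * e p q k) =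
      repunit D (T * (2 * p + 1)) • a i +
        ∑ k ∈ Finset.univ.erase i, repunit D (T * e 0 q k) • a k := by
    rw [repunitSum, ← Finset.add_sum_erase _ _ (Finset.mem_univ i)]
    congr 1
    · simp [e]
    · exact Finset.sum_congr rfl fun k hk ↦ by simp [e, Finset.ne_of_mem_erase hk]
  refine hN ⟨fun p ↦ repunit D (T * (2 * p + 1)) • a i,
    fun q ↦ ∑ k ∈ Finset.univ.erase i, repunit D (T * e 0 q k) • a k, fun p q ↦ ?_⟩
  simp only [← hsum]
  refine ⟨fun hmem ↦ ?_, fun hle ↦ h _ (hspread p q) fun k ↦ Nat.mul_le_mul_left T (by grind)⟩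
  by_contra! hlt
  exact hj _ (hspread p q) (fun k ↦ Nat.mul_le_mul_left T (by grind)) hmem

variable [IsHausdorff (Ideal.span {D}) G]

theorem IsSparseSet.exists_forall_spread_iff (hD : IsSMulRegular G D) {S : Set G}
    (hS : IsSparseSet D S) (hst : StableIn S) (a : Fin n → G) :
    ∃ (T : ℕ) (P : Prop), ∀ f, Spread T f → (repunitSum D a f ∈ S ↔ P) := by
  induction n generalizing S with
  | zero => exact ⟨0, 0 ∈ S, fun f _ ↦ by simp [repunitSum]⟩
  | succ n ih =>
    set b := ∑ k, a k with hb
    obtain ⟨E, hE⟩ := eventuallyConst_atTop.1 (hS.eventuallyConst_preimage_translate hD b 0)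
    simp only [zero_add, Set.preimage_id'] at hE
    choose T P hTP using fun i : Fin (n + 1) ↦ ih (hS.preimage_iterate_prepend hD b E)
      (hst.preimage_iterate_prepend D b E) (i.removeNth a)
    set T' := max E (Finset.univ.sup T)
    have hmin (i : Fin (n + 1)) (f : Fin (n + 1) → ℕ) (hf : Spread T' f) (hi : ∀ k, f i ≤ f k) :
        repunitSum D a f ∈ S ↔ P i := by
      have hTi : T i ≤ T' := (Finset.le_sup (Finset.mem_univ i)).trans (le_max_right _ _)
      rw [repunitSum_eq_iterate_prepend a hi, ← Set.mem_preimage, ← hb,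
        hE _ ((le_max_left _ _).trans (hf.1 i))]
      exact hTP i _ ((hf.sub_succAbove hi).mono hTi)
    have hP (i j : Fin (n + 1)) (hi : P i) : P j := by
      obtain rfl | hij := eq_or_ne i j
      · exact hi
      obtain ⟨f, hf, hj, hmem⟩ := exists_spread_min_mem hst a hij
        fun f hf hfi ↦ (hmin i f hf hfi).2 hi
      exact (hmin j f hf hj).1 hmem
    refine ⟨T', P 0, fun f hf ↦ ?_⟩
    obtain ⟨i, hi⟩ := Finite.exists_min f
    exact (hmin i f hf hi).trans ⟨hP i 0, hP 0 i⟩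

end Spread

section Generators

variable {R G : Type*} [CommRing R] [AddCommGroup G] [Module R G] (D : R) {n T : ℕ}

/-- For `D = d ^ δ` this is the set `β + (C(a 0; δ) + ⋯ + C(a (n - 1); δ))`: as every element of
`C(a; δ)` contains the summand `a`, only positive exponents occur. -/
def repunitSums (β : G) (a : Fin n → G) : Set G :=
  {x | ∃ f : Fin n → ℕ, (∀ i, 1 ≤ f i) ∧ x = β + repunitSum D a f}

/-- The generators of the Boolean algebra, with a common base `D`. -/
def repunitSumsFamily : Set (Set G) :=
  {S | ∃ (n : ℕ) (β : G) (a : Fin n → G), S = repunitSums D β a}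

variable {D}

theorem repunitSums_mem_family (β : G) (a : Fin n → G) :
    repunitSums D β a ∈ repunitSumsFamily D := ⟨n, β, a, rfl⟩

theorem translate_repunitSums (t β : G) (a : Fin n → G) :
    (t + ·) ⁻¹' repunitSums D β a = repunitSums D (β - t) a := by
  ext x
  simp only [repunitSums, Set.mem_preimage, Set.mem_ofPred_eq]
  grind

theorem image_prepend_repunitSums_subset (c β : G) (a : Fin n → G) :
    prepend D c '' repunitSums D β a ⊆ repunitSums D (c + D • β - ∑ i, a i) a := by
  rintro _ ⟨_, ⟨f, -, rfl⟩, rfl⟩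
  refine ⟨fun i ↦ 1 + f i, fun i ↦ by lia, ?_⟩
  have h := iterate_prepend_repunitSum (D := D) a β c f 1
  rw [iterate_one, repunit_one, one_smul] at h
  rw [h]
  module

theorem iUnion_image_prepend_repunitSums_subset (c β : G) (a : Fin n → G) :
    ⋃ e, (prepend D c)^[e] '' repunitSums D β a ⊆ repunitSums D β a ∪
      repunitSums D β (Fin.cons (c + (D - 1) • β - ∑ i, a i) a : Fin (n + 1) → G) := by
  refine Set.iUnion_subset fun e ↦ ?_
  rintro _ ⟨x, hx, rfl⟩
  obtain rfl | he := Nat.eq_zero_or_pos e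
  · exact .inl hx
  obtain ⟨f, -, rfl⟩ := hx
  refine .inr ⟨Fin.cons e fun i ↦ e + f i, Fin.cases he fun i ↦ le_add_right he, ?_⟩
  rw [iterate_prepend_repunitSum, add_assoc]
  simp only [repunitSum, Fin.sum_univ_succ, Fin.cons_zero, Fin.cons_succ]

variable (D) in
/-- Sets contained in a finite union of generators. -/
def FinitelyCovered (S : Set G) : Prop :=
  ∃ 𝓕 ⊆ repunitSumsFamily D, 𝓕.Finite ∧ S ⊆ ⋃₀ 𝓕

theorem FinitelyCovered.of_subset {S : Set G} {β : G} {a : Fin n → G}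
    (hS : S ⊆ repunitSums D β a) : FinitelyCovered D S :=
  ⟨{repunitSums D β a}, by simpa using repunitSums_mem_family β a, Set.finite_singleton _,
    by simpa using hS⟩

theorem FinitelyCovered.union {S T : Set G} (hS : FinitelyCovered D S)
    (hT : FinitelyCovered D T) : FinitelyCovered D (S ∪ T) := by
  obtain ⟨𝓕, h𝓕, h𝓕fin, hS⟩ := hS
  obtain ⟨𝓖, h𝓖, h𝓖fin, hT⟩ := hT
  refine ⟨𝓕 ∪ 𝓖, Set.union_subset h𝓕 h𝓖, h𝓕fin.union h𝓖fin, ?_⟩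
  rw [Set.sUnion_union]
  exact Set.union_subset_union hS hT

theorem FinitelyCovered.mono {S T : Set G} (hT : FinitelyCovered D T) (hST : S ⊆ T) :
    FinitelyCovered D S :=
  let ⟨𝓕, h𝓕, hfin, hcover⟩ := hT
  ⟨𝓕, h𝓕, hfin, hST.trans hcover⟩

theorem FinitelyCovered.biUnion {S : Set G} (hS : FinitelyCovered D S) {r : G → Set G}
    (hr : ∀ (n : ℕ) (β : G) (a : Fin n → G), FinitelyCovered D (⋃ x ∈ repunitSums D β a, r x)) :
    FinitelyCovered D (⋃ x ∈ S, r x) := by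
  obtain ⟨𝓕, h𝓕, hfin, hcover⟩ := hS
  have hr' : ∀ F ∈ 𝓕, FinitelyCovered D (⋃ x ∈ F, r x) := by
    intro F hF
    obtain ⟨n, β, a, rfl⟩ := h𝓕 hF
    exact hr n β a
  choose! 𝓖 h𝓖 h𝓖fin h𝓖cover using hr'
  refine ⟨⋃ F ∈ 𝓕, 𝓖 F, Set.iUnion₂_subset h𝓖, hfin.biUnion h𝓖fin, Set.iUnion₂_subset fun x hx ↦ ?_⟩
  obtain ⟨F, hF, hxF⟩ := hcover hx
  calc r x ⊆ ⋃ x ∈ F, r x := Set.subset_biUnion_of_mem hxF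
    _ ⊆ ⋃₀ 𝓖 F := h𝓖cover F hF
    _ ⊆ ⋃₀ ⋃ F ∈ 𝓕, 𝓖 F := Set.sUnion_subset_sUnion (Set.subset_biUnion_of_mem hF)

theorem IsSparseSet.finitelyCovered {S : Set G} (hS : IsSparseSet D S) : FinitelyCovered D S := by
  induction hS with
  | empty => exact ⟨∅, Set.empty_subset _, Set.finite_empty, Set.empty_subset _⟩
  | singleton x =>
    refine .of_subset (n := 0) (β := x) (a := Fin.elim0) ?_
    simp [repunitSums, repunitSum]
  | union _ _ hS hT => exact hS.union hT
  | translate t _ ih =>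
    rw [← neg_neg t, ← Set.image_add_left, Set.image_eq_iUnion]
    refine ih.biUnion fun n β a ↦ ?_
    rw [← Set.image_eq_iUnion, Set.image_add_left, neg_neg, translate_repunitSums]
    exact .of_subset subset_rfl
  | image_prepend c _ ih =>
    rw [Set.image_eq_iUnion]
    refine ih.biUnion fun n β a ↦ ?_
    rw [← Set.image_eq_iUnion]
    exact .of_subset (image_prepend_repunitSums_subset c β a)
  | iUnion_image_prepend c _ ih =>
    simp only [Set.image_eq_iUnion, Set.iUnion_comm (ι := ℕ)]
    refine ih.biUnion fun n β a ↦ ?_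
    simp only [Set.iUnion_comm (ι' := ℕ), ← Set.image_eq_iUnion]
    exact (FinitelyCovered.union (.of_subset subset_rfl) (.of_subset subset_rfl)).mono
      (iUnion_image_prepend_repunitSums_subset c β a)

theorem exists_of_not_spread {f : Fin (n + 1) → ℕ} (hf : ¬Spread T f) :
    ∃ i, f i < T ∨ ∃ j, ∃ c < T, f i = c + f (i.succAbove j) := by
  by_contra! h
  refine hf ⟨fun i ↦ (h i).1, fun i j hij ↦ ?_⟩
  by_contra! hlt
  wlog hle : f j ≤ f i generalizing i j
  · exact this _ _ hij.symm hlt.symm (le_of_not_ge hle)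
  obtain ⟨k, rfl⟩ := Fin.exists_succAbove_eq hij.symm
  exact (h i).2 k (f i - f (i.succAbove k)) (by lia) (by lia)

variable (D T) in
/-- The generators with one summand fewer that cover the non-spread part of `repunitSums D β a`:
either the exponent of `a i` is a constant `c < T` (index `none`), or it exceeds by `c` the
exponent of another summand (index `some j`). -/
def degenerateSums (β : G) (a : Fin (n + 1) → G) : Fin (n + 1) × Fin T × Option (Fin n) → Set G :=
  fun (i, c, o) ↦ repunitSums D (β + repunit D c • a i)
    (i.removeNth a + o.elim 0 fun j ↦ Pi.single j (D ^ (c : ℕ) • a i))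

theorem mem_degenerateSums {β : G} {a : Fin (n + 1) → G} {f : Fin (n + 1) → ℕ}
    (hpos : ∀ i, 1 ≤ f i) (hf : ¬Spread T f) :
    ∃ k, β + repunitSum D a f ∈ degenerateSums D T β a k := by
  obtain ⟨i, hi | ⟨j, c, hc, hi⟩⟩ := exists_of_not_spread hf
  · refine ⟨(i, ⟨f i, hi⟩, none), i.removeNth f, fun j ↦ hpos _, ?_⟩
    simp [repunitSum, Fin.sum_univ_succAbove _ i, Fin.removeNth_apply, add_assoc]
  · refine ⟨(i, ⟨c, hc⟩, some j), i.removeNth f, fun j ↦ hpos _, ?_⟩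
    simp only [repunitSum, Fin.sum_univ_succAbove _ i, hi, repunit_add, Fin.removeNth_apply,
      Option.elim_some, Pi.add_apply, Pi.single_apply, smul_add, smul_ite, smul_zero,
      Finset.sum_add_distrib, Finset.sum_ite_eq', Finset.mem_univ, ↓reduceIte, add_assoc,
      add_right_inj]
    module

theorem IsSparseSet.inter_repunitSums_mem_closure [IsHausdorff (Ideal.span {D}) G]
    (hD : IsSMulRegular G D) {A : Set G} (hA : IsSparseSet D A) (hst : StableIn A) (β : G)
    (a : Fin n → G) :
    A ∩ repunitSums D β a ∈ BooleanSubalgebra.closure (repunitSumsFamily D) := by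
  have hgen {n : ℕ} (β : G) (a : Fin n → G) :
      repunitSums D β a ∈ BooleanSubalgebra.closure (repunitSumsFamily D) :=
    BooleanSubalgebra.subset_closure (repunitSums_mem_family β a)
  have hgeneric {n : ℕ} (β : G) (a : Fin n → G) :=
    (hA.translate β).exists_forall_spread_iff hD
      (hst.preimage (g := id) fun x y ↦ (add_assoc β x y).symm) a
  induction n generalizing β with
  | zero =>
    obtain ⟨T, P, hP⟩ := hgeneric β a
    refine inter_mem_booleanSubalgebra (K := Empty.elim) (P := P) (hgen β a) nofun nofun ?_
    rintro _ ⟨f, -, rfl⟩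
    exact .inl (hP f ⟨nofun, nofun⟩)
  | succ n ih =>
    obtain ⟨T, P, hP⟩ := hgeneric β a
    refine inter_mem_booleanSubalgebra (K := degenerateSums D T β a) (P := P) (hgen β a)
      (fun _ ↦ hgen _ _) (fun _ ↦ ih _ _) ?_
    rintro _ ⟨f, hpos, rfl⟩
    by_cases hf : Spread T f
    · exact .inl (hP f hf)
    · exact .inr (mem_degenerateSums hpos hf)

theorem IsSparseSet.mem_closure [IsHausdorff (Ideal.span {D}) G]
    (hD : IsSMulRegular G D) {A : Set G} (hA : IsSparseSet D A) (hst : StableIn A) :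
    A ∈ BooleanSubalgebra.closure (repunitSumsFamily D) := by
  obtain ⟨𝓕, h𝓕, hfin, hcover⟩ := hA.finitelyCovered
  rw [← Set.inter_eq_left.2 hcover, Set.sUnion_eq_biUnion, Set.inter_iUnion₂]
  refine BooleanSubalgebra.biSup_mem hfin fun S hS ↦ ?_
  obtain ⟨n, β, a, rfl⟩ := h𝓕 hS
  exact hA.inter_repunitSums_mem_closure hD hst β a

end Generators

/-! ### Sparse regular languages -/

section Automata

variable {α Q : Type*}

/-- Languages with fewer than exponentially many words: for no `a`, `b` are there at least `2 ^ k`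
words of length at most `a + k * b` for all `k`. Taking `b = 0` shows that there are finitely many
words of bounded length. -/
def IsSubexponential (L : Language α) : Prop :=
  ∀ a b : ℕ, ∃ k : ℕ, {w | w ∈ L ∧ w.length ≤ a + k * b}.encard < 2 ^ k

theorem exists_mul_pow_add_one_lt_two_pow (C p a b : ℕ) :
    ∃ k : ℕ, C * ((a + k * b) ^ p + 1) < 2 ^ k := by
  have hlim := tendsto_pow_const_div_const_pow_of_one_lt p (r := (2 : ℝ)) one_lt_two
  have hpos : (0 : ℝ) < 1 / (C * ((a + b) ^ p + 1) + 1 : ℕ) := by positivity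
  obtain ⟨k, hk, hk1⟩ := ((hlim.eventually_lt_const hpos).and (eventually_ge_atTop 1)).exists
  rw [div_lt_div_iff₀ (by positivity) (by positivity), one_mul] at hk
  have hkp : 1 ≤ k ^ p := Nat.one_le_pow _ _ hk1
  refine ⟨k, ?_⟩
  calc C * ((a + k * b) ^ p + 1)
      ≤ C * ((k * (a + b)) ^ p + k ^ p) := by gcongr; nlinarith
    _ ≤ k ^ p * (C * ((a + b) ^ p + 1) + 1) := by rw [mul_pow]; nlinarith
    _ < 2 ^ k := by exact_mod_cast hk

theorem _root_.SparseLang.isSubexponential {α : Type} {L : Set (List α)} (hL : SparseLang L) :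
    IsSubexponential (α := α) L := by
  obtain ⟨-, C, p, h⟩ := hL
  intro a b
  obtain ⟨k, hk⟩ := exists_mul_pow_add_one_lt_two_pow C p a b
  obtain ⟨hfin, hcard⟩ := h (a + k * b)
  exact ⟨k, hfin.cast_ncard_eq.symm.trans_lt (by exact_mod_cast hcard.trans_lt hk)⟩

variable {M : DFA α Q} {q : Q}

theorem append_mem_acceptsFrom {u w : List α} :
    u ++ w ∈ M.acceptsFrom q ↔ w ∈ M.acceptsFrom (M.evalFrom q u) := by
  rw [DFA.mem_acceptsFrom, DFA.evalFrom_of_append, DFA.mem_acceptsFrom]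

theorem IsSubexponential.acceptsFrom_evalFrom (hq : IsSubexponential (M.acceptsFrom q))
    (u : List α) : IsSubexponential (M.acceptsFrom (M.evalFrom q u)) := by
  intro a b
  obtain ⟨k, hk⟩ := hq (u.length + a) b
  refine ⟨k, lt_of_le_of_lt ?_ hk⟩
  rw [← (List.append_right_injective u).encard_image]
  refine Set.encard_le_encard ?_
  rintro _ ⟨w, ⟨hw, hlen⟩, rfl⟩
  exact ⟨append_mem_acceptsFrom.2 hw, by rw [List.length_append]; lia⟩

theorem IsSubexponential.finite_length_le {L : Language α} (hL : IsSubexponential L) (n : ℕ) :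
    {w | w ∈ L ∧ w.length ≤ n}.Finite := by
  obtain ⟨k, hk⟩ := hL n 0
  exact Set.encard_lt_top_iff.1 (hk.trans_le le_top)

theorem IsSubexponential.finite_useful_words [Finite Q]
    (hq : IsSubexponential (M.acceptsFrom q)) (n : ℕ) :
    {w | w.length = n ∧ ∃ z, z ∈ M.acceptsFrom (M.evalFrom q w)}.Finite := by
  have hz (s : Q) : ∃ z, (∃ z', z' ∈ M.acceptsFrom s) → z ∈ M.acceptsFrom s := by
    by_cases h : ∃ z', z' ∈ M.acceptsFrom s
    exacts [h.imp fun _ hz _ ↦ hz, ⟨[], fun h' ↦ absurd h' h⟩]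
  choose z hz using hz
  refine (Set.finite_iUnion fun s : Q ↦ (hq.finite_length_le (n + (z s).length)).preimage
    (List.append_left_injective (z s)).injOn).subset fun w ⟨hlen, hw⟩ ↦ ?_
  exact Set.mem_iUnion.2 ⟨M.evalFrom q w, append_mem_acceptsFrom.2 (hz _ hw),
    by rw [List.length_append, hlen]⟩

theorem two_pow_le_encard_loops {v w : List α} (hv : M.evalFrom q v = q) (hw : M.evalFrom q w = q)
    (hlen : w.length = v.length) (hne : v ≠ w) (k : ℕ) :
    2 ^ k ≤ {x | x.length = k * v.length ∧ M.evalFrom q x = q}.encard := by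
  induction k with
  | zero => exact Set.one_le_encard_iff_nonempty.2 ⟨[], by simp⟩
  | succ k ih =>
    set X := {x | x.length = k * v.length ∧ M.evalFrom q x = q}
    have hdisj : Disjoint ((v ++ ·) '' X) ((w ++ ·) '' X) := by
      rw [Set.disjoint_left]
      rintro _ ⟨x, -, rfl⟩ ⟨y, -, hxy⟩
      exact hne (List.append_inj_left hxy hlen).symm
    calc (2 : ℕ∞) ^ (k + 1) = 2 ^ k + 2 ^ k := by rw [pow_succ, mul_two]
      _ ≤ X.encard + X.encard := add_le_add ih ih
      _ = ((v ++ ·) '' X ∪ (w ++ ·) '' X).encard := by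
        rw [Set.encard_union_eq hdisj, (List.append_right_injective v).encard_image,
          (List.append_right_injective w).encard_image]
      _ ≤ _ := Set.encard_le_encard ?_
    rintro _ (⟨x, ⟨hx, hxq⟩, rfl⟩ | ⟨x, ⟨hx, hxq⟩, rfl⟩)
    · exact ⟨by rw [List.length_append, hx]; ring, by rw [DFA.evalFrom_of_append, hv, hxq]⟩
    · exact ⟨by rw [List.length_append, hx, hlen]; ring, by rw [DFA.evalFrom_of_append, hw, hxq]⟩

theorem IsSubexponential.loop_unique (hq : IsSubexponential (M.acceptsFrom q)) {z : List α}
    (hz : z ∈ M.acceptsFrom q) {v w : List α} (hv : M.evalFrom q v = q)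
    (hw : M.evalFrom q w = q) (hlen : w.length = v.length) : v = w := by
  by_contra hne
  obtain ⟨k, hk⟩ := hq z.length v.length
  refine hk.not_ge ((two_pow_le_encard_loops hv hw hlen hne k).trans ?_)
  rw [← (List.append_left_injective z).encard_image]
  refine Set.encard_le_encard ?_
  rintro _ ⟨x, ⟨hx, hxq⟩, rfl⟩
  exact ⟨append_mem_acceptsFrom.2 (hxq.symm ▸ hz), by rw [List.length_append]; lia⟩

variable (M) in
/-- `δ` is the length of some loop at every state that has a nonempty loop. -/
def IsLoopLength (δ : ℕ) : Prop :=
  ∀ q w, w ≠ [] → M.evalFrom q w = q → ∃ v : List α, v.length = δ ∧ M.evalFrom q v = q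

theorem exists_loop_length_mul {v : List α} (hv : M.evalFrom q v = q) (k : ℕ) :
    ∃ w : List α, w.length = v.length * k ∧ M.evalFrom q w = q := by
  induction k with
  | zero => exact ⟨[], rfl, rfl⟩
  | succ k ih =>
    obtain ⟨w, hlen, hw⟩ := ih
    exact ⟨v ++ w, by rw [List.length_append, hlen]; ring, by rw [DFA.evalFrom_of_append, hv, hw]⟩

variable (M) in
theorem exists_isLoopLength [Finite Q] : ∃ δ, 1 ≤ δ ∧ IsLoopLength M δ := by
  cases nonempty_fintype Q
  have hloop (q : Q) : ∃ n, 1 ≤ n ∧ ∀ w, w ≠ [] → M.evalFrom q w = q →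
      ∃ v : List α, v.length = n ∧ M.evalFrom q v = q := by
    by_cases h : ∃ w, w ≠ [] ∧ M.evalFrom q w = q
    · obtain ⟨w, hw, hq⟩ := h
      exact ⟨w.length, List.length_pos_iff.2 hw, fun _ _ _ ↦ ⟨w, rfl, hq⟩⟩
    · exact ⟨1, le_rfl, fun w hw hq ↦ absurd ⟨w, hw, hq⟩ h⟩
  choose n hn hloop using hloop
  refine ⟨∏ q, n q, Finset.one_le_prod' fun q _ ↦ hn q, fun q w hw hq ↦ ?_⟩
  obtain ⟨v, hv, hvq⟩ := hloop q w hw hq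
  obtain ⟨k, hk⟩ := Finset.dvd_prod_of_mem n (Finset.mem_univ q)
  rw [hk, ← hv]
  exact exists_loop_length_mul hvq k

theorem IsLoopLength.evalFrom_eq_self {δ : ℕ} (hδ : 1 ≤ δ) (hM : IsLoopLength M δ)
    (hq : IsSubexponential (M.acceptsFrom q)) {u w z : List α} (hu : u.length = δ)
    (hw : δ ∣ w.length) (hloop : M.evalFrom q (u ++ w) = q) (hz : z ∈ M.acceptsFrom q) :
    M.evalFrom q u = q := by
  obtain ⟨k, hk⟩ := hw
  have hne : u ++ w ≠ [] := List.append_ne_nil_of_left_ne_nil (by grind) w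
  obtain ⟨v, hv, hvq⟩ := hM q _ hne hloop
  obtain ⟨x, hx, hxq⟩ := exists_loop_length_mul hvq k
  -- The loops `u ++ w` and `v ^ (k + 1)` have the same length.
  have huv : u ++ w = v ++ x := hq.loop_unique hz hloop
    (by rw [DFA.evalFrom_of_append, hvq, hxq]) (by simp only [List.length_append, hu, hk, hv, hx])
  rwa [List.append_inj_left huv (hu.trans hv.symm)]

section BlockSparse

open Computability

variable {δ : ℕ}

/-- Finite unions of languages `u₀ v₁∗ u₁ v₂∗ u₂ ⋯`, built from right to left, in which the loops
`vᵢ` have length `δ` and the words `uᵢ` except the last one have lengths divisible by `δ`. -/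
inductive IsBlockSparse (δ : ℕ) : Language α → Prop
  | zero : IsBlockSparse δ 0
  | singleton (w : List α) : IsBlockSparse δ {w}
  | add {L L' : Language α} : IsBlockSparse δ L → IsBlockSparse δ L' → IsBlockSparse δ (L + L')
  | singleton_mul {u : List α} {L : Language α} : u.length = δ → IsBlockSparse δ L →
      IsBlockSparse δ ({u} * L)
  | kstar_mul {v : List α} {L : Language α} : v.length = δ → IsBlockSparse δ L →
      IsBlockSparse δ ({v}∗ * L)

theorem IsBlockSparse.biSup {ι : Type*} {s : Set ι} (hs : s.Finite) {L : ι → Language α}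
    (h : ∀ i ∈ s, IsBlockSparse δ (L i)) : IsBlockSparse δ (⨆ i ∈ s, L i) := by
  induction s, hs using Set.Finite.induction_on with
  | empty => rw [iSup_emptyset]; exact .zero
  | insert _ _ ih =>
    rw [iSup_insert]
    exact (h _ (Set.mem_insert _ _)).add (ih fun j hj ↦ h j (Set.mem_insert_of_mem _ hj))

theorem IsBlockSparse.of_finite {L : Language α} (hL : {w | w ∈ L}.Finite) :
    IsBlockSparse δ L := by
  have hL' : L = ⨆ w ∈ {w | w ∈ L}, {w} := (Set.biUnion_of_singleton _).symm
  rw [hL']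
  exact .biSup hL fun w _ ↦ .singleton w

variable (M) in
/-- The loops of length `δ` at `q`. -/
def loopsOfLength (δ : ℕ) (q : Q) : Language α := {v | v.length = δ ∧ M.evalFrom q v = q}

variable (M) in
/-- The words accepted from `q` that are shorter than `δ` or leave `q` with their first `δ`
letters. -/
def leavingWords (δ : ℕ) (q : Q) : Language α :=
  (M.acceptsFrom q ⊓ {w | w.length < δ}) +
    ⨆ u ∈ {u | (u.length = δ ∧ ∃ z, z ∈ M.acceptsFrom (M.evalFrom q u)) ∧ M.evalFrom q u ≠ q},
      {u} * M.acceptsFrom (M.evalFrom q u)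

theorem acceptsFrom_eq_loopsOfLength_mul_add (δ : ℕ) (q : Q) :
    M.acceptsFrom q = loopsOfLength M δ q * M.acceptsFrom q + leavingWords M δ q := by
  refine le_antisymm (fun w hw ↦ ?_) (sup_le ?_ (sup_le inf_le_left (iSup₂_le fun u hu ↦ ?_)))
  · obtain hlt | hge := lt_or_ge w.length δ
    · exact .inr (.inl ⟨hw, hlt⟩)
    obtain ⟨u, z, rfl, hu⟩ : ∃ u z, u ++ z = w ∧ u.length = δ :=
      ⟨_, _, List.take_append_drop δ w, List.length_take_of_le hge⟩
    have hz : z ∈ M.acceptsFrom (M.evalFrom q u) := append_mem_acceptsFrom.1 hw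
    by_cases huq : M.evalFrom q u = q
    · exact .inl (Language.append_mem_mul ⟨hu, huq⟩ (huq ▸ hz))
    · exact .inr (.inr (Set.mem_biUnion ⟨⟨hu, z, hz⟩, huq⟩ (Language.append_mem_mul rfl hz)))
  · rintro _ ⟨v, ⟨-, hv⟩, w, hw, rfl⟩
    exact append_mem_acceptsFrom.2 (hv.symm ▸ hw)
  · rintro _ ⟨_, rfl, w, hw, rfl⟩
    exact append_mem_acceptsFrom.2 hw

theorem acceptsFrom_eq_kstar_mul (hδ : 1 ≤ δ) (q : Q) :
    M.acceptsFrom q = (loopsOfLength M δ q)∗ * leavingWords M δ q := by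
  refine (Language.self_eq_mul_add_iff fun h ↦ ?_).1 (acceptsFrom_eq_loopsOfLength_mul_add δ q)
  exact hδ.not_gt (h.1 ▸ Nat.one_pos)

theorem IsSubexponential.loopsOfLength_eq (hq : IsSubexponential (M.acceptsFrom q)) {z : List α}
    (hz : z ∈ M.acceptsFrom q) (δ : ℕ) :
    loopsOfLength M δ q = 0 ∨ ∃ v, v.length = δ ∧ loopsOfLength M δ q = {v} := by
  have hsub : Set.Subsingleton {v | v ∈ loopsOfLength M δ q} := fun v hv w hw ↦
    hq.loop_unique hz hv.2 hw.2 (hw.1.trans hv.1.symm)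
  obtain h | ⟨v, h⟩ := hsub.eq_empty_or_singleton
  · exact .inl h
  · have hv : v ∈ loopsOfLength M δ q := h.ge rfl
    exact .inr ⟨v, hv.1, h⟩

theorem IsSubexponential.isBlockSparse_acceptsFrom [Finite Q] (hδ : 1 ≤ δ) (hM : IsLoopLength M δ)
    (hq : IsSubexponential (M.acceptsFrom q)) : IsBlockSparse δ (M.acceptsFrom q) := by
  -- Once a run read in blocks of length `δ` leaves a useful state, it never returns to it.
  let reach (s t : Q) : Prop := ∃ w : List α, δ ∣ w.length ∧ M.evalFrom s w = t
  have htrans {s t r : Q} : reach s t → reach t r → reach s r := by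
    rintro ⟨v, hv, rfl⟩ ⟨w, hw, rfl⟩
    exact ⟨v ++ w, by rw [List.length_append]; exact dvd_add hv hw, DFA.evalFrom_of_append ..⟩
  let below (t s : Q) : Prop := reach s t ∧ ¬reach t s
  have : IsTrans Q below :=
    ⟨fun _ _ _ h h' ↦ ⟨htrans h'.1 h.1, fun hr ↦ h.2 (htrans hr h'.1)⟩⟩
  have : Std.Irrefl below := ⟨fun _ h ↦ h.2 h.1⟩
  induction q using (Finite.wellFounded_of_trans_of_irrefl below).induction with
  | _ q ih =>
  by_cases hz : ∃ z, z ∈ M.acceptsFrom q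
  swap
  · rw [show M.acceptsFrom q = 0 from Set.eq_empty_of_forall_notMem (not_exists.1 hz)]
    exact .zero
  obtain ⟨z, hz⟩ := hz
  have hleaving : IsBlockSparse δ (leavingWords M δ q) := by
    refine .add (.of_finite ?_) (.biSup ((hq.finite_useful_words δ).subset fun u hu ↦ hu.1) ?_)
    · exact (hq.finite_length_le δ).subset fun w hw ↦ ⟨hw.1, hw.2.le⟩
    · rintro u ⟨⟨hu, -⟩, huq⟩
      refine .singleton_mul hu (ih _ ⟨⟨u, hu ▸ dvd_rfl, rfl⟩, ?_⟩ (hq.acceptsFrom_evalFrom u))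
      rintro ⟨w, hw, hloop⟩
      rw [← DFA.evalFrom_of_append] at hloop
      exact huq (hM.evalFrom_eq_self hδ hq hu hw hloop hz)
  rw [acceptsFrom_eq_kstar_mul hδ]
  obtain h | ⟨v, hv, h⟩ := hq.loopsOfLength_eq hz δ <;> rw [h]
  · simpa using hleaving
  · exact hleaving.kstar_mul hv

theorem _root_.SparseLang.exists_isBlockSparse {α : Type} {L : Set (List α)} (hL : SparseLang L) :
    ∃ δ, 1 ≤ δ ∧ IsBlockSparse (α := α) δ L := by
  have hsub := hL.isSubexponential
  obtain ⟨⟨Q, _, M, rfl⟩, -⟩ := hL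
  obtain ⟨δ, hδ, hM⟩ := exists_isLoopLength M
  exact ⟨δ, hδ, hsub.isBlockSparse_acceptsFrom hδ hM⟩

end BlockSparse

end Automata

/-! ### Values of words -/

section WordValue

open Computability

variable {R G : Type*} [CommRing R] [AddCommGroup G] [Module R G] (D : R)

/-- The value in base `D` of a word of digits, least significant digit first. -/
def wordValue (w : List G) : G := w.foldr (prepend D) 0

theorem wordValue_cons (c : G) (w : List G) :
    wordValue D (c :: w) = c + D • wordValue D w := rfl

theorem wordValue_append (u w : List G) :
    wordValue D (u ++ w) = prepend (D ^ u.length) (wordValue D u) (wordValue D w) := by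
  induction u with
  | nil => simp [wordValue, prepend]
  | cons c u ih =>
    rw [List.cons_append, wordValue_cons, wordValue_cons, ih, prepend, prepend, List.length_cons,
      pow_succ']
    module

theorem wordValue_map {G' : Type*} [AddCommGroup G'] [Module R G'] (φ : G →ₗ[R] G') (w : List G) :
    wordValue D (w.map φ) = φ (wordValue D w) := by
  induction w with
  | nil => exact φ.map_zero.symm
  | cons c w ih => rw [List.map_cons, wordValue_cons, wordValue_cons, ih, map_add, map_smul]

theorem wordValue_replicate_zero (n : ℕ) : wordValue D (List.replicate n (0 : G)) = 0 := by
  induction n with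
  | zero => rfl
  | succ n ih => rw [List.replicate_succ, wordValue_cons, ih, smul_zero, add_zero]

theorem wordValue_ofFn_getD {w : List G} {n : ℕ} (hn : w.length ≤ n) :
    wordValue D (List.ofFn fun j : Fin n ↦ w.getD j 0) = wordValue D w := by
  have hpad : (List.ofFn fun j : Fin n ↦ w.getD j 0) =
      w ++ List.replicate (n - w.length) 0 := by
    refine List.ext_getElem (by simp [hn]) fun j _ _ ↦ ?_
    grind
  rw [hpad, wordValue_append, wordValue_replicate_zero, prepend, smul_zero, add_zero]

theorem image_wordValue_singleton_mul (u : List G) (L : Language G) :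
    wordValue D '' ({u} * L : Language G) =
      prepend (D ^ u.length) (wordValue D u) '' (wordValue D '' L) := by
  calc wordValue D '' ({u} * L : Language G)
      = wordValue D '' ((u ++ ·) '' L) := congrArg _ Set.image2_singleton_left
    _ = (fun w ↦ wordValue D (u ++ w)) '' L := Set.image_image ..
    _ = (fun w ↦ prepend (D ^ u.length) (wordValue D u) (wordValue D w)) '' L :=
        Set.image_congr fun w _ ↦ wordValue_append D u w
    _ = _ := (Set.image_image ..).symm

theorem image_wordValue_kstar_mul (v : List G) (L : Language G) :
    wordValue D '' ({v}∗ * L : Language G) =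
      ⋃ e, (prepend (D ^ v.length) (wordValue D v))^[e] '' (wordValue D '' L) := by
  have hpow (e : ℕ) : wordValue D '' ({v} ^ e * L : Language G) =
      (prepend (D ^ v.length) (wordValue D v))^[e] '' (wordValue D '' L) := by
    induction e with
    | zero => rw [pow_zero, one_mul, iterate_zero, Set.image_id]
    | succ e ih =>
      rw [pow_succ', mul_assoc, image_wordValue_singleton_mul, ih, iterate_succ', Set.image_comp]
  rw [Language.kstar_eq_iSup_pow, Language.iSup_mul]
  exact (Set.image_iUnion ..).trans (Set.iUnion_congr hpow)

theorem IsBlockSparse.isSparseSet_image_wordValue {δ : ℕ} {L : Language G}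
    (hL : IsBlockSparse δ L) : IsSparseSet (D ^ δ) (wordValue D '' L) := by
  induction hL with
  | zero =>
    have h0 : wordValue D '' (0 : Language G) = ∅ := Set.image_empty _
    exact h0 ▸ .empty
  | singleton w =>
    have hw : wordValue D '' ({w} : Language G) = {wordValue D w} := Set.image_singleton
    exact hw ▸ .singleton _
  | @add L L' _ _ hL hL' =>
    have hadd : wordValue D '' (L + L' : Language G) = wordValue D '' L ∪ wordValue D '' L' :=
      Set.image_union ..
    exact hadd ▸ hL.union hL'
  | singleton_mul hu _ hL =>
    rw [image_wordValue_singleton_mul, hu]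
    exact hL.image_prepend _
  | kstar_mul hv _ hL =>
    rw [image_wordValue_kstar_mul, hv]
    exact hL.iUnion_image_prepend _

end WordValue

section CanonicalRepresentation

variable {d : ℕ}

theorem wordValue_map_cast (l : List ℕ) :
    wordValue (d : ℤ) (l.map Nat.cast : List ℤ) = Nat.ofDigits d l := by
  induction l with
  | nil => rfl
  | cons c l ih =>
    rw [List.map_cons, wordValue_cons, ih, Nat.ofDigits_cons, smul_eq_mul]
    push_cast
    rfl

-- In `canonRep` the coercion applies to the whole list of digits, as a monadic bind.
theorem canonRep_eq_map (d : ℕ) (a : ℤ) :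
    canonRep d a = if 0 ≤ a then (Nat.digits d a.toNat).map Nat.cast
      else ((Nat.digits d (-a).toNat).map Nat.cast).map (-LinearMap.id : ℤ →ₗ[ℤ] ℤ) := by
  simp only [canonRep, bind_pure_comp, List.map_eq_map, List.map_map, comp_def,
    LinearMap.neg_apply, LinearMap.id_apply]

theorem wordValue_canonRep (d : ℕ) (a : ℤ) : wordValue (d : ℤ) (canonRep d a) = a := by
  rw [canonRep_eq_map]
  split_ifs with h
  · rw [wordValue_map_cast, Nat.ofDigits_digits, Int.toNat_of_nonneg h]
  · rw [wordValue_map, wordValue_map_cast, Nat.ofDigits_digits, Int.toNat_of_nonneg (by lia),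
      LinearMap.neg_apply, LinearMap.id_apply, neg_neg]

theorem wordValue_canonRepVec {m : ℕ} (a : Fin m → ℤ) :
    wordValue (d : ℤ) (canonRepVec d a) = a := by
  ext i
  have hlen : (canonRep d (a i)).length ≤ Finset.univ.sup fun i ↦ (canonRep d (a i)).length :=
    Finset.le_sup (f := fun i ↦ (canonRep d (a i)).length) (Finset.mem_univ i)
  calc wordValue (d : ℤ) (canonRepVec d a) i
      = wordValue (d : ℤ) ((canonRepVec d a).map (LinearMap.proj (R := ℤ) (φ := fun _ ↦ ℤ) i)) :=
        (wordValue_map _ (LinearMap.proj (R := ℤ) (φ := fun _ ↦ ℤ) i) _).symm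
    _ = wordValue (d : ℤ) (canonRep d (a i)) := by
        rw [canonRepVec, List.map_ofFn]
        exact wordValue_ofFn_getD _ hlen
    _ = a i := wordValue_canonRep d (a i)

theorem image_wordValue_image_canonRepVec {m : ℕ} (A : Set (Fin m → ℤ)) :
    wordValue (d : ℤ) '' (canonRepVec d '' A) = A := by
  simp only [Set.image_image, wordValue_canonRepVec, Set.image_id']

end CanonicalRepresentation

section IntegerTuples

variable {d m : ℕ}

theorem isHausdorff_span_pow {R G : Type*} [CommRing R] [AddCommGroup G] [Module R G] {D : R}
    [IsHausdorff (Ideal.span {D}) G] {δ : ℕ} (hδ : 1 ≤ δ) : IsHausdorff (Ideal.span {D ^ δ}) G := by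
  refine .of_map (J := Ideal.span {D}) ?_
  rw [Algebra.algebraMap_self, Ideal.map_id, Ideal.span_singleton_le_span_singleton]
  exact dvd_pow_self D (by lia)

theorem isHausdorff_span_intCast (hd : 2 ≤ d) :
    IsHausdorff (Ideal.span {(d : ℤ)}) (Fin m → ℤ) := by
  refine .of_isTorsionFree _ _ ?_
  rw [Ne, Ideal.span_singleton_eq_top, Int.isUnit_iff]
  lia

theorem mem_csetVec_iff {a x : Fin m → ℤ} {δ : ℕ} :
    x ∈ CsetVec d a δ ↔ ∃ f, 1 ≤ f ∧ x = repunit ((d : ℤ) ^ δ) f • a := by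
  have hsum (n : ℕ) : ∑ i ∈ Finset.range (n + 1), (d : ℤ) ^ (i * δ) • a =
      repunit ((d : ℤ) ^ δ) (n + 1) • a := by
    simp only [repunit, Finset.sum_smul, ← pow_mul, mul_comm δ]
  simp only [CsetVec, Set.mem_ofPred_eq, hsum]
  exact ⟨fun ⟨n, h⟩ ↦ ⟨n + 1, by lia, h⟩, fun ⟨f, hf, h⟩ ↦ ⟨f - 1, by rwa [Nat.sub_add_cancel hf]⟩⟩

theorem repunitSums_eq {k δ : ℕ} (β : Fin m → ℤ) (a : Fin k → Fin m → ℤ) :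
    repunitSums ((d : ℤ) ^ δ) β a =
      {x | ∃ c : Fin k → (Fin m → ℤ), (∀ i, c i ∈ CsetVec d (a i) δ) ∧ x = β + ∑ i, c i} := by
  ext x
  simp only [repunitSums, repunitSum, mem_csetVec_iff, Set.mem_ofPred_eq]
  constructor
  · rintro ⟨f, hf, rfl⟩
    exact ⟨_, fun i ↦ ⟨f i, hf i, rfl⟩, rfl⟩
  · rintro ⟨c, hc, rfl⟩
    choose f hf hcf using hc
    exact ⟨f, hf, by simp only [hcf]⟩

theorem repunitSumsFamily_subset {δ : ℕ} (hδ : 1 ≤ δ) :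
    repunitSumsFamily ((d : ℤ) ^ δ) ⊆
      {S : Set (Fin m → ℤ) | ∃ (k : ℕ) (β : Fin m → ℤ) (a : Fin k → (Fin m → ℤ)) (δ : Fin k → ℕ),
        (∀ i, 1 ≤ δ i) ∧
        S = {x | ∃ c : Fin k → (Fin m → ℤ),
          (∀ i, c i ∈ CsetVec d (a i) (δ i)) ∧ x = β + ∑ i : Fin k, c i}} := by
  rintro _ ⟨k, β, a, rfl⟩
  exact ⟨k, β, a, fun _ ↦ δ, fun _ ↦ hδ, repunitSums_eq β a⟩

end IntegerTuples

end DSparse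

open DSparse

theorem stmt6_general {R : Type*} {G : Type} [CommRing R] [AddCommGroup G] [Module R G] {D : R}
    [IsHausdorff (Ideal.span {D}) G] (hD : IsSMulRegular G D) {A : Set G} {L : Set (List G)}
    (hLA : wordValue D '' L = A) (hL : SparseLang L) (hst : StableIn A) :
    ∃ δ, 1 ≤ δ ∧ InBoolAlg (repunitSumsFamily (D ^ δ)) A := by
  obtain ⟨δ, hδ, hblock⟩ := hL.exists_isBlockSparse
  have hsparse : IsSparseSet (D ^ δ) A := hLA ▸ hblock.isSparseSet_image_wordValue D
  have := isHausdorff_span_pow (D := D) (G := G) hδ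
  exact ⟨δ, hδ, .of_mem_closure (hsparse.mem_closure (hD.pow δ) hst)⟩

theorem stmt6 (d : ℕ) (hd : 2 ≤ d) (m : ℕ) (hm : 1 ≤ m)
    (A : Set (Fin m → ℤ)) (hsp : SparseVec d A) (hst : StableIn A) :
    InBoolAlg
      {S : Set (Fin m → ℤ) | ∃ (k : ℕ) (β : Fin m → ℤ) (a : Fin k → (Fin m → ℤ)) (δ : Fin k → ℕ),
        (∀ i, 1 ≤ δ i) ∧
        S = {x | ∃ c : Fin k → (Fin m → ℤ),
          (∀ i, c i ∈ CsetVec d (a i) (δ i)) ∧ x = β + ∑ i : Fin k, c i}}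
      A := by
  have := isHausdorff_span_intCast (m := m) hd
  obtain ⟨_, hδ, h⟩ :=
    stmt6_general (.of_ne_zero (by lia)) (image_wordValue_image_canonRepVec A) hsp hst
  exact h.mono (repunitSumsFamily_subset hδ)
end

section
/- Fix an integer d ≥ 2. Suppose A ⊆ ℤ is d-automatic and not d-sparse. If A is stable in (ℤ,+), then A is generic, i.e., finitely many additive translates of A cover ℤ. -/
/-- Evaluation of a word over ℤ base `d`, least significant digit first. -/
def evalZ (d : ℤ) : List ℤ → ℤ
  | [] => 0
  | k :: σ => k + d * evalZ d σ

/-- `A ⊆ ℤ` is `d`-automatic: the language of all base-`d` representations of elements of `A`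
over the alphabet `Σ± = {−(d−1),…,d−1}` is regular. -/
def AutomaticZ (d : ℕ) (A : Set ℤ) : Prop :=
  RegularLang {σ : List ℤ | (∀ k ∈ σ, k.natAbs ≤ d - 1) ∧ evalZ d σ ∈ A}

/-- A set `A ⊆ ℤ` is `d`-sparse if its language of canonical representations is sparse. -/
def SparseZ (d : ℕ) (A : Set ℤ) : Prop := SparseLang (canonRep d '' A)

/-- `A ⊆ ℤ` is generic if finitely many additive translates of `A` cover ℤ. -/
def GenericZ (A : Set ℤ) : Prop := ∃ T : Finset ℤ, ∀ x : ℤ, ∃ t ∈ T, x - t ∈ A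

/-!
A language that is not sparse has, in any automaton recognizing it, a state on an accepting run
with two distinct loops of the same length over the digits of one sign. Hence, after a prefix has
been removed from `A`, all blocks from a submonoid `W` of digit blocks may be written in front of
a fixed integer, and `W` contains two blocks of equal length with different values.

Let `e`, `o` be blocks of equal length in `W`. If a block `σ` can be placed between arbitrary
elements of `W` and `σ + e - o` cannot, then the sums of products of powers of `e` and `o` with
products containing `σ` form arbitrarily long ladders, pumping being possible because `A` has
finitely many residuals. So stability allows `σ` to be changed by `e - o`, any number of times and
in both directions. The low digits of the resulting multiples of `e - o` are under control up to a
bounded remainder, so every block of digits occurs in `A`.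

As there are finitely many residuals, some residual of `A` meets every block, with boundedly large
witnesses. Thus a bounded number of translates of it covers arbitrarily long intervals. For a
stable set that suffices for genericity, and `A` is generic as soon as one of its residuals is.
-/

/-! ### Stability and genericity in abelian groups -/

section StableRel

variable {X Y : Type*}

theorem StableRel.exists_lt_of_forall_le {R : X → Y → Prop} (hR : StableRel R) {a : ℕ → X}
    {b : ℕ → Y} (h : ∀ i j, i ≤ j → R (a i) (b j)) : ∃ i j, j < i ∧ R (a i) (b j) := by
  by_contra! hlt
  obtain ⟨N, hN⟩ := hR
  exact hN ⟨fun i => a i, fun j => b j, fun i j =>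
    ⟨fun hij => not_lt.mp fun hji => hlt i j hji hij, h i j⟩⟩

theorem exists_lt_of_forall_le_of_forall_stableRel {κ : Type*} {T : Finset κ}
    {R : κ → X → Y → Prop} (hR : ∀ t ∈ T, StableRel (R t)) {a : ℕ → X} {b : ℕ → Y}
    (h : ∀ i j, i ≤ j → ∃ t ∈ T, R t (a i) (b j)) :
    ∃ i j, j < i ∧ ∃ t ∈ T, R t (a i) (b j) := by
  let U := Filter.hyperfilter ℕ
  have eventually_ge (n : ℕ) : ∀ᶠ j in (U : Filter ℕ), n ≤ j :=
    Nat.hyperfilter_le_atTop (Filter.eventually_ge_atTop n)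
  obtain ⟨t, ht, hI⟩ : ∃ t ∈ T, ∀ᶠ i in (U : Filter ℕ), ∀ᶠ j in (U : Filter ℕ),
      R t (a i) (b j) :=
    (Ultrafilter.eventually_exists_mem_iff T.finite_toSet).mp <| .of_forall fun i =>
      (Ultrafilter.eventually_exists_mem_iff T.finite_toSet).mp <| (eventually_ge i).mono (h i)
  obtain ⟨f, hf, hlt⟩ := exists_seq_of_forall_finset_exists
    (fun p : ℕ × ℕ => (∀ᶠ j in (U : Filter ℕ), R t (a p.1) (b j)) ∧ R t (a p.1) (b p.2))
    (fun p q => R t (a p.1) (b q.2) ∧ p.2 < q.1) fun F hF => by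
      obtain ⟨i, hi, hFi⟩ := (hI.and ((Filter.eventually_all_finset F).mpr
        fun p _ => eventually_ge (p.2 + 1))).exists
      obtain ⟨j, hj, hFj⟩ := (hi.and ((Filter.eventually_all_finset F).mpr
        fun p hp => (hF p hp).1)).exists
      exact ⟨(i, j), ⟨hi, hj⟩, fun p hp => ⟨hFj p hp, hFi p hp⟩⟩
  obtain ⟨i, j, hji, hRij⟩ := (hR t ht).exists_lt_of_forall_le
    (a := fun i => a (f i).1) (b := fun j => b (f j).2) fun i j hij => by
      rcases hij.eq_or_lt with rfl | hij
      exacts [(hf i).2, (hlt i j hij).1]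
  exact ⟨_, _, (hlt j i hji).2, t, ht, hRij⟩

end StableRel

section IsGeneric

variable {G : Type*} [AddCommGroup G] {S : Set G}

/-- A subset of an abelian group is generic if finitely many of its translates cover the group;
for subsets of `ℤ` this is `GenericZ`. -/
def IsGeneric (S : Set G) : Prop := ∃ T : Finset G, ∀ x, ∃ t ∈ T, x - t ∈ S

theorem StableIn.stableRel_add_sub_mem (hS : StableIn S) (t : G) :
    StableRel fun x y => x + y - t ∈ S := by
  obtain ⟨N, hN⟩ := hS
  refine ⟨N, fun ⟨a, b, h⟩ => hN ⟨fun i => a i - t, b, fun i j => ?_⟩⟩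
  simpa only [sub_add_eq_add_sub] using h i j

theorem StableIn.isGeneric_of_thick (hS : StableIn S) (T : Finset G)
    (hT : ∀ F : Finset G, ∃ b, ∀ a ∈ F, ∃ t ∈ T, a + b - t ∈ S) : IsGeneric S := by
  classical
  by_contra! hgen
  have exists_avoiding (F : Finset G) : ∃ x, ∀ t ∈ F, x - t ∉ S := by
    by_contra! h
    exact hgen ⟨F, h⟩
  obtain ⟨f, hf, hlt⟩ := exists_seq_of_forall_finset_exists
    (fun p : G × G => ∃ t ∈ T, p.1 + p.2 - t ∈ S)
    (fun p q => (∃ t ∈ T, p.1 + q.2 - t ∈ S) ∧ ∀ t ∈ T, q.1 + p.2 - t ∉ S) fun F _ => by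
      obtain ⟨a, ha⟩ := exists_avoiding ((F ×ˢ T).image fun q => q.2 - q.1.2)
      obtain ⟨b, hb⟩ := hT (insert a (F.image Prod.fst))
      refine ⟨(a, b), hb a (Finset.mem_insert_self _ _), fun p hp => ⟨hb _ ?_, fun t ht => ?_⟩⟩
      · exact Finset.mem_insert_of_mem (Finset.mem_image_of_mem _ hp)
      · rw [add_sub_assoc, ← neg_sub t, ← sub_eq_add_neg]
        exact ha _ (Finset.mem_image_of_mem (fun q : (G × G) × G => q.2 - q.1.2)
          (Finset.mk_mem_product hp ht))
  obtain ⟨i, j, hji, t, ht, hmem⟩ := exists_lt_of_forall_le_of_forall_stableRel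
    (fun t (_ : t ∈ T) => hS.stableRel_add_sub_mem t) (a := fun i => (f i).1)
    (b := fun j => (f j).2) fun i j hij => by
      rcases hij.eq_or_lt with rfl | hij
      exacts [hf i, (hlt i j hij).1]
  exact (hlt j i hji).2 t ht hmem

theorem exists_finset_avoiding_translates
    (hS : ∀ T : Finset G, ∃ F : Finset G, ∀ b, ∃ a ∈ F, ∀ t ∈ T, a + b - t ∉ S) (n : ℕ) :
    ∃ F : Finset G, ∀ T : Finset G, T.card ≤ n → ∀ b, ∃ a ∈ F, ∀ t ∈ T, a + b - t ∉ S := by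
  classical
  induction n with
  | zero => exact ⟨{0}, by simp⟩
  | succ n ih =>
    obtain ⟨F, hF⟩ := ih
    obtain ⟨F', hF'⟩ := hS (F.image Neg.neg)
    refine ⟨(F ×ˢ insert 0 F').image fun p => p.1 + p.2, fun T hT b => ?_⟩
    obtain ⟨T₀, s, hTs, hT₀⟩ : ∃ (T₀ : Finset G) (s : G), T ⊆ insert s T₀ ∧ T₀.card ≤ n := by
      rcases T.eq_empty_or_nonempty with rfl | ⟨s, hs⟩
      · exact ⟨∅, 0, by simp, by simp⟩
      · exact ⟨T.erase s, s, (Finset.insert_erase hs).ge,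
          by rw [Finset.card_erase_of_mem hs]; omega⟩
    obtain ⟨a', ha', havoid'⟩ := hF' (b - s)
    obtain ⟨a, ha, havoid⟩ := hF T₀ hT₀ (a' + b)
    refine ⟨a + a', Finset.mem_image.mpr ⟨(a, a'), by simp [ha, ha'], rfl⟩, fun t ht => ?_⟩
    rcases Finset.mem_insert.mp (hTs ht) with rfl | ht
    · have := havoid' (-a) (Finset.mem_image_of_mem _ ha)
      rwa [show a + a' + b - t = a' + (b - t) - -a by abel]
    · rw [add_assoc]
      exact havoid t ht

theorem StableIn.isGeneric_of_forall_cover (hS : StableIn S) (n : ℕ)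
    (h : ∀ F : Finset G, ∃ T : Finset G, T.card ≤ n ∧ ∃ b, ∀ a ∈ F, ∃ t ∈ T, a + b - t ∈ S) :
    IsGeneric S := by
  by_contra hgen
  have not_thick (T : Finset G) : ∃ F : Finset G, ∀ b, ∃ a ∈ F, ∀ t ∈ T, a + b - t ∉ S := by
    by_contra! hT
    exact hgen (hS.isGeneric_of_thick T hT)
  obtain ⟨F, hF⟩ := exists_finset_avoiding_translates not_thick n
  obtain ⟨T, hT, b, hb⟩ := h F
  obtain ⟨a, ha, havoid⟩ := hF T hT b
  obtain ⟨t, ht, hmem⟩ := hb a ha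
  exact havoid t ht hmem

end IsGeneric

/-! ### Automata and polynomial growth -/

section Loops

variable {α Q : Type*}

/-- The words over `Γ` that label a loop of `M` at the state `q`. -/
def loopWords (M : DFA α Q) (Γ : Finset α) (q : Q) : Set (List α) :=
  {x | (∀ a ∈ x, a ∈ Γ) ∧ M.evalFrom q x = q}

/-- A state lying on an accepting run of `M` that carries two distinct loops of the same length
over `Γ`. Such a state exists unless the accepted words over `Γ` have polynomial growth. -/
structure IsBranchingState (M : DFA α Q) (Γ : Finset α) (q : Q) : Prop where
  reachable : ∃ u, M.eval u = q
  productive : ∃ w, M.evalFrom q w ∈ M.accept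
  not_injOn_length : ¬ Set.InjOn List.length (loopWords M Γ q)

/-- The accepted words over `Γ` of length at most `k`, read from the state `q`, whose run stays
in `S`; the induction counting accepted words removes states from `S`. -/
def acceptedWithin (M : DFA α Q) (Γ : Finset α) (k : ℕ) (S : Set Q) (q : Q) : Set (List α) :=
  {w | (∀ a ∈ w, a ∈ Γ) ∧ w.length ≤ k ∧ M.evalFrom q w ∈ M.accept ∧
    ∀ v, v <+: w → M.evalFrom q v ∈ S}

theorem exists_longest_loop_prefix (M : DFA α Q) (q : Q) (w : List α) :
    ∃ x y, w = x ++ y ∧ M.evalFrom q x = q ∧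
      ∀ v, v <+: y → v ≠ [] → M.evalFrom q v ≠ q := by
  induction h : w.length using Nat.strong_induction_on generalizing w with
  | _ n ih =>
    by_cases hv : ∃ v, v <+: w ∧ v ≠ [] ∧ M.evalFrom q v = q
    · obtain ⟨v, ⟨t, rfl⟩, hne, hq⟩ := hv
      have hlen : t.length < n := by
        rw [← h, List.length_append]
        exact Nat.lt_add_of_pos_left (List.length_pos_iff.mpr hne)
      obtain ⟨x, y, rfl, hx, hy⟩ := ih _ hlen t rfl
      exact ⟨v ++ x, y, by simp, by rw [DFA.evalFrom_of_append, hq, hx], hy⟩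
    · push Not at hv
      exact ⟨[], w, rfl, rfl, hv⟩

theorem acceptedWithin_subset (M : DFA α Q) (Γ : Finset α) (k : ℕ) (S : Set Q) (q : Q) :
    acceptedWithin M Γ k S q ⊆ (fun p => p.1 ++ p.2) ''
      ({x ∈ loopWords M Γ q | x.length ≤ k} ×ˢ
        ({[]} ∪ ⋃ a ∈ Γ, List.cons a '' acceptedWithin M Γ k (S \ {q}) (M.step q a))) := by
  rintro w ⟨hΓ, hk, hacc, hS⟩
  obtain ⟨x, y, rfl, hx, hy⟩ := exists_longest_loop_prefix M q w
  simp only [List.mem_append, List.length_append] at hΓ hk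
  refine ⟨(x, y), ⟨⟨⟨fun a ha => hΓ a (.inl ha), hx⟩, (Nat.le_add_right _ _).trans hk⟩, ?_⟩, rfl⟩
  rcases y with _ | ⟨a, y⟩
  · exact .inl rfl
  refine .inr (Set.mem_biUnion (hΓ a (.inr List.mem_cons_self)) ⟨y, ⟨?_, ?_, ?_, ?_⟩, rfl⟩)
  · exact fun b hb => hΓ b (.inr (List.mem_cons_of_mem a hb))
  · simp only [List.length_cons] at hk
    omega
  · rwa [DFA.evalFrom_of_append, hx] at hacc
  · intro v hv
    have hpre : a :: v <+: a :: y := (List.prefix_cons_inj a).mpr hv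
    have hmem := hS (x ++ a :: v) ((List.prefix_append_right_inj x).mpr hpre)
    rw [DFA.evalFrom_of_append, hx] at hmem
    exact ⟨hmem, hy _ hpre (List.cons_ne_nil a v)⟩

theorem encard_setOf_length_le {L : Set (List α)} (hL : Set.InjOn List.length L) (k : ℕ) :
    {x ∈ L | x.length ≤ k}.encard ≤ (k + 1 : ℕ) :=
  calc {x ∈ L | x.length ≤ k}.encard ≤ (Set.Iic k).encard :=
        Set.encard_le_encard_of_injOn (fun _ hx => hx.2) (hL.mono fun _ hx => hx.1)
    _ = (k + 1 : ℕ) := by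
        rw [← Finset.coe_Iic, Set.encard_coe_eq_coe_finsetCard, Nat.card_Iic]

theorem encard_acceptedWithin_le {M : DFA α Q} {Γ : Finset α}
    (hM : ∀ q, ¬ IsBranchingState M Γ q) (k : ℕ) (S : Finset Q) {q : Q} (hq : ∃ u, M.eval u = q) :
    (acceptedWithin M Γ k S q).encard ≤ (((Γ.card + 1) * (k + 1)) ^ S.card : ℕ) := by
  classical
  induction S using Finset.strongInduction generalizing q with
  | H S ih =>
    rcases (acceptedWithin M Γ k S q).eq_empty_or_nonempty with hempty | ⟨w, -, -, hw, hS⟩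
    · rw [hempty, Set.encard_empty]
      exact zero_le
    have hqS : q ∈ S := hS [] List.nil_prefix
    have hloop : Set.InjOn List.length (loopWords M Γ q) :=
      not_not.mp fun hinj => hM q ⟨hq, ⟨w, hw⟩, hinj⟩
    set N := ((Γ.card + 1) * (k + 1)) ^ (S.erase q).card with hN
    have hstep (a : α) :
        (List.cons a '' acceptedWithin M Γ k (S \ {q} : Set Q) (M.step q a)).encard ≤ N := by
      obtain ⟨u, hu⟩ := hq
      refine (Set.encard_image_le _ _).trans ?_
      rw [← Finset.coe_erase]
      exact ih _ (Finset.erase_ssubset hqS) ⟨u ++ [a], by rw [M.eval_append_singleton, hu]⟩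
    have hrest : ({[]} ∪ ⋃ a ∈ Γ, List.cons a ''
        acceptedWithin M Γ k (S \ {q} : Set Q) (M.step q a)).encard ≤ (1 + Γ.card * N : ℕ) := by
      refine (Set.encard_union_le _ _).trans ?_
      rw [Set.encard_singleton, Nat.cast_add, Nat.cast_one, Nat.cast_mul, ← nsmul_eq_mul]
      gcongr
      exact (Γ.set_encard_biUnion_le _).trans (Finset.sum_le_card_nsmul _ _ _ fun a _ => hstep a)
    have hN1 : 1 ≤ N := Nat.one_le_pow _ _ (by positivity)
    calc (acceptedWithin M Γ k S q).encard
        ≤ (k + 1 : ℕ) * (1 + Γ.card * N : ℕ) := by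
          refine (Set.encard_le_encard (acceptedWithin_subset M Γ k S q)).trans
            ((Set.encard_image_le _ _).trans ?_)
          rw [Set.encard_prod]
          gcongr
          exact encard_setOf_length_le hloop k
      _ ≤ (((Γ.card + 1) * (k + 1)) ^ S.card : ℕ) := by
          rw [← Finset.card_erase_add_one hqS, pow_succ, ← hN, ← Nat.cast_mul, Nat.cast_le]
          nlinarith

theorem encard_accepts_le [Fintype Q] {M : DFA α Q} {Γ : Finset α}
    (hM : ∀ q, ¬ IsBranchingState M Γ q) (k : ℕ) :
    {w ∈ M.accepts | (∀ a ∈ w, a ∈ Γ) ∧ w.length ≤ k}.encard ≤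
      (((Γ.card + 1) * (k + 1)) ^ Fintype.card Q : ℕ) := by
  refine (Set.encard_le_encard ?_).trans
    (encard_acceptedWithin_le hM k Finset.univ ⟨[], M.eval_nil⟩)
  rintro w ⟨hw, hΓ, hk⟩
  exact ⟨hΓ, hk, hw, fun v _ => Finset.mem_coe.mpr (Finset.mem_univ _)⟩

end Loops

/-! ### Blocks of digits -/

/-- A block of `len` base-`d` digits, remembered only through its length and its value `val`. The
value may be any integer, so that blocks can be added and subtracted digitwise. -/
@[ext] structure DigitBlock (d : ℕ) where
  len : ℕ
  val : ℤ

namespace DigitBlock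

variable {d : ℕ} {A : Set ℤ} {n : ℤ} {p q r s : DigitBlock d}

section Monoid

/-- Concatenation of blocks, the less significant digits on the left. -/
instance : Monoid (DigitBlock d) where
  mul p q := ⟨p.len + q.len, p.val + d ^ p.len * q.val⟩
  one := ⟨0, 0⟩
  mul_assoc p q r := DigitBlock.ext (Nat.add_assoc _ _ _) (by
    change p.val + d ^ p.len * q.val + d ^ (p.len + q.len) * r.val =
      p.val + d ^ p.len * (q.val + d ^ q.len * r.val)
    ring)
  one_mul p := DigitBlock.ext (Nat.zero_add _) (by
    change (0 : ℤ) + d ^ 0 * p.val = p.val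
    ring)
  mul_one p := DigitBlock.ext (Nat.add_zero _) (by
    change p.val + d ^ p.len * 0 = p.val
    ring)

@[simp] theorem len_mul (p q : DigitBlock d) : (p * q).len = p.len + q.len := rfl

@[simp] theorem val_mul (p q : DigitBlock d) : (p * q).val = p.val + d ^ p.len * q.val := rfl

@[simp] theorem len_one : (1 : DigitBlock d).len = 0 := rfl

@[simp] theorem val_one : (1 : DigitBlock d).val = 0 := rfl

@[simp] theorem len_pow (p : DigitBlock d) (n : ℕ) : (p ^ n).len = n * p.len := by
  induction n with
  | zero => simp
  | succ n ih => rw [pow_succ, len_mul, ih, Nat.succ_mul]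

/-- A block acts on an integer `n` by being written in front of a representation of `n`. -/
instance : MulAction (DigitBlock d) ℤ where
  smul p n := p.val + d ^ p.len * n
  one_smul n := by
    change (0 : ℤ) + d ^ 0 * n = n
    ring
  mul_smul p q n := by
    change p.val + d ^ p.len * q.val + d ^ (p.len + q.len) * n =
      p.val + d ^ p.len * (q.val + d ^ q.len * n)
    ring

theorem smul_def (p : DigitBlock d) (n : ℤ) : p • n = p.val + d ^ p.len * n := rfl

theorem smul_add (p : DigitBlock d) (m n : ℤ) : p • (m + n) = p • m + d ^ p.len * n := by
  simp only [smul_def]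
  ring

end Monoid

section Bounded

/-- The blocks whose value is bounded by that of a word with digits of absolute value at most
`M * (d - 1)`. -/
def bounded (d M : ℕ) : Submonoid (DigitBlock d) where
  carrier := {p | |p.val| ≤ M * (d ^ p.len - 1)}
  one_mem' := by simp
  mul_mem' {p q} hp hq := by
    simp only [Set.mem_ofPred_eq, len_mul, val_mul] at *
    have hpow : (0 : ℤ) ≤ d ^ p.len := by positivity
    calc |p.val + d ^ p.len * q.val| ≤ |p.val| + |d ^ p.len * q.val| := abs_add_le _ _
      _ = |p.val| + d ^ p.len * |q.val| := by rw [abs_mul, abs_of_nonneg hpow]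
      _ ≤ M * (d ^ p.len - 1) + d ^ p.len * (M * (d ^ q.len - 1)) := by gcongr
      _ = M * (d ^ (p.len + q.len) - 1) := by ring

theorem mem_bounded {M : ℕ} : p ∈ bounded d M ↔ |p.val| ≤ M * ((d : ℤ) ^ p.len - 1) := Iff.rfl

theorem bounded_mono (hd : 0 < d) {M N : ℕ} (h : M ≤ N) : bounded d M ≤ bounded d N := by
  intro p hp
  have hpow : (1 : ℤ) ≤ (d : ℤ) ^ p.len := one_le_pow₀ (by exact_mod_cast hd)
  have hMN : (M : ℤ) ≤ N := by exact_mod_cast h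
  rw [mem_bounded] at hp ⊢
  nlinarith

theorem mem_bounded_one_of_nonneg {k : ℕ} {r : ℤ} (h0 : 0 ≤ r) (h1 : r < (d : ℤ) ^ k) :
    (⟨k, r⟩ : DigitBlock d) ∈ bounded d 1 := by
  rw [mem_bounded, abs_of_nonneg h0, Nat.cast_one, one_mul]
  exact Int.le_sub_one_of_lt h1

theorem exists_mem_bounded (hd : 2 ≤ d) (hp : 0 < p.len) : ∃ M, 1 ≤ M ∧ p ∈ bounded d M := by
  refine ⟨p.val.natAbs + 1, by omega, ?_⟩
  have hpow : (2 : ℤ) ≤ (d : ℤ) ^ p.len :=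
    (by exact_mod_cast hd : (2 : ℤ) ≤ d).trans (le_self_pow₀ (by exact_mod_cast by omega) hp.ne')
  have habs := abs_nonneg p.val
  rw [mem_bounded, Nat.cast_add, Int.natCast_natAbs]
  nlinarith

theorem val_eq_zero_of_len_eq_zero {M : ℕ} (hp : p ∈ bounded d M) (h : p.len = 0) : p.val = 0 := by
  simpa [mem_bounded, h] using hp

end Bounded

section Residual

/-- The integers `n` such that writing `p` in front of `n` gives an element of `A`: the residual
by `p` of the language of base-`d` representations of elements of `A`. -/
def residual (A : Set ℤ) (p : DigitBlock d) : Set ℤ := {n | p • n ∈ A}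

@[simp] theorem mem_residual : n ∈ residual A p ↔ p • n ∈ A := Iff.rfl

theorem residual_mul (A : Set ℤ) (p q : DigitBlock d) :
    residual A (p * q) = residual (residual A p) q := by
  ext n
  simp only [mem_residual, mul_smul]

theorem _root_.StableIn.residual (hA : StableIn A) (p : DigitBlock d) :
    StableIn (residual A p) := by
  obtain ⟨N, hN⟩ := hA
  refine ⟨N, fun ⟨a, b, h⟩ => hN ⟨fun i => p • a i, fun j => d ^ p.len * b j, fun i j => ?_⟩⟩
  simpa only [mem_residual, smul_add] using h i j

theorem genericZ_of_residual (hd : 0 < d) (h : GenericZ (residual A p)) : GenericZ A := by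
  obtain ⟨T, hT⟩ := h
  have hpos : (0 : ℤ) < d ^ p.len := by positivity
  refine ⟨(T ×ˢ Finset.Ico 0 ((d : ℤ) ^ p.len)).image fun q => d ^ p.len * q.1 + q.2,
    fun x => ?_⟩
  obtain ⟨t, ht, hx⟩ := hT ((x - p.val) / d ^ p.len)
  refine ⟨_, Finset.mem_image_of_mem _ (a := (t, (x - p.val) % d ^ p.len)) ?_, ?_⟩
  · simp [ht, Int.emod_nonneg _ hpos.ne', Int.emod_lt_of_pos _ hpos]
  · convert mem_residual.mp hx using 1
    rw [smul_def]
    linear_combination -Int.emod_add_mul_ediv (x - p.val) ((d : ℤ) ^ p.len)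

/-- Finiteness of the set of residuals of `A`, for each bound on the digits. By Myhill–Nerode it
expresses that `A` is `d`-automatic, without reference to a DFA. -/
def HasFiniteResiduals (d : ℕ) (A : Set ℤ) : Prop :=
  ∀ M, (residual A '' (bounded d M : Set (DigitBlock d))).Finite

theorem hasFiniteResiduals_residual (hd : 0 < d) (hA : HasFiniteResiduals d A) {M : ℕ}
    (hp : p ∈ bounded d M) : HasFiniteResiduals d (residual A p) := by
  intro N
  refine (hA (max M N)).subset ?_
  rintro _ ⟨q, hq, rfl⟩
  exact ⟨p * q, mul_mem (bounded_mono hd (le_max_left M N) hp)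
    (bounded_mono hd (le_max_right M N) hq), residual_mul _ _ _⟩

end Residual

end DigitBlock

/-! ### Perturbation of blocks -/

theorem exists_forall_iterate_add_eq (X : Type*) [Finite X] :
    ∃ k, ∀ f : X → X, f^[k + (k + 1)] = f^[k] := by
  obtain ⟨i, j, hij, hf⟩ : ∃ i j, i < j ∧ ∀ f : X → X, f^[i] = f^[j] := by
    obtain ⟨i, j, hne, hf⟩ :=
      Finite.exists_ne_map_eq_of_infinite fun (n : ℕ) (f : X → X) => f^[n]
    rcases hne.lt_or_gt with hlt | hlt
    exacts [⟨i, j, hlt, congrFun hf⟩, ⟨j, i, hlt, fun f => (congrFun hf f).symm⟩]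
  obtain ⟨p, rfl⟩ := Nat.exists_eq_add_of_lt hij
  have periodic (f : X → X) (c m : ℕ) : f^[c + i + m * (p + 1)] = f^[c + i] := by
    induction m with
    | zero => rw [zero_mul, add_zero]
    | succ m ih =>
      rw [← ih, show c + i + (m + 1) * (p + 1) = c + m * (p + 1) + (i + p + 1) by ring,
        Function.iterate_add, ← hf, ← Function.iterate_add]
      congr 1
      ring
  refine ⟨i * p + p + i, fun f => ?_⟩
  rw [show i * p + p + i + 1 = (i + 1) * (p + 1) by ring]
  exact periodic f _ _

namespace DigitBlock

variable {d : ℕ} {A : Set ℤ} {n : ℤ} {p q r s p' q' r' s' : DigitBlock d}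

section Balanced

/-- Four blocks of equal length with `p + q = r + s`. -/
structure Balanced (p q r s : DigitBlock d) : Prop where
  len₂ : q.len = p.len
  len₃ : r.len = p.len
  len₄ : s.len = p.len
  val_add : p.val + q.val = r.val + s.val

namespace Balanced

theorem refl (p : DigitBlock d) : Balanced p p p p := ⟨rfl, rfl, rfl, rfl⟩

theorem same (h : q.len = p.len) : Balanced p q p q := ⟨h, rfl, h, rfl⟩

theorem swap (h : q.len = p.len) : Balanced p q q p := ⟨h, h, rfl, add_comm _ _⟩

theorem mul (h : Balanced p q r s) (h' : Balanced p' q' r' s') :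
    Balanced (p * p') (q * q') (r * r') (s * s') := by
  obtain ⟨h2, h3, h4, hv⟩ := h
  obtain ⟨h2', h3', h4', hv'⟩ := h'
  refine ⟨by simp [*], by simp [*], by simp [*], ?_⟩
  simp only [val_mul, h2, h3, h4]
  linear_combination hv + (d : ℤ) ^ p.len * hv'

theorem pow (h : Balanced p q r s) (k : ℕ) : Balanced (p ^ k) (q ^ k) (r ^ k) (s ^ k) := by
  induction k with
  | zero => simpa only [pow_zero] using refl 1
  | succ k ih => simpa only [pow_succ] using ih.mul h

theorem smul_add_sub_smul (h : Balanced p q r s) (n : ℤ) : p • n + (q • n - r • n) = s • n := by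
  simp only [smul_def, h.len₂, h.len₃, h.len₄]
  linear_combination h.val_add

variable {E O S S' : DigitBlock d} {i j N : ℕ}

theorem ladder_of_le (hO : O.len = E.len) (hS : S.len = E.len) (hij : i ≤ j) (hj : j ≤ N) :
    Balanced (E ^ (i + 1) * O ^ (N + 1 - i)) (O ^ (j + 1) * S * O ^ (N - j)) (O ^ (N + 2))
      (E ^ (i + 1) * O ^ (j - i) * S * O ^ (N - j)) := by
  convert ((((swap hO).pow (i + 1)).mul ((refl O).pow (j - i))).mul (same (hS.trans hO.symm))).mul
    ((refl O).pow (N - j)) using 1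
  · rw [mul_assoc, mul_assoc, ← pow_succ', ← pow_add]
    congr 2; omega
  · rw [← pow_add]
    congr 3; omega
  · rw [← pow_add, ← pow_succ, ← pow_add]
    congr 1; omega

theorem ladder_of_lt (h : Balanced E S O S') (hji : j < i) (hi : i ≤ N) :
    Balanced (E ^ (i + 1) * O ^ (N + 1 - i)) (O ^ (j + 1) * S * O ^ (N - j)) (O ^ (N + 2))
      (E ^ (j + 1) * S' * E ^ (i - j - 1) * O ^ (N - i + 1)) := by
  convert ((((swap h.len₃).pow (j + 1)).mul h).mul ((swap h.len₃).pow (i - j - 1))).mul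
    ((refl O).pow (N - i + 1)) using 1
  · rw [← pow_succ, ← pow_add]
    congr 2 <;> omega
  · rw [mul_assoc _ _ (O ^ (N - i + 1)), ← pow_add]
    congr 2; omega
  · rw [← pow_succ, ← pow_add, ← pow_add]
    congr 1; omega

end Balanced

end Balanced

section Perturbation

/-- If exchanging `E` and `S` for `O` and `S'` always destroyed membership in `A`, the words
`E ^ (i + 1) * O ^ (N + 1 - i)` would be the rungs of arbitrarily long ladders. -/
theorem mem_residual_of_balanced (hA : StableIn A) {E O S S' : DigitBlock d}
    (hbal : Balanced E S O S')
    (hin : ∀ i j k, n ∈ residual A (E ^ i * O ^ j * S * O ^ k))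
    (hout : ∀ i j k, residual A (E ^ (i + 1) * S' * E ^ j * O ^ (k + 1)) =
      residual A (E * S' * O)) :
    n ∈ residual A (E * S' * O) := by
  by_contra hnot
  obtain ⟨N, hN⟩ := hA
  refine hN ⟨fun i => (E ^ (i.val + 1) * O ^ (N + 1 - i.val)) • n,
    fun j => (O ^ (j.val + 1) * S * O ^ (N - j.val)) • n - O ^ (N + 2) • n, ?_⟩
  rintro ⟨i, hi⟩ ⟨j, hj⟩
  dsimp only
  rw [Fin.mk_le_mk]
  rcases le_or_gt i j with hij | hji
  · rw [(Balanced.ladder_of_le hbal.len₃ hbal.len₂ hij (by omega)).smul_add_sub_smul]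
    exact iff_of_true (hin (i + 1) (j - i) (N - j)) hij
  · rw [(hbal.ladder_of_lt hji (by omega)).smul_add_sub_smul]
    exact iff_of_false (fun hmem => hnot (hout j (i - j - 1) (N - i) ▸ hmem)) (by omega)

theorem iterate_residual (A : Set ℤ) (p : DigitBlock d) (k : ℕ) :
    (residual · p)^[k] A = residual A (p ^ k) := by
  induction k with
  | zero => exact (Set.ext fun n => by simp only [mem_residual, pow_zero, one_smul]; rfl)
  | succ k ih => rw [Function.iterate_succ_apply', ih, pow_succ, residual_mul]

theorem HasFiniteResiduals.exists_pow_absorbs (hA : HasFiniteResiduals d A) (M : ℕ) :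
    ∃ k, ∀ p ∈ bounded d M, ∀ q ∈ bounded d M, ∀ m,
      residual A (q * p ^ k * (p ^ (k + 1)) ^ m) = residual A (q * p ^ k) := by
  have := (hA M).to_subtype
  obtain ⟨k, hk⟩ := exists_forall_iterate_add_eq (residual A '' (bounded d M : Set (DigitBlock d)))
  refine ⟨k, fun p hp q hq m => ?_⟩
  have mapsTo : Set.MapsTo (residual · p) (residual A '' (bounded d M : Set (DigitBlock d)))
      (residual A '' (bounded d M : Set (DigitBlock d))) := by
    rintro _ ⟨r, hr, rfl⟩
    exact ⟨r * p, mul_mem hr hp, residual_mul _ _ _⟩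
  have absorb : residual A (q * p ^ k * p ^ (k + 1)) = residual A (q * p ^ k) := by
    have hiter := congrFun (hk (mapsTo.restrict _ _ _)) ⟨residual A q, q, hq, rfl⟩
    rw [mapsTo.iterate_restrict, mapsTo.iterate_restrict, Subtype.ext_iff] at hiter
    simpa only [Set.MapsTo.val_restrict_apply, iterate_residual, pow_add, residual_mul] using hiter
  induction m with
  | zero => rw [pow_zero, mul_one]
  | succ m ih => rw [pow_succ', ← mul_assoc, residual_mul, absorb, ← residual_mul, ih]

/-- After insertion into a suitable context from `W`, the block `σ` may stand at any place in a
product of elements of `W`, and writing the result in front of `n` gives an element of `A`. -/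
def Pervasive (A : Set ℤ) (n : ℤ) (W : Submonoid (DigitBlock d)) (σ : DigitBlock d) : Prop :=
  ∃ s ∈ W, ∃ t ∈ W, ∀ x ∈ W, ∀ y ∈ W, n ∈ residual A (x * (s * σ * t) * y)

variable {W : Submonoid (DigitBlock d)} {e o σ σ' : DigitBlock d}

theorem pervasive_of_mem (hmem : ∀ x ∈ W, n ∈ residual A x) (hσ : σ ∈ W) :
    Pervasive A n W σ :=
  ⟨1, one_mem W, 1, one_mem W, fun x hx y hy => by
    simpa only [one_mul, mul_one] using hmem _ (mul_mem (mul_mem hx hσ) hy)⟩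

theorem Pervasive.of_mul_mul (hs : s ∈ W) (hr : r ∈ W) (h : Pervasive A n W (s * σ * r)) :
    Pervasive A n W σ := by
  obtain ⟨s', hs', t', ht', hmem⟩ := h
  exact ⟨s' * s, mul_mem hs' hs, r * t', mul_mem hr ht', by simpa only [mul_assoc] using hmem⟩

theorem pervasive_of_balanced (hd : 2 ≤ d) (hA : StableIn A) (hfin : HasFiniteResiduals d A)
    (hW : W ≤ bounded d 1) (he : e ∈ W) (ho : o ∈ W) (hlen : 0 < e.len)
    (hbal : Balanced e σ o σ') (hσ : ∀ x ∈ W, ∀ y ∈ W, n ∈ residual A (x * σ * y)) :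
    Pervasive A n W σ' := by
  obtain ⟨M, hM, hσ'⟩ := exists_mem_bounded hd (hbal.len₄ ▸ hlen)
  have hWM : W ≤ bounded d M := hW.trans (bounded_mono (by omega) hM)
  obtain ⟨k, absorb⟩ := hfin.exists_pow_absorbs M
  have absorb_succ {p} (hp : p ∈ W) {q} (hq : q ∈ bounded d M) (m : ℕ) :
      residual A (q * (p ^ (k + 1)) ^ (m + 1)) = residual A (q * p ^ (k + 1)) := by
    rw [pow_succ' _ m, ← mul_assoc, pow_succ' p k, ← mul_assoc q, ← pow_succ']
    exact absorb p (hWM hp) (q * p) (mul_mem hq (hWM hp)) m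
  refine ⟨e ^ (k + 1), pow_mem he _, e ^ k * o ^ (k + 1), mul_mem (pow_mem he _) (pow_mem ho _),
    fun x hx y hy => ?_⟩
  have hbal' : Balanced (e ^ (k + 1)) (σ * o ^ k) (o ^ (k + 1)) (σ' * e ^ k) := by
    simpa only [pow_succ'] using hbal.mul ((Balanced.swap hbal.len₃).pow k)
  suffices y • n ∈ residual (residual A x) (e ^ (k + 1) * (σ' * e ^ k) * o ^ (k + 1)) by
    simpa only [mem_residual, mul_smul] using this
  refine mem_residual_of_balanced (hA.residual x) hbal' (fun i j l => ?_) fun i j l => ?_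
  · have hin := hσ (x * ((e ^ (k + 1)) ^ i * (o ^ (k + 1)) ^ j))
      (mul_mem hx (mul_mem (pow_mem (pow_mem he _) _) (pow_mem (pow_mem ho _) _)))
      (o ^ k * (o ^ (k + 1)) ^ l * y)
      (mul_mem (mul_mem (pow_mem ho _) (pow_mem (pow_mem ho _) _)) hy)
    simpa only [mem_residual, mul_smul] using hin
  · have hxe : x * e ^ (k + 1) * σ' ∈ bounded d M :=
      mul_mem (hWM (mul_mem hx (pow_mem he _))) hσ'
    have absorb_left := absorb_succ he (hWM hx) i
    have absorb_mid := absorb e (hWM he) _ hxe j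
    have absorb_right := absorb_succ ho (mul_mem hxe (hWM (pow_mem he k))) l
    simp only [residual_mul, ← mul_assoc] at absorb_left absorb_mid absorb_right ⊢
    rw [absorb_left, absorb_mid, absorb_right]

theorem Pervasive.perturb (hd : 2 ≤ d) (hA : StableIn A) (hfin : HasFiniteResiduals d A)
    (hW : W ≤ bounded d 1) (he : e ∈ W) (ho : o ∈ W) (hlen : 0 < e.len)
    (hbal : Balanced e σ o σ') (hσ : Pervasive A n W σ) : Pervasive A n W σ' := by
  obtain ⟨s, hs, t, ht, hmem⟩ := hσ
  refine .of_mul_mul hs ht (pervasive_of_balanced hd hA hfin hW (mul_mem (mul_mem hs he) ht)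
    (mul_mem (mul_mem hs ho) ht) ?_ (((Balanced.refl s).mul hbal).mul (Balanced.refl t)) hmem)
  simp only [len_mul]
  omega

end Perturbation

end DigitBlock

namespace DigitBlock

variable {d : ℕ} {A : Set ℤ} {n : ℤ} {q V₀ V₁ : DigitBlock d} {W : Submonoid (DigitBlock d)}
  {e o σ : DigitBlock d}

section Occurrence

theorem Pervasive.add_sub_mul (hd : 2 ≤ d) (hA : StableIn A) (hfin : HasFiniteResiduals d A)
    (hW : W ≤ bounded d 1) (he : e ∈ W) (ho : o ∈ W) (hlen : 0 < σ.len) (hle : e.len = σ.len)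
    (hlo : o.len = σ.len) (hσ : Pervasive A n W σ) (z : ℤ) :
    Pervasive A n W ⟨σ.len, σ.val + (e.val - o.val) * z⟩ := by
  induction z with
  | zero => simpa only [mul_zero, add_zero] using hσ
  | succ z ih =>
    have hbal : Balanced e ⟨σ.len, σ.val + (e.val - o.val) * z⟩ o
        ⟨σ.len, σ.val + (e.val - o.val) * (z + 1)⟩ :=
      ⟨hle.symm, hlo.trans hle.symm, hle.symm, by ring⟩
    exact Pervasive.perturb hd hA hfin hW he ho (hle ▸ hlen) hbal ih
  | pred z ih =>
    have hbal : Balanced o ⟨σ.len, σ.val + (e.val - o.val) * (-z)⟩ e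
        ⟨σ.len, σ.val + (e.val - o.val) * (-z - 1)⟩ :=
      ⟨hlo.symm, hle.trans hlo.symm, hlo.symm, by ring⟩
    exact Pervasive.perturb hd hA hfin hW ho he (hlo ▸ hlen) hbal ih

theorem exists_add_mul_eq_mul_mul (hd : 2 ≤ d) {c : ℤ} (hc : c ≠ 0) (q : DigitBlock d) {k : ℕ}
    (hk : c.natAbs + q.len ≤ k) (a : ℤ) :
    ∃ z : ℤ, ∃ p ∈ bounded d 1, ∃ r, (⟨k, a + c * z⟩ : DigitBlock d) = p * q * r := by
  have hcd : |c| < (d : ℤ) ^ c.natAbs := by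
    rw [← Int.natCast_natAbs]
    exact_mod_cast Nat.lt_pow_self (by omega)
  obtain ⟨w, rfl⟩ := Nat.exists_eq_add_of_le hk
  set b := a - (d : ℤ) ^ c.natAbs * q.val
  refine ⟨-(b / c), ⟨c.natAbs, b % c⟩, mem_bounded_one_of_nonneg (Int.emod_nonneg _ hc)
    ((Int.emod_lt_abs _ hc).trans hcd), ⟨w, 0⟩, DigitBlock.ext rfl ?_⟩
  simp only [val_mul]
  linear_combination -Int.emod_add_mul_ediv b c

theorem exists_mem_bounded_residual_mul_nonempty (hd : 2 ≤ d) (hA : StableIn A)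
    (hfin : HasFiniteResiduals d A) (hW : W ≤ bounded d 1) (h₀ : V₀ ∈ W) (h₁ : V₁ ∈ W)
    (hlen : V₁.len = V₀.len) (hne : V₁.val ≠ V₀.val) (hmem : ∀ x ∈ W, n ∈ residual A x)
    (q : DigitBlock d) : ∃ p ∈ bounded d 1, (residual A (p * q)).Nonempty := by
  have hpos : 0 < V₀.len := Nat.pos_of_ne_zero fun h =>
    hne ((val_eq_zero_of_len_eq_zero (hW h₁) (hlen.trans h)).trans
      (val_eq_zero_of_len_eq_zero (hW h₀) h).symm)
  set m := (V₁.val - V₀.val).natAbs + q.len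
  have hσ : V₀ * V₀ ^ m ∈ W := mul_mem h₀ (pow_mem h₀ m)
  have hσlen : m ≤ (V₀ * V₀ ^ m).len := by
    rw [len_mul, len_pow]
    exact (Nat.le_mul_of_pos_right m hpos).trans (Nat.le_add_left _ _)
  obtain ⟨z, p, hp, r, hpqr⟩ :=
    exists_add_mul_eq_mul_mul hd (sub_ne_zero.mpr hne) q hσlen (V₀ * V₀ ^ m).val
  obtain ⟨s, hs, t, -, hst⟩ := (pervasive_of_mem hmem hσ).add_sub_mul hd hA hfin hW
    (mul_mem h₁ (pow_mem h₀ m)) hσ (by rw [len_mul]; omega) (by rw [len_mul, len_mul, hlen]) rfl z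
  have hdiff : (V₁ * V₀ ^ m).val - (V₀ * V₀ ^ m).val = V₁.val - V₀.val := by
    rw [val_mul, val_mul, hlen, add_sub_add_right_eq_sub]
  rw [hdiff, hpqr] at hst
  refine ⟨s * p, mul_mem (hW hs) hp, (r * t) • n, ?_⟩
  simpa only [mem_residual, mul_smul, one_smul] using hst 1 (one_mem W) 1 (one_mem W)

end Occurrence

section Generic

theorem exists_forall_residual_mul_eq_empty {P : Set (DigitBlock d)} (hP : P.Finite) (hPW : P ⊆ W)
    (h : ∀ p ∈ W, ∃ q ∈ W, residual A (p * q) = ∅) :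
    ∃ q ∈ W, ∀ p ∈ P, residual A (p * q) = ∅ := by
  induction P, hP using Set.Finite.induction_on with
  | empty => exact ⟨1, one_mem W, fun p hp => hp.elim⟩
  | @insert p P _ _ ih =>
    obtain ⟨hp, hPW⟩ := Set.insert_subset_iff.mp hPW
    obtain ⟨q, hq, hempty⟩ := ih hPW
    obtain ⟨q', hq', hempty'⟩ := h (p * q) (mul_mem hp hq)
    refine ⟨q * q', mul_mem hq hq', fun r hr => ?_⟩
    rw [← mul_assoc]
    rcases hr with rfl | hr
    · exact hempty'
    · rw [residual_mul, hempty r hr]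
      rfl

theorem exists_residual_mul_nonempty_of_finite
    (hfin : (residual A '' (W : Set (DigitBlock d))).Finite)
    (h : ∀ q ∈ W, ∃ p ∈ W, (residual A (p * q)).Nonempty) :
    ∃ p ∈ W, ∀ q ∈ W, (residual A (p * q)).Nonempty := by
  by_contra! hkill
  obtain ⟨P, hPW, hP, heq⟩ := Set.exists_subset_image_finite_and.mp
    ⟨_, subset_rfl, hfin, (rfl : residual A '' (W : Set (DigitBlock d)) = _)⟩
  obtain ⟨q, hq, hempty⟩ := exists_forall_residual_mul_eq_empty hP hPW hkill
  obtain ⟨p, hp, hne⟩ := h q hq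
  obtain ⟨p', hp', hpp'⟩ := heq ▸ Set.mem_image_of_mem (residual A) hp
  refine hne.ne_empty ?_
  rw [residual_mul, ← hpp', ← residual_mul, hempty p' hp']

theorem genericZ_of_forall_residual_nonempty (hd : 2 ≤ d) (hA : StableIn A)
    (hfin : (residual A '' (bounded d 1 : Set (DigitBlock d))).Finite)
    (hne : ∀ q ∈ bounded d 1, (residual A q).Nonempty) : GenericZ A := by
  choose! f hf using fun (T : Set ℤ) (h : T.Nonempty) => h
  obtain ⟨m, hm⟩ := (hfin.image fun T => (f T).natAbs).bddAbove
  refine hA.isGeneric_of_forall_cover (Finset.Icc (-m : ℤ) m).card fun F => ?_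
  set b := F.sup Int.natAbs
  have hlt : ((2 * b + 1 : ℕ) : ℤ) < (d : ℤ) ^ (2 * b + 1) := by
    exact_mod_cast Nat.lt_pow_self (by omega)
  refine ⟨(Finset.Icc (-m : ℤ) m).image fun t => -((d : ℤ) ^ (2 * b + 1) * t),
    Finset.card_image_le, b, fun a ha => ?_⟩
  have hab : a.natAbs ≤ b := Finset.le_sup ha
  have hbdd : (⟨2 * b + 1, a + b⟩ : DigitBlock d) ∈ bounded d 1 :=
    mem_bounded_one_of_nonneg (by omega) (by push_cast at hlt; omega)
  have hwit : f (residual A (⟨2 * b + 1, a + b⟩ : DigitBlock d)) ∈ Finset.Icc (-m : ℤ) m := by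
    have hle : (f (residual A (⟨2 * b + 1, a + b⟩ : DigitBlock d))).natAbs ≤ m :=
      hm ⟨_, Set.mem_image_of_mem _ hbdd, rfl⟩
    rw [Finset.mem_Icc]
    omega
  refine ⟨_, Finset.mem_image_of_mem _ hwit, ?_⟩
  rw [sub_neg_eq_add]
  exact hf _ (hne _ hbdd)

theorem genericZ_of_submonoid (hd : 2 ≤ d) (hA : StableIn A) (hfin : HasFiniteResiduals d A)
    (hW : W ≤ bounded d 1) (h₀ : V₀ ∈ W) (h₁ : V₁ ∈ W) (hlen : V₁.len = V₀.len)
    (hne : V₁.val ≠ V₀.val) (hmem : ∀ x ∈ W, n ∈ residual A x) : GenericZ A := by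
  obtain ⟨p, hp, hpne⟩ := exists_residual_mul_nonempty_of_finite (hfin 1)
    fun q _ => exists_mem_bounded_residual_mul_nonempty hd hA hfin hW h₀ h₁ hlen hne hmem q
  refine genericZ_of_residual (p := p) (by omega) (genericZ_of_forall_residual_nonempty hd
    (hA.residual p) (hasFiniteResiduals_residual (by omega) hfin hp 1) fun q hq => ?_)
  rw [← residual_mul]
  exact hpne q hq

end Generic

end DigitBlock

/-! ### Words and automatic sets -/

section Representations

variable {d : ℕ} {ε : ℤˣ} {A : Set ℤ} {σ τ : List ℤ}

theorem evalZ_append (d : ℤ) (σ τ : List ℤ) :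
    evalZ d (σ ++ τ) = evalZ d σ + d ^ σ.length * evalZ d τ := by
  induction σ with
  | nil => simp [evalZ]
  | cons k σ ih =>
    simp only [List.cons_append, evalZ, ih, List.length_cons, pow_succ]
    ring

theorem evalZ_map_natCast_mul (d : ℕ) (c : ℤ) (l : List ℕ) :
    evalZ d (l.map fun k : ℕ => (k : ℤ) * c) = Nat.ofDigits d l * c := by
  induction l with
  | nil => simp [evalZ]
  | cons k l ih =>
    simp only [List.map_cons, evalZ, ih, Nat.ofDigits_cons]
    push_cast
    ring

theorem canonRep_natCast_mul_unit (d n : ℕ) (ε : ℤˣ) :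
    canonRep d (n * ε) = (Nat.digits d n).map fun k : ℕ => (k : ℤ) * ε := by
  rcases Int.units_eq_one_or ε with rfl | rfl
  -- The coercion in `canonRep` elaborates to a monadic bind, that is, to a `flatMap`.
  · simp [canonRep, List.map_eq_flatMap]
  · rcases n.eq_zero_or_pos with rfl | hn
    · simp [canonRep]
    · rw [canonRep, if_neg (by simpa using hn.ne')]
      simp [List.map_eq_flatMap, List.flatMap_assoc]

theorem evalZ_canonRep (d : ℕ) (a : ℤ) : evalZ d (canonRep d a) = a := by
  obtain ⟨ε, hε⟩ := (Int.associated_natAbs a).symm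
  rw [← hε, canonRep_natCast_mul_unit, evalZ_map_natCast_mul, Nat.ofDigits_digits]

/-- The digits of sign `ε` in base `d`, zero included. -/
def signedDigits (d : ℕ) (ε : ℤˣ) : Finset ℤ := (Finset.range d).image fun k : ℕ => k * ε

theorem natAbs_le_of_mem_signedDigits {k : ℤ} (hk : k ∈ signedDigits d ε) :
    k.natAbs ≤ d - 1 := by
  obtain ⟨n, hn, rfl⟩ := Finset.mem_image.mp hk
  rw [Int.natAbs_mul, Int.units_natAbs, mul_one, Int.natAbs_natCast]
  exact Nat.le_sub_one_of_lt (Finset.mem_range.mp hn)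

theorem exists_eq_map_of_forall_mem_signedDigits (h : ∀ k ∈ σ, k ∈ signedDigits d ε) :
    ∃ l : List ℕ, (∀ k ∈ l, k < d) ∧ σ = l.map fun k : ℕ => (k : ℤ) * ε := by
  obtain ⟨l, hl⟩ : σ ∈ Set.range (List.map fun k : {k // k < d} => ((k : ℕ) : ℤ) * ε) := by
    rw [Set.range_list_map]
    intro k hk
    obtain ⟨n, hn, rfl⟩ := Finset.mem_image.mp (h k hk)
    exact ⟨⟨n, Finset.mem_range.mp hn⟩, rfl⟩
  refine ⟨l.map Subtype.val, fun k hk => ?_, by rw [← hl, List.map_map]; rfl⟩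
  obtain ⟨n, -, rfl⟩ := List.mem_map.mp hk
  exact n.2

theorem eq_of_evalZ_eq_of_length_eq (hd : 2 ≤ d) (hσ : ∀ k ∈ σ, k ∈ signedDigits d ε)
    (hτ : ∀ k ∈ τ, k ∈ signedDigits d ε) (hlen : σ.length = τ.length)
    (h : evalZ d σ = evalZ d τ) : σ = τ := by
  obtain ⟨l, hl, rfl⟩ := exists_eq_map_of_forall_mem_signedDigits hσ
  obtain ⟨l', hl', rfl⟩ := exists_eq_map_of_forall_mem_signedDigits hτ
  rw [evalZ_map_natCast_mul, evalZ_map_natCast_mul] at h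
  have hofDigits : Nat.ofDigits d l = Nat.ofDigits d l' := by
    exact_mod_cast mul_right_cancel₀ ε.ne_zero h
  rw [Nat.ofDigits_inj_of_len_eq hd (by simpa only [List.length_map] using hlen) hl hl' hofDigits]

/-- The words over `Γ` whose last letter is not zero. Over the digits of one sign these are the
canonical representations of the integers of that sign. -/
def reducedWords (Γ : Finset ℤ) : Language ℤ :=
  {w : List ℤ | (∀ k ∈ w, k ∈ Γ) ∧ ∀ h : w ≠ [], w.getLast h ≠ 0}

theorem isRegular_reducedWords (Γ : Finset ℤ) : (reducedWords Γ).IsRegular := by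
  let M : DFA ℤ (Prop × Prop) :=
    { step := fun s k => (s.1 ∧ k ∈ Γ, k ≠ 0), start := (True, True), accept := {s | s.1 ∧ s.2} }
  have eval_eq (w : List ℤ) : M.eval w = (∀ k ∈ w, k ∈ Γ, ∀ h : w ≠ [], w.getLast h ≠ 0) := by
    induction w using List.reverseRecOn with
    | nil => simp [M]
    | append_singleton w k ih =>
      rw [DFA.eval_append_singleton, ih]
      simp [M, or_imp, forall_and]
  refine ⟨Prop × Prop, inferInstance, M, Set.ext fun w => ?_⟩
  change M.eval w ∈ M.accept ↔ _
  rw [eval_eq]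
  rfl

theorem reducedWords_signedDigits (hd : 2 ≤ d) (ε : ℤˣ) :
    reducedWords (signedDigits d ε) = Set.range fun n : ℕ => canonRep d (n * ε) := by
  ext w
  constructor
  · rintro ⟨hw, hlast⟩
    obtain ⟨l, hl, rfl⟩ := exists_eq_map_of_forall_mem_signedDigits hw
    refine ⟨Nat.ofDigits d l, ?_⟩
    dsimp only
    rw [canonRep_natCast_mul_unit, Nat.digits_ofDigits d hd l hl]
    intro h h0
    exact hlast (by simpa only [ne_eq, List.map_eq_nil_iff] using h)
      (by simp [List.getLast_map, h0])
  · rintro ⟨n, rfl⟩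
    dsimp only
    rw [canonRep_natCast_mul_unit]
    refine ⟨fun a ha => ?_, fun h => ?_⟩
    · obtain ⟨k, hk, rfl⟩ := List.mem_map.mp ha
      exact Finset.mem_image_of_mem _ (Finset.mem_range.mpr (Nat.digits_lt_base hd hk))
    · have hn : n ≠ 0 := by
        rintro rfl
        simp at h
      simpa [List.getLast_map] using Nat.getLast_digit_ne_zero d hn

theorem exists_canonRep_mem_reducedWords (hd : 2 ≤ d) (a : ℤ) :
    ∃ ε, canonRep d a ∈ reducedWords (signedDigits d ε) := by
  obtain ⟨ε, hε⟩ := (Int.associated_natAbs a).symm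
  refine ⟨ε, ?_⟩
  rw [reducedWords_signedDigits hd]
  exact ⟨a.natAbs, congrArg (canonRep d) hε⟩

theorem natAbs_le_of_mem_canonRep (hd : 2 ≤ d) {a k : ℤ} (hk : k ∈ canonRep d a) :
    k.natAbs ≤ d - 1 := by
  obtain ⟨ε, hε⟩ := exists_canonRep_mem_reducedWords hd a
  exact natAbs_le_of_mem_signedDigits (hε.1 k hk)

/-- All representations of the elements of `A` with digits between `-(d - 1)` and `d - 1`; the
language whose regularity is `AutomaticZ d A`. -/
def representations (d : ℕ) (A : Set ℤ) : Language ℤ :=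
  {σ : List ℤ | (∀ k ∈ σ, k.natAbs ≤ d - 1) ∧ evalZ d σ ∈ A}

theorem image_canonRep_eq (hd : 2 ≤ d) (A : Set ℤ) :
    canonRep d '' A = (representations d A ⊓
      (reducedWords (signedDigits d 1) + reducedWords (signedDigits d (-1))) : Language ℤ) := by
  ext w
  constructor
  · rintro ⟨a, ha, rfl⟩
    refine ⟨⟨fun k hk => natAbs_le_of_mem_canonRep hd hk, by rwa [evalZ_canonRep]⟩, ?_⟩
    obtain ⟨ε, hε⟩ := exists_canonRep_mem_reducedWords hd a
    rcases Int.units_eq_one_or ε with rfl | rfl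
    exacts [.inl hε, .inr hε]
  · rintro ⟨⟨-, hA⟩, hw⟩
    obtain ⟨a, rfl⟩ : ∃ a, canonRep d a = w := by
      rcases hw with hw | hw <;> rw [reducedWords_signedDigits hd] at hw <;> obtain ⟨n, hn⟩ := hw
      exacts [⟨_, hn⟩, ⟨_, hn⟩]
    exact ⟨a, by rwa [evalZ_canonRep] at hA, rfl⟩

theorem AutomaticZ.regularLang_image_canonRep (hd : 2 ≤ d) (hA : AutomaticZ d A) :
    RegularLang (canonRep d '' A) := by
  rw [image_canonRep_eq hd]
  have hreg : (representations d A).IsRegular := hA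
  exact hreg.inf ((isRegular_reducedWords _).add (isRegular_reducedWords _))

theorem encard_image_canonRep_le (hd : 2 ≤ d) {Q : Type*} [Fintype Q] {M : DFA ℤ Q}
    (hM : M.accepts = representations d A)
    (h : ∀ ε q, ¬ IsBranchingState M (signedDigits d ε) q) (k : ℕ) :
    {σ ∈ canonRep d '' A | σ.length ≤ k}.encard ≤
      (2 * ((d + 1) * (k + 1)) ^ Fintype.card Q : ℕ) := by
  let words (ε : ℤˣ) : Set (List ℤ) :=
    {w ∈ M.accepts | (∀ a ∈ w, a ∈ signedDigits d ε) ∧ w.length ≤ k}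
  have hwords (ε : ℤˣ) : (words ε).encard ≤ (((d + 1) * (k + 1)) ^ Fintype.card Q : ℕ) := by
    have hcard : (signedDigits d ε).card ≤ d :=
      Finset.card_image_le.trans (Finset.card_range d).le
    refine (encard_accepts_le (h ε) k).trans ?_
    gcongr
  have hsub : {σ ∈ canonRep d '' A | σ.length ≤ k} ⊆ words 1 ∪ words (-1) := by
    rintro σ ⟨hσ, hk⟩
    rw [image_canonRep_eq hd, ← hM] at hσ
    exact hσ.2.imp (fun hw => ⟨hσ.1, hw.1, hk⟩) fun hw => ⟨hσ.1, hw.1, hk⟩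
  refine (Set.encard_le_encard hsub).trans ((Set.encard_union_le _ _).trans ?_)
  rw [two_mul, Nat.cast_add]
  exact add_le_add (hwords 1) (hwords (-1))

theorem sparseZ_of_forall_not_isBranchingState (hd : 2 ≤ d) {Q : Type} [Finite Q]
    {M : DFA ℤ Q} (hM : M.accepts = representations d A)
    (h : ∀ ε q, ¬ IsBranchingState M (signedDigits d ε) q) : SparseZ d A := by
  have := Fintype.ofFinite Q
  have hauto : AutomaticZ d A := ⟨Q, inferInstance, M, hM⟩
  refine ⟨hauto.regularLang_image_canonRep hd,
    2 * ((d + 1) ^ Fintype.card Q * 2 ^ (Fintype.card Q - 1)), Fintype.card Q, fun k => ?_⟩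
  rw [← Set.encard_le_coe_iff_finite_ncard_le]
  refine (encard_image_canonRep_le hd hM h k).trans (Nat.cast_le.mpr ?_)
  rw [mul_pow, mul_assoc, mul_assoc]
  gcongr
  simpa only [one_pow] using add_pow_le k.zero_le zero_le_one (Fintype.card Q)

end Representations

namespace DigitBlock

variable {d : ℕ} {A : Set ℤ} {σ : List ℤ}

section OfWord

/-- The block of digits given by a word. -/
def ofWord (d : ℕ) (σ : List ℤ) : DigitBlock d := ⟨σ.length, evalZ d σ⟩

theorem ofWord_append (σ τ : List ℤ) : ofWord d (σ ++ τ) = ofWord d σ * ofWord d τ :=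
  DigitBlock.ext List.length_append (evalZ_append d σ τ)

theorem ofWord_smul_evalZ (σ τ : List ℤ) : ofWord d σ • evalZ d τ = evalZ d (σ ++ τ) :=
  (evalZ_append d σ τ).symm

theorem ofWord_mem_bounded (hd : 0 < d) (hσ : ∀ k ∈ σ, k.natAbs ≤ d - 1) :
    ofWord d σ ∈ bounded d 1 := by
  induction σ with
  | nil => exact one_mem _
  | cons k σ ih =>
    rw [← List.singleton_append, ofWord_append]
    refine mul_mem ?_ (ih fun k hk => hσ k (List.mem_cons_of_mem _ hk))
    have hk := hσ k List.mem_cons_self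
    simp only [mem_bounded, ofWord, evalZ, List.length_singleton, pow_one, mul_zero, add_zero,
      Nat.cast_one, one_mul, abs_le]
    omega

theorem exists_ofWord_eq (hd : 0 < d) {k : ℕ} {r : ℤ} (h0 : 0 ≤ r) (h1 : r < (d : ℤ) ^ k) :
    ∃ σ, (∀ a ∈ σ, a.natAbs ≤ d - 1) ∧ ofWord d σ = ⟨k, r⟩ := by
  induction k generalizing r with
  | zero =>
    have hr : 0 = r := by
      rw [pow_zero] at h1
      omega
    exact ⟨[], fun _ h => absurd h List.not_mem_nil, DigitBlock.ext rfl hr⟩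
  | succ k ih =>
    have hd' : (0 : ℤ) < d := by exact_mod_cast hd
    obtain ⟨σ, hσ, hσr⟩ := ih (Int.ediv_nonneg h0 hd'.le)
      (Int.ediv_lt_of_lt_mul hd' (by rwa [← pow_succ]))
    rw [DigitBlock.ext_iff] at hσr
    refine ⟨r % d :: σ, fun a ha => ?_, DigitBlock.ext (congrArg (· + 1) hσr.1) ?_⟩
    · rcases List.mem_cons.mp ha with rfl | ha
      · have := Int.emod_nonneg r hd'.ne'
        have := Int.emod_lt_of_pos r hd'
        omega
      · exact hσ a ha
    · change r % d + d * (ofWord d σ).val = r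
      rw [hσr.2]
      exact Int.emod_add_mul_ediv r d

theorem exists_ofWord_mul_eq (hd : 0 < d) {N : ℕ} {p : DigitBlock d} (hp : p ∈ bounded d N) :
    ∃ σ, (∀ k ∈ σ, k.natAbs ≤ d - 1) ∧ ∃ c ∈ Set.Icc (-N : ℤ) N, ofWord d σ * ⟨0, c⟩ = p := by
  have hpos : (0 : ℤ) < (d : ℤ) ^ p.len := by positivity
  obtain ⟨σ, hσ, hσp⟩ := exists_ofWord_eq hd (Int.emod_nonneg p.val hpos.ne')
    (Int.emod_lt_of_pos p.val hpos)
  rw [mem_bounded, abs_le] at hp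
  refine ⟨σ, hσ, p.val / (d : ℤ) ^ p.len, ⟨?_, ?_⟩, ?_⟩
  · exact (Int.le_ediv_iff_mul_le hpos).mpr (by linarith)
  · exact Int.ediv_le_of_le_mul hpos (by linarith)
  · rw [hσp]
    exact DigitBlock.ext rfl (Int.emod_add_mul_ediv _ _)

theorem residual_ofWord (hd : 2 ≤ d) (hσ : ∀ k ∈ σ, k.natAbs ≤ d - 1) :
    residual A (ofWord d σ) = {n | canonRep d n ∈ (representations d A).leftQuotient σ} := by
  ext n
  rw [mem_residual, ← evalZ_canonRep d n, ofWord_smul_evalZ, evalZ_canonRep]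
  refine ⟨fun h => ⟨fun k hk => ?_, h⟩, fun h => h.2⟩
  rcases List.mem_append.mp hk with hk | hk
  exacts [hσ k hk, natAbs_le_of_mem_canonRep hd hk]

theorem _root_.AutomaticZ.hasFiniteResiduals (hd : 2 ≤ d) (hA : AutomaticZ d A) :
    HasFiniteResiduals d A := by
  intro N
  have hreg : (representations d A).IsRegular := hA
  refine ((hreg.finite_range_leftQuotient.image fun L => {n | canonRep d n ∈ L}).image2
    (fun S c => residual S (⟨0, c⟩ : DigitBlock d)) (Set.finite_Icc (-N : ℤ) N)).subset ?_
  rintro _ ⟨p, hp, rfl⟩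
  obtain ⟨σ, hσ, c, hc, rfl⟩ := exists_ofWord_mul_eq (by omega) hp
  rw [residual_mul, residual_ofWord hd hσ]
  exact Set.mem_image2_of_mem (Set.mem_image_of_mem _ ⟨σ, rfl⟩) hc

end OfWord

section LoopBlocks

variable {Q : Type*} {M : DFA ℤ Q} {Γ : Finset ℤ} {ε : ℤˣ} {q : Q}

/-- The blocks read along the loops of `M` at the state `q`. -/
def loopBlocks (d : ℕ) (M : DFA ℤ Q) (Γ : Finset ℤ) (q : Q) : Submonoid (DigitBlock d) where
  carrier := ofWord d '' loopWords M Γ q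
  one_mem' := ⟨[], ⟨fun _ h => absurd h List.not_mem_nil, rfl⟩, rfl⟩
  mul_mem' := by
    rintro _ _ ⟨x, ⟨hxΓ, hx⟩, rfl⟩ ⟨y, ⟨hyΓ, hy⟩, rfl⟩
    refine ⟨x ++ y, ⟨List.forall_mem_append.mpr ⟨hxΓ, hyΓ⟩, ?_⟩, ofWord_append x y⟩
    rw [DFA.evalFrom_of_append, hx, hy]

theorem loopBlocks_le_bounded (hd : 0 < d) :
    loopBlocks d M (signedDigits d ε) q ≤ bounded d 1 := by
  rintro _ ⟨x, ⟨hx, -⟩, rfl⟩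
  exact ofWord_mem_bounded hd fun k hk => natAbs_le_of_mem_signedDigits (hx k hk)

theorem _root_.IsBranchingState.exists_mem_loopBlocks (hd : 2 ≤ d)
    (h : IsBranchingState M (signedDigits d ε) q) :
    ∃ V₀ ∈ loopBlocks d M (signedDigits d ε) q, ∃ V₁ ∈ loopBlocks d M (signedDigits d ε) q,
      V₁.len = V₀.len ∧ V₁.val ≠ V₀.val := by
  have hinj := h.not_injOn_length
  simp only [Set.InjOn, not_forall] at hinj
  obtain ⟨x, hx, y, hy, hlen, hne⟩ := hinj
  exact ⟨_, ⟨y, hy, rfl⟩, _, ⟨x, hx, rfl⟩, hlen, fun hval =>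
    hne (eq_of_evalZ_eq_of_length_eq hd hx.1 hy.1 hlen hval)⟩

theorem evalZ_mem_residual_of_mem_loopBlocks (hM : M.accepts = representations d A)
    {u w : List ℤ} (hu : M.eval u = q) (hw : M.evalFrom q w ∈ M.accept) {x : DigitBlock d}
    (hx : x ∈ loopBlocks d M Γ q) : evalZ d w ∈ residual (residual A (ofWord d u)) x := by
  obtain ⟨z, ⟨-, hz⟩, rfl⟩ := hx
  have hacc : u ++ (z ++ w) ∈ M.accepts := by
    rw [DFA.mem_accepts, DFA.eval, DFA.evalFrom_of_append, DFA.evalFrom_of_append]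
    rwa [← DFA.eval, hu, hz]
  rw [hM] at hacc
  rw [mem_residual, mem_residual, ofWord_smul_evalZ, ofWord_smul_evalZ]
  exact hacc.2

theorem _root_.IsBranchingState.genericZ (hd : 2 ≤ d) (hA : StableIn A)
    (hfin : HasFiniteResiduals d A) (hM : M.accepts = representations d A)
    (hq : IsBranchingState M (signedDigits d ε) q) : GenericZ A := by
  obtain ⟨u, hu⟩ := hq.reachable
  obtain ⟨w, hw⟩ := hq.productive
  obtain ⟨V₀, h₀, V₁, h₁, hlen, hne⟩ := hq.exists_mem_loopBlocks hd
  have huw : u ++ w ∈ representations d A := by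
    rwa [← hM, DFA.mem_accepts, DFA.eval, DFA.evalFrom_of_append, ← DFA.eval, hu]
  have hubdd : ofWord d u ∈ bounded d 1 :=
    ofWord_mem_bounded (by omega) fun k hk => huw.1 k (List.mem_append_left w hk)
  exact genericZ_of_residual (by omega) <| genericZ_of_submonoid hd (hA.residual _)
    (hasFiniteResiduals_residual (by omega) hfin hubdd) (loopBlocks_le_bounded (by omega))
    h₀ h₁ hlen hne fun _ hx => evalZ_mem_residual_of_mem_loopBlocks hM hu hw hx

end LoopBlocks

end DigitBlock

theorem stmt7 (d : ℕ) (hd : 2 ≤ d) (A : Set ℤ)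
    (hauto : AutomaticZ d A) (hns : ¬ SparseZ d A) (hst : StableIn A) :
    GenericZ A := by
  have hfin : DigitBlock.HasFiniteResiduals d A := hauto.hasFiniteResiduals hd
  obtain ⟨Q, _, M, (hM : M.accepts = representations d A)⟩ := hauto
  obtain ⟨ε, q, hq⟩ : ∃ ε q, IsBranchingState M (signedDigits d ε) q := by
    by_contra! h
    exact hns (sparseZ_of_forall_not_isBranchingState hd hM h)
  exact hq.genericZ hd hst hfin hM
end

section
/- Fix an integer d ≥ 2. Suppose A ⊆ ℤ is d-automatic and stable in (ℤ,+). Then A belongs to the Boolean algebra of subsets of ℤ generated by (i) the cosets c + H of subgroups H ≤ (ℤ,+), and (ii) the sets β + (C(a₁;δ₁) + ⋯ + C(a_k;δ_k)), where k ∈ ℕ, β, a₁, …, a_k ∈ ℤ, δ₁, …, δ_k are positive integers, + of sets denotes Minkowski sum, and the empty sum is {0}. -/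
/-- `C(a;δ) = {a + d^δ·a + d^{2δ}·a + ⋯ + d^{nδ}·a : n ∈ ℕ}`. -/
def Cset (d a : ℤ) (δ : ℕ) : Set ℤ :=
  {x | ∃ n : ℕ, x = ∑ i ∈ Finset.range (n + 1), d ^ (i * δ) * a}

/-!
It suffices that `A ∈ p ↔ A ∈ q` for ultrafilters `p`, `q` on `ℤ` with the same generators as
members.

Stability makes limits of translates of `A` along ultrafilters commute. Taking such limits along
idempotent ultrafilters at `-∞` and `+∞` yields a periodic set `P` for which all these limits of
`A ∆ P` are empty. Two different loops at a state of the automaton of `A ∆ P` would yield a nonempty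
limit, so that `A ∆ P` is covered by finitely many patterns, the sets of sums
`β + ∑ i, a i * (1 + D + ⋯ + D ^ (m i - 1))` with arbitrary exponents `m i`, where `D` is a power
of `d`.

If `p` contains no pattern, then `A ∈ p ↔ P ∈ p`, which is decided by a coset in `p`. Otherwise take
a pattern in `p` with the fewest summands. By minimality the `p`-limit of its exponents is infinite
and their gaps are unbounded, and automaticity then leaves only their residues and their order to
matter. The residues are visible to the generators, and the order is irrelevant because the iterated
limits commute.
-/

namespace StableAutomatic

open Filter

attribute [local instance] Ultrafilter.add Ultrafilter.addSemigroup

/-! ### Limits of translates along ultrafilters -/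

/-- The limit along the ultrafilter `p` of the translates `{n | n + x ∈ S}`. -/
def translateLim {G : Type*} [Add G] (p : Ultrafilter G) (S : Set G) : Set G :=
  {n | ∀ᶠ x in (p : Filter G), n + x ∈ S}

local notation:70 p:71 "⋆" S:70 => translateLim p S

/-- The operators `translateLim p` commute pairwise on `S`: for subsets of an abelian group this is
what stability gives. -/
def LimitsCommute {G : Type*} [Add G] (S : Set G) : Prop :=
  ∀ p q : Ultrafilter G, p ⋆ q ⋆ S = q ⋆ p ⋆ S

section TranslateLim

variable {G : Type*}

theorem mem_translateLim [Add G] {p : Ultrafilter G} {S : Set G} {n : G} :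
    n ∈ p ⋆ S ↔ ∀ᶠ x in (p : Filter G), n + x ∈ S := Iff.rfl

theorem translateLim_empty [Add G] (p : Ultrafilter G) : p ⋆ (∅ : Set G) = ∅ := by
  ext n
  simp [mem_translateLim, p.neBot.ne]

theorem translateLim_symmDiff [Add G] (p : Ultrafilter G) (S T : Set G) :
    p ⋆ symmDiff S T = symmDiff (p ⋆ S) (p ⋆ T) := by
  ext n
  simp only [mem_translateLim, Set.mem_symmDiff, Ultrafilter.eventually_or, eventually_and,
    Ultrafilter.eventually_not]

theorem add_translateLim [AddSemigroup G] (p q : Ultrafilter G) (S : Set G) :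
    (p + q) ⋆ S = p ⋆ q ⋆ S := by
  ext n
  simp only [mem_translateLim, Ultrafilter.eventually_add, add_assoc]

theorem LimitsCommute.symmDiff [Add G] {S T : Set G} (hS : LimitsCommute S)
    (hT : LimitsCommute T) : LimitsCommute (symmDiff S T) := fun p q => by
  simp only [translateLim_symmDiff, hS p q, hT p q]

theorem LimitsCommute.translateLim [AddSemigroup G] {S : Set G} (hS : LimitsCommute S)
    (r : Ultrafilter G) : LimitsCommute (r ⋆ S) := by
  have rotate (p q r : Ultrafilter G) : p ⋆ q ⋆ r ⋆ S = r ⋆ p ⋆ q ⋆ S := by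
    simpa only [add_translateLim] using hS (p + q) r
  intro p q
  rw [hS q r, rotate p r q]

theorem exists_seq_iff_le_of_eventually {X Y : Type*} {R : X → Y → Prop} {p : Filter X}
    {q : Filter Y} [p.NeBot] [q.NeBot] (h : ∀ᶠ x in p, ∀ᶠ y in q, R x y)
    (h' : ∀ᶠ y in q, ∀ᶠ x in p, ¬ R x y) :
    ∃ (a : ℕ → X) (b : ℕ → Y), ∀ i j, R (a i) (b j) ↔ i ≤ j := by
  obtain ⟨f, hf, hlt⟩ := exists_seq_of_forall_finset_exists
    (fun z : X × Y => (∀ᶠ y in q, R z.1 y) ∧ (∀ᶠ x in p, ¬ R x z.2) ∧ R z.1 z.2)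
    (fun z w => R z.1 w.2 ∧ ¬ R w.1 z.2) fun s hs => by
      have hx : ∀ᶠ x in p, ∀ z ∈ s, ¬ R x z.2 :=
        (eventually_all_finset s).2 fun z hz => (hs z hz).2.1
      have hy : ∀ᶠ y in q, ∀ z ∈ s, R z.1 y :=
        (eventually_all_finset s).2 fun z hz => (hs z hz).1
      obtain ⟨x, hxq, hxs⟩ := (h.and hx).exists
      obtain ⟨y, ⟨hyp, hxy⟩, hys⟩ := ((h'.and hxq).and hy).exists
      exact ⟨(x, y), ⟨hxq, hyp, hxy⟩, fun z hz => ⟨hys z hz, hxs z hz⟩⟩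
  refine ⟨fun i => (f i).1, fun j => (f j).2, fun i j => ?_⟩
  rcases lt_trichotomy i j with hij | rfl | hij
  · exact iff_of_true (hlt i j hij).1 hij.le
  · exact iff_of_true (hf i).2.2 le_rfl
  · exact iff_of_false (hlt j i hij).2 hij.not_ge

theorem LimitsCommute.of_no_infinite_ladder [AddCommSemigroup G] {S : Set G}
    (hS : ∀ a b : ℕ → G, ¬ ∀ i j, a i + b j ∈ S ↔ i ≤ j) : LimitsCommute S := by
  have le (p q : Ultrafilter G) : p ⋆ q ⋆ S ⊆ q ⋆ p ⋆ S := by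
    intro n hn
    by_contra hcon
    simp only [mem_translateLim, ← Ultrafilter.eventually_not] at hcon
    obtain ⟨a, b, hab⟩ := exists_seq_iff_le_of_eventually
      (R := fun x y => n + x + y ∈ S) hn (by simpa only [add_right_comm n] using hcon)
    exact hS (fun i => n + a i) b hab
  exact fun p q => (le p q).antisymm (le q p)

/-- The iterated limit of the translates of `S` along the ultrafilters `p i` for `i` in the list,
the head of the list being the outermost limit. -/
def iterLim [Add G] {ι : Type*} (p : ι → Ultrafilter G) (l : List ι) (S : Set G) : Set G :=
  l.foldr (fun i T => p i ⋆ T) S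

variable {ι : Type*} {p : ι → Ultrafilter G}

theorem iterLim_nil [Add G] {S : Set G} : iterLim p [] S = S := rfl

theorem iterLim_cons [Add G] {i : ι} {l : List ι} {S : Set G} :
    iterLim p (i :: l) S = p i ⋆ iterLim p l S := rfl

theorem LimitsCommute.iterLim [AddSemigroup G] {S : Set G} (hS : LimitsCommute S)
    (p : ι → Ultrafilter G) (l : List ι) : LimitsCommute (iterLim p l S) := by
  induction l with
  | nil => exact hS
  | cons i l ih => exact ih.translateLim (p i)

theorem LimitsCommute.iterLim_perm [AddSemigroup G] {S : Set G} (hS : LimitsCommute S)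
    {l l' : List ι} (hl : l.Perm l') :
    StableAutomatic.iterLim p l S = StableAutomatic.iterLim p l' S := by
  induction hl with
  | nil => rfl
  | cons i _ ih => rw [iterLim_cons, iterLim_cons, ih]
  | swap i j l => exact hS.iterLim p l (p j) (p i)
  | trans _ _ ih ih' => exact ih.trans ih'

end TranslateLim

/-! ### Idempotent ultrafilters -/

theorem map_add_map {G H : Type*} [Add G] [Add H] (f : AddHom G H) (p q : Ultrafilter G) :
    p.map f + q.map f = (p + q).map f := by
  ext S
  change (∀ᶠ z in ((p.map f + q.map f : Ultrafilter H) : Filter H), z ∈ S) ↔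
    ∀ᶠ z in ((p + q : Ultrafilter G) : Filter G), f z ∈ S
  simp only [Ultrafilter.eventually_add, Ultrafilter.coe_map, eventually_map, map_add]

theorem map_mul_add_self {e : Ultrafilter ℤ} (he : e + e = e) (t : ℤ) :
    e.map (t * ·) + e.map (t * ·) = e.map (t * ·) := by
  have := map_add_map (AddMonoidHom.mulLeft t : ℤ →+ ℤ).toAddHom e e
  rwa [he] at this

theorem le_atTop_of_add_self {e : Ultrafilter ℤ} (he : e + e = e)
    (hpos : ∀ᶠ x in (e : Filter ℤ), 0 < x) : (e : Filter ℤ) ≤ atTop := by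
  have lt (m : ℕ) : ∀ᶠ x in (e : Filter ℤ), (m : ℤ) < x := by
    induction m with
    | zero => exact hpos
    | succ m ih =>
      rw [← he, Ultrafilter.eventually_add]
      refine hpos.mono fun x hx => ih.mono fun y hy => ?_
      lia
  exact tendsto_id'.1 <| tendsto_atTop.2 fun m =>
    (lt m.natAbs).mono fun _ hx => Int.le_natAbs.trans hx.le

theorem exists_finset_sum_of_mem_FS {M : Type*} [AddCommMonoid M] {a : Stream' M} {z : M}
    (hz : z ∈ Hindman.FS a) : ∃ I : Finset ℕ, I.Nonempty ∧ z = ∑ i ∈ I, a.get i := by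
  have sum_tail (a : Stream' M) (I : Finset ℕ) :
      ∑ i ∈ I, a.tail.get i = ∑ i ∈ I.map (addRightEmbedding 1), a.get i := by
    simp [Stream'.get_tail]
  induction hz with
  | head' a => exact ⟨{0}, by simp, by simp [Stream'.head]⟩
  | tail' a m _ ih =>
    obtain ⟨I, hI, rfl⟩ := ih
    exact ⟨I.map (addRightEmbedding 1), hI.map, sum_tail a I⟩
  | cons' a m _ ih =>
    obtain ⟨I, -, rfl⟩ := ih
    refine ⟨insert 0 (I.map (addRightEmbedding 1)), by simp, ?_⟩
    rw [Finset.sum_insert (by simp), sum_tail]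

theorem exists_idempotent_geometric {Q : ℤ} (hQ : 0 < Q) :
    ∃ e : Ultrafilter ℤ, e + e = e ∧ (e : Filter ℤ) ≤ atTop ∧
      ∀ᶠ z in (e : Filter ℤ), ∃ I : Finset ℕ, z = ∑ i ∈ I, Q ^ i := by
  obtain ⟨e, he, hFS⟩ :=
    Hindman.exists_idempotent_ultrafilter_le_FS (fun i => Q ^ i : Stream' ℤ)
  have hsum := hFS.mono fun z hz => exists_finset_sum_of_mem_FS hz
  refine ⟨e, he, le_atTop_of_add_self he (hsum.mono ?_), hsum.mono ?_⟩
  · rintro z ⟨I, hI, rfl⟩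
    exact Finset.sum_pos (fun i _ => pow_pos hQ i) hI
  · rintro z ⟨I, -, hz⟩
    exact ⟨I, hz⟩

/-- Idempotent ultrafilters on `ℤ` concentrating at `-∞` and at `+∞` respectively. -/
structure IdempotentPair (s t : Ultrafilter ℤ) : Prop where
  left_add_self : s + s = s
  right_add_self : t + t = t
  left_le : (s : Filter ℤ) ≤ atBot
  right_le : (t : Filter ℤ) ≤ atTop

theorem tendsto_mul_atTop {D : ℤ} (hD : 0 < D) : Tendsto (D * ·) atTop atTop :=
  tendsto_id.const_mul_atTop' hD

theorem tendsto_mul_atBot {D : ℤ} (hD : 0 < D) : Tendsto (D * ·) atBot atBot := by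
  simpa [Function.comp_def] using
    tendsto_neg_atTop_atBot.comp ((tendsto_mul_atTop hD).comp tendsto_neg_atBot_atTop)

theorem IdempotentPair.map_mul {s t : Ultrafilter ℤ} (h : IdempotentPair s t) {D : ℤ}
    (hD : 0 < D) : IdempotentPair (s.map (D * ·)) (t.map (D * ·)) where
  left_add_self := map_mul_add_self h.left_add_self D
  right_add_self := map_mul_add_self h.right_add_self D
  left_le := (tendsto_mul_atBot hD).mono_left h.left_le
  right_le := (tendsto_mul_atTop hD).mono_left h.right_le

theorem idempotentPair_map {e : Ultrafilter ℤ} (he : e + e = e) (hle : (e : Filter ℤ) ≤ atTop)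
    {t t' : ℤ} (ht : t < 0) (ht' : 0 < t') :
    IdempotentPair (e.map (t * ·)) (e.map (t' * ·)) where
  left_add_self := map_mul_add_self he t
  right_add_self := map_mul_add_self he t'
  left_le := by
    have : Tendsto (t * ·) atTop atBot := by
      simpa [Function.comp_def] using
        tendsto_neg_atTop_atBot.comp (tendsto_mul_atTop (Int.neg_pos.2 ht))
    exact this.mono_left hle
  right_le := (tendsto_mul_atTop ht').mono_left hle

theorem exists_idempotentPair : ∃ s t, IdempotentPair s t := by
  obtain ⟨e, he, hle, -⟩ := exists_idempotent_geometric one_pos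
  exact ⟨_, _, idempotentPair_map he hle neg_one_lt_zero one_pos⟩

/-! ### The periodic part of a set -/

theorem exists_eventually_eq {X Y : Type*} {s : Set Y} (hs : s.Finite) (p : Ultrafilter X)
    {f : X → Y} (hf : ∀ x, f x ∈ s) : ∃ y ∈ s, ∀ᶠ x in (p : Filter X), f x = y :=
  (Ultrafilter.eventually_exists_mem_iff hs (P := fun y x => f x = y)).1 <|
    Eventually.of_forall fun x => ⟨f x, hf x, rfl⟩

theorem exists_eventually_emod_eq {X : Type*} {T : ℤ} (hT : 0 < T) (p : Ultrafilter X)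
    (f : X → ℤ) : ∃ c ∈ Set.Ico 0 T, ∀ᶠ x in (p : Filter X), f x % T = c :=
  exists_eventually_eq (Set.finite_Ico 0 T) p fun _ =>
    ⟨Int.emod_nonneg _ hT.ne', Int.emod_lt_of_pos _ hT⟩

section Periodic

variable {T : ℤ} {B : Set ℤ}

theorem mem_iff_of_dvd (hB : Function.Periodic (· ∈ B) T) {m n : ℤ} (h : T ∣ m - n) :
    m ∈ B ↔ n ∈ B := by
  obtain ⟨k, hk⟩ := h
  have := hB.int_mul k n
  rw [show m = n + k * T by linarith]
  exact iff_of_eq this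

theorem mem_translateLim_iff_of_periodic (hB : Function.Periodic (· ∈ B) T) {p : Ultrafilter ℤ}
    {c : ℤ} (hc : ∀ᶠ x in (p : Filter ℤ), x % T = c) {n : ℤ} : n ∈ p ⋆ B ↔ n + c ∈ B := by
  refine (eventually_congr (hc.mono fun x hx => mem_iff_of_dvd hB ?_)).trans eventually_const
  rw [add_sub_add_left_eq_sub, ← hx]
  exact Int.dvd_self_sub_emod

theorem limitsCommute_of_periodic (hT : 0 < T) (hB : Function.Periodic (· ∈ B) T) :
    LimitsCommute B := fun p q => by
  obtain ⟨a, -, ha⟩ := exists_eventually_emod_eq hT p id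
  obtain ⟨b, -, hb⟩ := exists_eventually_emod_eq hT q id
  have mem_iff {p q : Ultrafilter ℤ} {a b : ℤ} (ha : ∀ᶠ x in (p : Filter ℤ), x % T = a)
      (hb : ∀ᶠ x in (q : Filter ℤ), x % T = b) (n : ℤ) : n ∈ p ⋆ q ⋆ B ↔ n + b + a ∈ B := by
    rw [mem_translateLim]
    simp only [mem_translateLim_iff_of_periodic hB hb, add_right_comm n _ b]
    exact mem_translateLim_iff_of_periodic hB ha
  ext n
  rw [mem_iff ha hb, mem_iff hb ha, add_right_comm]

theorem eventually_dvd_of_add_self {e : Ultrafilter ℤ} (he : e + e = e) (hT : 0 < T) :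
    ∀ᶠ x in (e : Filter ℤ), T ∣ x := by
  obtain ⟨c, -, hc⟩ := exists_eventually_emod_eq hT e id
  have hsum : ∀ᶠ x in (e : Filter ℤ), ∀ᶠ y in (e : Filter ℤ), (x + y) % T = c := by
    rw [← Ultrafilter.eventually_add e e (· % T = c), he]
    exact hc
  obtain ⟨x, hxc, hx⟩ := (hc.and hsum).exists
  refine (hc.and hx).mono fun y ⟨_, hxy⟩ => ?_
  simpa using (Int.ModEq.dvd (hxc.trans hxy.symm : x ≡ x + y [ZMOD T]))

theorem translateLim_eq_of_periodic {e : Ultrafilter ℤ} (he : e + e = e) (hT : 0 < T)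
    (hB : Function.Periodic (· ∈ B) T) : e ⋆ B = B := by
  ext n
  rw [mem_translateLim_iff_of_periodic hB
    ((eventually_dvd_of_add_self he hT).mono fun x => Int.emod_eq_zero_of_dvd), add_zero]

end Periodic

section Window

variable {B : Set ℤ} {s t : Ultrafilter ℤ}

/- If every window failed, ultralimits `p`, `q` of a sequence of counterexamples would satisfy
`s ⋆ p ⋆ B = s ⋆ q ⋆ B`, hence `p ⋆ B = q ⋆ B` by commutation, contradicting `0 ∈ p ⋆ B ∆ q ⋆ B`. -/
theorem exists_determining_window (hB : LimitsCommute B) (hs : (s : Filter ℤ) ≤ atBot)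
    (hsB : s ⋆ B = B) :
    ∃ L : ℕ, ∀ i j : ℤ, (∀ x ∈ Set.Ico (-L : ℤ) 0, i + x ∈ B ↔ j + x ∈ B) → (i ∈ B ↔ j ∈ B) := by
  by_contra! hcon
  choose i j hij hne using hcon
  have limit_iff (k : ℕ → ℤ) : (∀ᶠ L in hyperfilter ℕ, k L ∈ B) ↔
      ∀ᶠ x in (s : Filter ℤ), ∀ᶠ L in hyperfilter ℕ, k L + x ∈ B := by
    have := Set.ext_iff.1 (hB ((hyperfilter ℕ).map k) s) 0
    simpa [hsB, mem_translateLim, add_comm] using this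
  have agree : ∀ᶠ x in (s : Filter ℤ), ∀ᶠ L in (hyperfilter ℕ : Filter ℕ),
      (i L + x ∈ B ↔ j L + x ∈ B) := by
    filter_upwards [hs (eventually_lt_atBot 0)] with x hx
    filter_upwards [Nat.hyperfilter_le_atTop (eventually_ge_atTop x.natAbs)] with L hL
    exact hij L x ⟨by lia, hx⟩
  have iff_limit : (∀ᶠ L in hyperfilter ℕ, i L ∈ B) ↔ ∀ᶠ L in hyperfilter ℕ, j L ∈ B := by
    rw [limit_iff, limit_iff]
    exact eventually_congr (agree.mono fun x => eventually_congr)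
  have differ : ∀ᶠ L in (hyperfilter ℕ : Filter ℕ), (i L ∈ B ↔ j L ∉ B) :=
    Eventually.of_forall fun L => by
      have := hne L
      tauto
  rw [eventually_congr differ, Ultrafilter.eventually_not] at iff_limit
  tauto

theorem exists_periodic_of_translateLim_eq (hB : LimitsCommute B) (hst : IdempotentPair s t)
    (hsB : s ⋆ B = B) (htB : t ⋆ B = B) : ∃ T > 0, Function.Periodic (· ∈ B) T := by
  obtain ⟨L, hL⟩ := exists_determining_window hB hst.left_le hsB
  obtain ⟨i, j, hij, hw⟩ : ∃ i j : ℕ, i < j ∧ ∀ x ∈ Set.Ico (-L : ℤ) 0, i + x ∈ B ↔ j + x ∈ B := by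
    obtain ⟨i, j, hne, heq⟩ := Finite.exists_ne_map_eq_of_infinite
      fun (i : ℕ) (x : Set.Ico (-L : ℤ) 0) => (i : ℤ) + x ∈ B
    have hw (x) (hx : x ∈ Set.Ico (-L : ℤ) 0) : (i : ℤ) + x ∈ B ↔ (j : ℤ) + x ∈ B :=
      iff_of_eq (congrFun heq ⟨x, hx⟩)
    rcases lt_or_gt_of_ne hne with h | h
    · exact ⟨i, j, h, hw⟩
    · exact ⟨j, i, h, fun x hx => (hw x hx).symm⟩
  have shift (m : ℕ) : ∀ x < (m : ℤ), -L ≤ x → (i + x ∈ B ↔ j + x ∈ B) := by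
    induction m with
    | zero => exact fun x hx hxL => hw x ⟨hxL, hx⟩
    | succ m ih =>
      intro x hx hxL
      rcases lt_or_ge x 0 with hx0 | hx0
      · exact hw x ⟨hxL, hx0⟩
      refine hL _ _ fun y ⟨hyL, hy⟩ => ?_
      rw [add_assoc, add_assoc]
      exact ih (x + y) (by lia) (by lia)
  refine ⟨j - i, by lia, fun n => propext ?_⟩
  change n + (j - i) ∈ B ↔ n ∈ B
  rw [← htB, mem_translateLim, mem_translateLim]
  refine eventually_congr ?_
  filter_upwards [hst.right_le (eventually_ge_atTop (i - n - L))] with x hx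
  have := shift (n + x - i + 1).toNat (n + x - i) (by lia) (by lia)
  rw [show n + (j - i) + x = j + (n + x - i) by ring, ← this]
  ring_nf

end Window

theorem exists_periodic_translateLim {A : Set ℤ} (hA : LimitsCommute A) {s t : Ultrafilter ℤ}
    (hst : IdempotentPair s t) : ∃ T > 0, Function.Periodic (· ∈ s ⋆ t ⋆ A) T := by
  refine exists_periodic_of_translateLim_eq ((hA.translateLim t).translateLim s) hst ?_ ?_
  · rw [← add_translateLim s s, hst.left_add_self]
  · rw [hA s t, ← add_translateLim t t, hst.right_add_self]

/-- A set is negligible if its limits along all idempotent pairs are empty. -/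
def Negligible (S : Set ℤ) : Prop := ∀ s t, IdempotentPair s t → s ⋆ t ⋆ S = ∅

theorem exists_periodic_negligible {A : Set ℤ} (hA : LimitsCommute A) :
    ∃ T > 0, ∃ P : Set ℤ, Function.Periodic (· ∈ P) T ∧ Negligible (symmDiff A P) := by
  obtain ⟨s, t, hst⟩ := exists_idempotentPair
  obtain ⟨T, hT, hP⟩ := exists_periodic_translateLim hA hst
  refine ⟨T, hT, _, hP, fun s' t' hst' => ?_⟩
  obtain ⟨T', hT', hP'⟩ := exists_periodic_translateLim hA hst'
  rw [translateLim_symmDiff, translateLim_symmDiff,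
    translateLim_eq_of_periodic hst'.right_add_self hT hP,
    translateLim_eq_of_periodic hst'.left_add_self hT hP]
  have swap : s' ⋆ t' ⋆ s ⋆ t ⋆ A = s ⋆ t ⋆ s' ⋆ t' ⋆ A := by
    simp only [← add_translateLim]
    simpa only [add_assoc, add_translateLim] using hA (s' + t') (s + t)
  rw [translateLim_eq_of_periodic hst'.right_add_self hT hP,
    translateLim_eq_of_periodic hst'.left_add_self hT hP,
    translateLim_eq_of_periodic hst.right_add_self hT' hP',
    translateLim_eq_of_periodic hst.left_add_self hT' hP'] at swap
  rw [swap]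
  exact symmDiff_self _

/-! ### Sections by a digit string -/

/-- The preimage of `S` under `n ↦ r + D * n`. If `r` is the value of a base-`d` word `σ` of length
`k`, then `pull (d ^ k) r S` is the set of the values of those `τ` for which `στ` lies in `S`. -/
def pull (D r : ℤ) (S : Set ℤ) : Set ℤ := {n | r + D * n ∈ S}

theorem mem_pull {D r n : ℤ} {S : Set ℤ} : n ∈ pull D r S ↔ r + D * n ∈ S := Iff.rfl

theorem pull_pull (D r E s : ℤ) (S : Set ℤ) :
    pull E s (pull D r S) = pull (D * E) (r + D * s) S := by
  ext n
  simp only [mem_pull, mul_add, mul_assoc, add_assoc]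

theorem pull_one_zero (S : Set ℤ) : pull 1 0 S = S := by
  ext n
  simp [mem_pull]

theorem pull_symmDiff (D r : ℤ) (S T : Set ℤ) :
    pull D r (symmDiff S T) = symmDiff (pull D r S) (pull D r T) := rfl

theorem translateLim_pull (D r : ℤ) (p : Ultrafilter ℤ) (S : Set ℤ) :
    p ⋆ pull D r S = pull D r (p.map (D * ·) ⋆ S) := by
  ext n
  simp only [mem_translateLim, mem_pull, Ultrafilter.coe_map, eventually_map, mul_add, add_assoc]

theorem LimitsCommute.pull {S : Set ℤ} (hS : LimitsCommute S) (D r : ℤ) :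
    LimitsCommute (pull D r S) := fun p q => by
  simp only [translateLim_pull, hS (p.map (D * ·)) (q.map (D * ·))]

theorem Negligible.pull {S : Set ℤ} (hS : Negligible S) {D : ℤ} (hD : 0 < D) (r : ℤ) :
    Negligible (pull D r S) := fun s t hst => by
  rw [translateLim_pull, translateLim_pull, hS _ _ (hst.map_mul hD)]
  rfl

/-- The number `1 + D + ⋯ + D ^ (m - 1)`, whose `m` base-`D` digits are all `1`. -/
def repunit (D : ℤ) (m : ℕ) : ℤ := ∑ i ∈ Finset.range m, D ^ i

theorem repunit_zero (D : ℤ) : repunit D 0 = 0 := rfl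

theorem repunit_succ (D : ℤ) (m : ℕ) : repunit D (m + 1) = repunit D m + D ^ m :=
  Finset.sum_range_succ _ _

theorem repunit_add (D : ℤ) (m n : ℕ) :
    repunit D (m + n) = repunit D m + D ^ m * repunit D n := by
  simp only [repunit, Finset.sum_range_add, Finset.mul_sum, pow_add]

theorem repunit_mul (D : ℤ) (m n : ℕ) :
    repunit D (m * n) = repunit D m * repunit (D ^ m) n := by
  induction n with
  | zero => simp [repunit_zero]
  | succ n ih =>
    rw [Nat.mul_succ, repunit_add, ih, repunit_succ, ← pow_mul, mul_add, mul_comm (D ^ _)]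

theorem pow_eq_repunit (D : ℤ) (m : ℕ) : D ^ m = 1 + (D - 1) * repunit D m := by
  rw [repunit, mul_geom_sum, add_sub_cancel]

theorem repunit_nonneg {D : ℤ} (hD : 0 ≤ D) (m : ℕ) : 0 ≤ repunit D m :=
  Finset.sum_nonneg fun i _ => pow_nonneg hD i

theorem repunit_le {D : ℤ} (hD : 2 ≤ D) (m : ℕ) : repunit D m ≤ D ^ m := by
  have h := repunit_nonneg (by linarith : 0 ≤ D) m
  rw [pow_eq_repunit]
  nlinarith

theorem iterate_pull (D r : ℤ) (S : Set ℤ) (m : ℕ) :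
    (pull D r)^[m] S = pull (D ^ m) (r * repunit D m) S := by
  induction m with
  | zero => simp [repunit_zero, pull_one_zero]
  | succ m ih =>
    rw [Function.iterate_succ_apply', ih, pull_pull, repunit_succ, pow_succ, mul_add,
      mul_comm r (D ^ m)]

/-! ### Loops in the kernel of a negligible set -/

theorem Negligible.not_forall_eventually_mem {S : Set ℤ} (hS : LimitsCommute S)
    (hN : Negligible S) (p : Ultrafilter ℤ) {Q t t' : ℤ} (hQ : 0 < Q) (ht : t < 0) (ht' : 0 < t') :
    ¬ ∀ I J : Finset ℕ, ∀ᶠ x in (p : Filter ℤ),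
      t * ∑ i ∈ I, Q ^ i + t' * ∑ i ∈ J, Q ^ i + x ∈ S := by
  intro h
  obtain ⟨e, he, hle, hsum⟩ := exists_idempotent_geometric hQ
  have hmem : 0 ∈ e.map (t * ·) ⋆ e.map (t' * ·) ⋆ p ⋆ S := by
    refine hsum.mono ?_
    rintro z ⟨I, rfl⟩
    refine hsum.mono ?_
    rintro z ⟨J, rfl⟩
    have := h I J
    rw [← zero_add (t * _)] at this
    exact this
  rw [hS _ p, hS.translateLim _ _ p, hN _ _ (idempotentPair_map he hle ht ht'),
    translateLim_empty] at hmem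
  exact hmem

theorem sum_digits_mem {S : Set ℤ} {Q : ℤ} {e : ℕ → ℤ} (he : ∀ i, pull Q (e i) S = S) (l : ℕ)
    {n : ℤ} (hn : n ∈ S) : ∑ i ∈ Finset.range l, e i * Q ^ i + Q ^ l * n ∈ S := by
  induction l generalizing n with
  | zero => simpa using hn
  | succ l ih =>
    rw [← he l, mem_pull] at hn
    convert ih hn using 1
    rw [Finset.sum_range_succ, pow_succ]
    ring

theorem sum_range_ite_mul {I : Finset ℕ} {l : ℕ} (hI : I ⊆ Finset.range l) (u v : ℤ) (f : ℕ → ℤ) :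
    ∑ i ∈ Finset.range l, (if i ∈ I then v else u) * f i =
      (v - u) * ∑ i ∈ I, f i + u * ∑ i ∈ Finset.range l, f i := by
  rw [← Finset.sum_sdiff hI, ← Finset.sum_sdiff (f := f) hI,
    Finset.sum_congr rfl fun i hi => by rw [if_neg (Finset.mem_sdiff.1 hi).2],
    Finset.sum_congr (s₁ := I) rfl fun i hi => by rw [if_pos hi], ← Finset.mul_sum,
    ← Finset.mul_sum]
  ring

/- Two loops `u ≠ v` generate loops `u + D * v`, ... in base `D * D` whose digits can be raised by
`v - u` and lowered by `D * (v - u)` at arbitrary places, so `S` is not negligible. -/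
theorem eq_empty_of_loops {S : Set ℤ} (hS : LimitsCommute S) (hN : Negligible S) {D u v : ℤ}
    (hD : 0 < D) (huv : u ≠ v) (hu : pull D u S = S) (hv : pull D v S = S) : S = ∅ := by
  wlog hlt : u < v generalizing u v
  · exact this huv.symm hv hu (huv.symm.lt_of_le (not_lt.1 hlt))
  by_contra hne
  obtain ⟨n₀, hn₀⟩ := Set.nonempty_iff_ne_empty.2 hne
  let x (l : ℕ) : ℤ := (u + D * v) * ∑ i ∈ Finset.range l, (D * D) ^ i + (D * D) ^ l * n₀
  refine hN.not_forall_eventually_mem hS ((hyperfilter ℕ).map x) (mul_pos hD hD)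
    (mul_neg_of_pos_of_neg hD (sub_neg.2 hlt)) (sub_pos.2 hlt) fun I J => ?_
  have large (I : Finset ℕ) : ∀ᶠ l in hyperfilter ℕ, I ⊆ Finset.range l :=
    Nat.hyperfilter_le_atTop (tendsto_finset_range.eventually (eventually_ge_atTop I))
  rw [Ultrafilter.coe_map, eventually_map]
  filter_upwards [large I, large J] with l hI hJ
  let e (i : ℕ) : ℤ := (if i ∈ J then v else u) + D * (if i ∈ I then u else v)
  have he (i : ℕ) : pull (D * D) (e i) S = S := by
    rw [← pull_pull, apply_ite (pull D · S), hu, hv, ite_self, apply_ite (pull D · S), hu, hv,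
      ite_self]
  convert sum_digits_mem he l hn₀ using 1
  simp only [e, x, add_mul, Finset.sum_add_distrib, mul_assoc D, ← Finset.mul_sum,
    sum_range_ite_mul hI, sum_range_ite_mul hJ]
  ring

theorem eq_empty_of_incongruent_loops {S : Set ℤ} (hS : LimitsCommute S) (hN : Negligible S)
    {D E u v : ℤ} (hD : 0 < D) (hE : 0 < E) (huv : ¬ u ≡ v [ZMOD D]) (hu : pull D u S = S)
    (hv : pull (D * E) v S = S) : S = ∅ := by
  refine eq_empty_of_loops (D := D * (D * E)) (u := u + D * v) (v := v + D * E * u) hS hN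
    (by positivity) (fun h => huv ?_) ?_ ?_
  · exact Int.modEq_iff_dvd.2 ⟨v - E * u, by linear_combination -h⟩
  · rw [← pull_pull, hu, hv]
  · rw [mul_comm D, ← pull_pull, hv, hu]

/-! ### Finite kernels -/

/-- The base-`d` kernel of `S`, as the set of states of its minimal automaton, is finite. Sections
by the integers `|r| ≤ C * d ^ k` replace those by residues, which makes the notion stable under
`pull`. -/
def FiniteKernel (d : ℤ) (S : Set ℤ) : Prop :=
  ∀ C : ℕ, {T | ∃ (k : ℕ) (r : ℤ), |r| ≤ C * d ^ k ∧ T = pull (d ^ k) r S}.Finite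

/-- The states reached from `S` by reading `k` base-`d` digits. -/
def kernelAt (d : ℤ) (k : ℕ) (S : Set ℤ) : Set (Set ℤ) :=
  (pull (d ^ k) · S) '' Set.Ico 0 (d ^ k)

/-- The states reached from `S` by reading base-`d` digits. -/
def kernel (d : ℤ) (S : Set ℤ) : Set (Set ℤ) := ⋃ k, kernelAt d k S

section Kernel

variable {d : ℤ} {S T U : Set ℤ}

theorem mem_kernelAt_zero : S ∈ kernelAt d 0 S :=
  ⟨0, by simp, by simp only [pow_zero, pull_one_zero]⟩

theorem mem_kernelAt_trans (hd : 0 < d) {j k : ℕ} (hT : T ∈ kernelAt d j S)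
    (hU : U ∈ kernelAt d k T) : U ∈ kernelAt d (j + k) S := by
  obtain ⟨r, ⟨hr, hr'⟩, rfl⟩ := hT
  obtain ⟨s, ⟨hs, hs'⟩, rfl⟩ := hU
  have hjs : d ^ j * (s + 1) ≤ d ^ j * d ^ k := by gcongr; exact hs'
  refine ⟨r + d ^ j * s, ⟨by positivity, ?_⟩, by simp only [pull_pull, pow_add]⟩
  rw [pow_add]
  linarith

theorem mem_kernelAt_self_of_dvd (hd : 0 < d) {j k : ℕ} (hjk : j ∣ k) (hS : S ∈ kernelAt d j S) :
    S ∈ kernelAt d k S := by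
  obtain ⟨m, rfl⟩ := hjk
  induction m with
  | zero => exact mem_kernelAt_zero
  | succ m ih => exact mem_kernelAt_trans hd ih hS

theorem mem_kernel_self : S ∈ kernel d S := Set.mem_iUnion.2 ⟨0, mem_kernelAt_zero⟩

theorem kernel_subset_kernel (hd : 0 < d) {k : ℕ} (hT : T ∈ kernelAt d k S) :
    kernel d T ⊆ kernel d S :=
  Set.iUnion_subset fun j _ hU => Set.mem_iUnion.2 ⟨k + j, mem_kernelAt_trans hd hT hU⟩

theorem FiniteKernel.kernel_finite (h : FiniteKernel d S) : (kernel d S).Finite := by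
  refine (h 1).subset (Set.iUnion_subset fun k => ?_)
  rintro _ ⟨r, ⟨hr, hr'⟩, rfl⟩
  exact ⟨k, r, by rw [abs_of_nonneg hr, Nat.cast_one, one_mul]; exact hr'.le, rfl⟩

theorem FiniteKernel.of_kernel_finite (hd : 0 < d) (h : (kernel d S).Finite) :
    FiniteKernel d S := by
  intro C
  refine ((Set.finite_Icc (-(C + 1) : ℤ) (C + 1)).image2 (pull 1) h).subset ?_
  rintro _ ⟨k, r, hr, rfl⟩
  have hk : 0 < d ^ k := pow_pos hd k
  have hmod := Int.emod_add_mul_ediv r (d ^ k)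
  have hnonneg := Int.emod_nonneg r hk.ne'
  have hlt := Int.emod_lt_of_pos r hk
  rw [abs_le] at hr
  refine ⟨r / d ^ k, ⟨by nlinarith, by nlinarith⟩, pull (d ^ k) (r % d ^ k) S,
    Set.mem_iUnion.2 ⟨k, _, ⟨hnonneg, hlt⟩, rfl⟩, ?_⟩
  rw [pull_pull, mul_one, hmod]

theorem FiniteKernel.symmDiff (hS : FiniteKernel d S) (hT : FiniteKernel d T) :
    FiniteKernel d (symmDiff S T) := by
  intro C
  refine ((hS C).image2 _root_.symmDiff (hT C)).subset ?_
  rintro _ ⟨k, r, hr, rfl⟩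
  exact ⟨_, ⟨k, r, hr, rfl⟩, _, ⟨k, r, hr, rfl⟩, (pull_symmDiff _ _ _ _).symm⟩

theorem FiniteKernel.pull (hd : 0 < d) (hS : FiniteKernel d S) (j : ℕ) (b : ℤ) :
    FiniteKernel d (pull (d ^ j) b S) := by
  intro C
  refine (hS (b.natAbs + C)).subset ?_
  rintro _ ⟨k, r, hr, rfl⟩
  refine ⟨j + k, b + d ^ j * r, ?_, by rw [pull_pull, pow_add]⟩
  have hj : 0 < d ^ j := pow_pos hd j
  have hjk : 1 ≤ d ^ (j + k) := pow_pos hd _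
  calc |b + d ^ j * r| ≤ |b| + |d ^ j * r| := abs_add_le _ _
    _ = |b| * 1 + d ^ j * |r| := by rw [abs_mul, abs_of_pos hj, mul_one]
    _ ≤ |b| * d ^ (j + k) + d ^ j * (C * d ^ k) := by gcongr
    _ = ((b.natAbs + C : ℕ) : ℤ) * d ^ (j + k) := by
      rw [Nat.cast_add, Int.natCast_natAbs, pow_add]; ring

theorem FiniteKernel.pow (hS : FiniteKernel d S) (δ : ℕ) : FiniteKernel (d ^ δ) S := by
  intro C
  refine (hS C).subset ?_
  rintro _ ⟨k, r, hr, rfl⟩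
  rw [← pow_mul] at hr ⊢
  exact ⟨δ * k, r, hr, rfl⟩

theorem finiteKernel_of_periodic {t : ℤ} (ht : 0 < t) (hS : Function.Periodic (· ∈ S) t) :
    FiniteKernel d S := by
  intro C
  refine ((Set.finite_Ico 0 t).powerset.image fun R => {n : ℤ | n % t ∈ R}).subset ?_
  rintro _ ⟨k, r, -, rfl⟩
  refine ⟨StableAutomatic.pull (d ^ k) r S ∩ Set.Ico 0 t, Set.inter_subset_right, ?_⟩
  ext n
  have hn : n % t ∈ Set.Ico 0 t := ⟨Int.emod_nonneg n ht.ne', Int.emod_lt_of_pos n ht⟩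
  refine (and_iff_left hn).trans (mem_iff_of_dvd hS ?_)
  rw [add_sub_add_left_eq_sub, ← mul_sub]
  exact ((Int.mod_modEq n t).symm.dvd).mul_left _

end Kernel

theorem evalZ_append (d : ℤ) (σ ρ : List ℤ) :
    evalZ d (σ ++ ρ) = evalZ d σ + d ^ σ.length * evalZ d ρ := by
  induction σ with
  | nil => simp [evalZ]
  | cons k σ ih =>
    rw [List.cons_append, evalZ, evalZ, ih, List.length_cons, pow_succ]
    ring

theorem exists_digits {d : ℕ} (hd : 2 ≤ d) (k : ℕ) {r : ℤ} (hr : r.natAbs < d ^ k) :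
    ∃ σ : List ℤ, σ.length = k ∧ (∀ x ∈ σ, x.natAbs ≤ d - 1) ∧ evalZ d σ = r := by
  induction k generalizing r with
  | zero => exact ⟨[], rfl, by simp, by simp only [evalZ]; lia⟩
  | succ k ih =>
    obtain ⟨σ, hσ, hdigits, hval⟩ := ih (r := r.tdiv d) <| by
      rw [Int.natAbs_tdiv, Int.natAbs_natCast]
      exact Nat.div_lt_of_lt_mul (by rwa [mul_comm, ← pow_succ])
    have hmod : (r.tmod d).natAbs ≤ d - 1 := by
      rw [Int.natAbs_tmod, Int.natAbs_natCast]
      exact Nat.le_sub_one_of_lt (Nat.mod_lt _ (by lia))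
    refine ⟨r.tmod d :: σ, by simp [hσ], List.forall_mem_cons.2 ⟨hmod, hdigits⟩, ?_⟩
    rw [evalZ, hval, Int.tmod_add_mul_tdiv]

theorem exists_evalZ_eq {d : ℕ} (hd : 2 ≤ d) (n : ℤ) :
    ∃ σ : List ℤ, (∀ x ∈ σ, x.natAbs ≤ d - 1) ∧ evalZ d σ = n :=
  have ⟨σ, _, hσ⟩ := exists_digits hd n.natAbs (Nat.lt_pow_self hd)
  ⟨σ, hσ⟩

theorem FiniteKernel.of_automatic {d : ℕ} (hd : 2 ≤ d) {A : Set ℤ} (hA : AutomaticZ d A) :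
    FiniteKernel d A := by
  obtain ⟨Q, _, M, hM⟩ := hA
  let accepted (q : Q) : Set ℤ :=
    {n | ∃ ρ : List ℤ, (∀ x ∈ ρ, x.natAbs ≤ d - 1) ∧ evalZ d ρ = n ∧ M.evalFrom q ρ ∈ M.accept}
  refine .of_kernel_finite (by lia) ((Set.finite_range accepted).subset (Set.iUnion_subset ?_))
  rintro k _ ⟨r, ⟨hr, hr'⟩, rfl⟩
  obtain ⟨σ, rfl, hσ, rfl⟩ := exists_digits hd k (r := r) (by zify; rwa [abs_of_nonneg hr])
  have accept_iff {ρ : List ℤ} (hρ : ∀ x ∈ ρ, x.natAbs ≤ d - 1) :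
      M.evalFrom (M.eval σ) ρ ∈ M.accept ↔ evalZ d σ + d ^ σ.length * evalZ d ρ ∈ A := by
    have h : σ ++ ρ ∈ M.accepts ↔ _ := Set.ext_iff.1 hM (σ ++ ρ)
    rw [DFA.mem_accepts, DFA.eval, DFA.evalFrom_of_append] at h
    rw [← evalZ_append]
    exact h.trans (and_iff_right fun x hx => (List.mem_append.1 hx).elim (hσ x) (hρ x))
  refine ⟨M.eval σ, Set.ext fun n => ⟨?_, fun hn => ?_⟩⟩
  · rintro ⟨ρ, hρ, rfl, h⟩
    exact (accept_iff hρ).1 h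
  · obtain ⟨ρ, hρ, rfl⟩ := exists_evalZ_eq hd n
    exact ⟨ρ, hρ, rfl, (accept_iff hρ).2 hn⟩

theorem exists_common_multiple {ι : Type*} {s : Set ι} (hs : s.Finite) {P : ι → ℕ → Prop}
    (hmono : ∀ i m n, m ∣ n → 0 < n → P i m → P i n) (hP : ∀ i ∈ s, ∃ n > 0, P i n) :
    ∃ n > 0, ∀ i ∈ s, P i n := by
  choose! f hpos hf using hP
  have hprod : 0 < ∏ i ∈ hs.toFinset, f i :=
    Finset.prod_pos fun i hi => hpos i (hs.mem_toFinset.1 hi)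
  exact ⟨_, hprod, fun i hi =>
    hmono i _ _ (Finset.dvd_prod_of_mem f (hs.mem_toFinset.2 hi)) hprod (hf i hi)⟩

theorem exists_common_loop_length {d : ℤ} (hd : 0 < d) {K : Set (Set ℤ)} (hK : K.Finite) :
    ∃ Δ > 0, ∀ S ∈ K, ∀ k > 0, S ∈ kernelAt d k S → S ∈ kernelAt d Δ S := by
  refine exists_common_multiple hK (fun S m n hmn _ h k hk hS =>
    mem_kernelAt_self_of_dvd hd hmn (h k hk hS)) fun S _ => ?_
  by_cases h : ∃ k > 0, S ∈ kernelAt d k S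
  · obtain ⟨k, hk, h⟩ := h
    exact ⟨k, hk, fun _ _ _ => h⟩
  · exact ⟨1, one_pos, fun k hk hS => absurd ⟨k, hk, hS⟩ h⟩

/-! ### Covering by patterns -/

/-- The sums `β + ∑ i ∈ I, a i * repunit D (m i)`, with coefficients `a i` and arbitrary `m i`. -/
def pattern (D β : ℤ) (I : Finset ℕ) (a : ℕ → ℤ) : Set ℤ :=
  {x | ∃ m : ℕ → ℕ, x = β + ∑ i ∈ I, a i * repunit D (m i)}

/-- The ultrafilter `p` contains a base-`D` pattern. -/
def HasPattern (D : ℤ) (p : Ultrafilter ℤ) : Prop := ∃ β I a, pattern D β I a ∈ p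

/-- Finitely many base-`D` patterns cover `S`, which by compactness is a condition on
ultrafilters. -/
def Covered (D : ℤ) (S : Set ℤ) : Prop := ∀ ⦃p : Ultrafilter ℤ⦄, S ∈ p → HasPattern D p

section Covering

variable {D : ℤ} {p : Ultrafilter ℤ} {S : Set ℤ}

theorem hasPattern_of_eventually_eq {x₀ : ℤ} (h : ∀ᶠ x in (p : Filter ℤ), x = x₀) :
    HasPattern D p :=
  ⟨x₀, ∅, 0, h.mono fun x hx => ⟨0, by rw [hx, Finset.sum_empty, add_zero]⟩⟩

theorem HasPattern.of_map {g : ℤ → ℤ} (h : HasPattern D (p.map g)) {r E : ℤ}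
    (hg : ∀ᶠ x in (p : Filter ℤ), x = r + E * g x) : HasPattern D p := by
  obtain ⟨β, I, a, h⟩ := h
  refine ⟨r + E * β, I, fun i => E * a i, ?_⟩
  filter_upwards [h, hg] with x ⟨m, hm⟩ hx
  refine ⟨m, ?_⟩
  rw [hx, hm]
  simp only [mul_add, Finset.mul_sum, mul_assoc, add_assoc]

/- Prepending `n` digits `w` shifts the exponents of a pattern by `n`, at the price of a new term
with exponent `n`. -/
theorem HasPattern.of_map_iterate {g : ℤ → ℤ} (h : HasPattern D (p.map g)) {w : ℤ} {n : ℤ → ℕ}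
    (hg : ∀ᶠ x in (p : Filter ℤ), x = w * repunit D (n x) + D ^ n x * g x) : HasPattern D p := by
  obtain ⟨β, I, a, h⟩ := h
  obtain ⟨j, hj⟩ := Infinite.exists_notMem_finset I
  set c := w + (D - 1) * β - ∑ i ∈ I, a i with hc
  refine ⟨β, insert j I, Function.update a j c, ?_⟩
  filter_upwards [h, hg] with x ⟨m, hm⟩ hx
  refine ⟨Function.update (fun i => n x + m i) j (n x), ?_⟩
  have shift : ∑ i ∈ I, Function.update a j c i *
      repunit D (Function.update (fun i => n x + m i) j (n x) i) =
      (∑ i ∈ I, a i) * repunit D (n x) + D ^ n x * ∑ i ∈ I, a i * repunit D (m i) := by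
    rw [Finset.sum_mul, Finset.mul_sum, ← Finset.sum_add_distrib]
    refine Finset.sum_congr rfl fun i hi => ?_
    have hij : i ≠ j := ne_of_mem_of_not_mem hi hj
    rw [Function.update_of_ne hij, Function.update_of_ne hij, repunit_add]
    ring
  rw [hm] at hx
  rw [Finset.sum_insert hj, Function.update_self, Function.update_self, shift, hc]
  linear_combination hx + β * pow_eq_repunit D (n x)

theorem hasPattern_of_pull {E : ℤ} (hE : 0 < E) (hS : S ∈ p)
    (h : ∀ r ∈ Set.Ico 0 E, (∀ᶠ x in (p : Filter ℤ), x % E = r) → Covered D (pull E r S)) :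
    HasPattern D p := by
  obtain ⟨r, hr, hpr⟩ := exists_eventually_emod_eq hE p id
  have hdiv : ∀ᶠ x in (p : Filter ℤ), x = r + E * (x / E) := hpr.mono fun x hx => by
    rw [← hx, id, Int.emod_add_mul_ediv]
  refine (h r hr hpr ?_).of_map (g := (· / E)) hdiv
  change ∀ᶠ x in (p : Filter ℤ), x / E ∈ pull E r S
  filter_upwards [hS, hdiv] with x hx hxr
  rwa [mem_pull, ← hxr]

theorem eq_zero_or_exists_of_loop {w : ℤ} (hD : 2 ≤ D) (hw : pull D w S = S) {x : ℤ}
    (hx : x ∈ S) : w + (D - 1) * x = 0 ∨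
      ∃ z : ℕ × ℤ, x = w * repunit D z.1 + D ^ z.1 * z.2 ∧ z.2 ∈ S ∧ z.2 % D ≠ w := by
  induction hN : (w + (D - 1) * x).natAbs using Nat.strong_induction_on generalizing x with
  | _ N ih =>
  by_cases hxw : x % D = w
  swap
  · exact .inr ⟨(0, x), by simp [repunit_zero], hx, hxw⟩
  refine or_iff_not_imp_left.2 fun h0 => ?_
  obtain ⟨y, rfl⟩ : ∃ y, x = w + D * y := ⟨x / D, by rw [← hxw, Int.emod_add_mul_ediv]⟩
  rw [← mem_pull, hw] at hx
  have hy : w + (D - 1) * (w + D * y) = D * (w + (D - 1) * y) := by ring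
  rw [hy] at h0
  have hy0 : w + (D - 1) * y ≠ 0 := right_ne_zero_of_mul h0
  have hlt : (w + (D - 1) * y).natAbs < N := by
    rw [← hN, hy, Int.natAbs_mul]
    exact lt_mul_left (Int.natAbs_pos.2 hy0) (by lia)
  obtain ⟨z, rfl, hz⟩ := (ih _ hlt hx rfl).resolve_left hy0
  refine ⟨(1 + z.1, z.2), ?_, hz⟩
  rw [repunit_add, pow_add, pow_one, repunit_succ, repunit_zero]
  ring

theorem covered_of_loop {w : ℤ} (hD : 2 ≤ D) (hw : pull D w S = S)
    (h : ∀ r ∈ Set.Ico 0 D, r ≠ w → Covered D (pull D r S)) : Covered D S := by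
  intro p hS
  have key := Eventually.mono hS fun x => eq_zero_or_exists_of_loop hD hw
  rcases Ultrafilter.eventually_or.1 key with h0 | h1
  · refine hasPattern_of_eventually_eq (x₀ := -w / (D - 1)) (h0.mono fun x hx => ?_)
    exact Int.eq_ediv_of_mul_eq_right (by lia) (by linarith)
  · obtain ⟨f, hf⟩ := h1.choice
    refine HasPattern.of_map_iterate (g := fun x => (f x).2) ?_ (hf.mono fun x hx => hx.1)
    refine hasPattern_of_pull (by linarith) (hf.mono fun x hx => hx.2.1) fun r hr hpr => ?_
    obtain ⟨x, rfl, -, -, hne⟩ := ((eventually_map.1 hpr).and hf).exists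
    exact h _ hr hne

theorem notMem_kernel_of_loop {d : ℤ} (hd : 0 < d) (hS : LimitsCommute S) (hN : Negligible S)
    (hne : S.Nonempty) {Δ : ℕ} {w r : ℤ} (hw : w ∈ Set.Ico 0 (d ^ Δ))
    (hloop : pull (d ^ Δ) w S = S) (hr : r ∈ Set.Ico 0 (d ^ Δ)) (hrw : r ≠ w) :
    S ∉ kernel d (pull (d ^ Δ) r S) := by
  intro h
  obtain ⟨j, s, -, hs : pull (d ^ j) s (pull (d ^ Δ) r S) = S⟩ := Set.mem_iUnion.1 h
  rw [pull_pull] at hs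
  refine hne.ne_empty (eq_empty_of_incongruent_loops hS hN (by positivity) (pow_pos hd j)
    (fun hmod => hrw ?_) hloop hs)
  rw [Int.ModEq, Int.add_mul_emod_self_left, Int.emod_eq_of_lt hw.1 hw.2,
    Int.emod_eq_of_lt hr.1 hr.2] at hmod
  exact hmod.symm

theorem covered_of_loop_length {d : ℤ} (hd : 2 ≤ d) {Δ : ℕ} (hΔ : 0 < Δ)
    (hfin : (kernel d S).Finite)
    (hloop : ∀ T ∈ kernel d S, ∀ k > 0, T ∈ kernelAt d k T → T ∈ kernelAt d Δ T)
    (hS : LimitsCommute S) (hN : Negligible S) : Covered (d ^ Δ) S := by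
  have hd0 : 0 < d := by linarith
  induction hn : (kernel d S).ncard using Nat.strong_induction_on generalizing S with
  | _ n ih =>
  have covered_pull {k : ℕ} {r : ℤ} (hr : r ∈ Set.Ico 0 (d ^ k))
      (hmem : S ∉ kernel d (pull (d ^ k) r S)) : Covered (d ^ Δ) (pull (d ^ k) r S) := by
    have hsub : kernel d (pull (d ^ k) r S) ⊆ kernel d S := kernel_subset_kernel hd0 ⟨r, hr, rfl⟩
    refine ih _ ?_ (hfin.subset hsub) (fun T hT => hloop T (hsub hT)) (hS.pull _ _)
      (hN.pull (by positivity) _) rfl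
    rw [← hn]
    exact Set.ncard_lt_ncard (Set.ssubset_iff_of_subset hsub |>.2 ⟨S, mem_kernel_self, hmem⟩) hfin
  rcases S.eq_empty_or_nonempty with rfl | hne
  · exact fun p hp => absurd hp p.empty_notMem
  by_cases hl : ∃ k > 0, S ∈ kernelAt d k S
  · obtain ⟨k, hk, hl⟩ := hl
    obtain ⟨w, hw, hwS⟩ := hloop S mem_kernel_self k hk hl
    exact covered_of_loop (hd.trans (le_self_pow₀ (by linarith) hΔ.ne')) hwS fun r hr hrw =>
      covered_pull hr (notMem_kernel_of_loop hd0 hS hN hne hw hwS hr hrw)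
  · intro p hp
    refine hasPattern_of_pull (pow_pos hd0 1) hp fun r hr _ => covered_pull hr fun h => hl ?_
    obtain ⟨j, hj⟩ := Set.mem_iUnion.1 h
    exact ⟨1 + j, by lia, mem_kernelAt_trans hd0 ⟨r, hr, rfl⟩ hj⟩

theorem exists_covered {d : ℤ} (hd : 2 ≤ d) (hF : FiniteKernel d S) (hS : LimitsCommute S)
    (hN : Negligible S) : ∃ Δ > 0, Covered (d ^ Δ) S := by
  obtain ⟨Δ, hΔ, h⟩ := exists_common_loop_length (by linarith : 0 < d) hF.kernel_finite
  exact ⟨Δ, hΔ, covered_of_loop_length hd hΔ hF.kernel_finite h hS hN⟩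

end Covering

/-! ### Dependence on the residues of the exponents -/

/-- The exponents `m i` are at least `N` and increase along the list `l` in steps of at least
`N`. -/
def Separated (N : ℕ) (l : List ℕ) (m : ℕ → ℕ) : Prop :=
  (∀ i ∈ l, N ≤ m i) ∧ l.Pairwise fun i j => m i + N ≤ m j

/-- The element with exponents `m` of the pattern with constant term `0` and coefficients `a i`,
`i ∈ l`. -/
def value (D : ℤ) (a : ℕ → ℤ) (l : List ℕ) (m : ℕ → ℕ) : ℤ :=
  (l.map fun i => a i * repunit D (m i)).sum

/-- If the exponents `m` are separated by `N`, whether `value D a l m` lies in `S` depends only on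
the residues of the exponents modulo `N`. -/
def ResidueDetermined (D : ℤ) (a : ℕ → ℤ) (S : Set ℤ) (l : List ℕ) (N : ℕ) : Prop :=
  ∀ ⦃m m'⦄, Separated N l m → Separated N l m' → (∀ i ∈ l, m i ≡ m' i [MOD N]) →
    (value D a l m ∈ S ↔ value D a l m' ∈ S)

section Residue

variable {D : ℤ} {a : ℕ → ℤ} {l : List ℕ} {i N N' : ℕ} {m m' : ℕ → ℕ} {S : Set ℤ}

theorem Separated.mono (h : Separated N' l m) (hN : N ≤ N') : Separated N l m :=
  ⟨fun i hi => hN.trans (h.1 i hi), h.2.imp fun hij => (Nat.add_le_add_left hN _).trans hij⟩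

theorem Separated.head_le (h : Separated N (i :: l) m) {j : ℕ} (hj : j ∈ i :: l) : m i ≤ m j := by
  rcases List.mem_cons.1 hj with rfl | hj
  · exact le_rfl
  · exact (Nat.le_add_right _ _).trans (List.rel_of_pairwise_cons h.2 hj)

theorem Separated.tail (h : Separated N (i :: l) m) : Separated N l (fun j => m j - m i) :=
  ⟨fun j hj => Nat.le_sub_of_add_le' (List.rel_of_pairwise_cons h.2 hj),
    h.2.of_cons.imp_of_mem fun {j k} hj _ hjk => by
      have := h.head_le (List.mem_cons_of_mem i hj)
      lia⟩

theorem value_eq_add {g : ℕ} (h : ∀ i ∈ l, g ≤ m i) :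
    value D a l m = (l.map a).sum * repunit D g + D ^ g * value D a l (fun i => m i - g) := by
  rw [value, value, ← List.sum_map_mul_right, ← List.sum_map_mul_left, ← List.sum_map_add]
  refine congrArg List.sum (List.map_congr_left fun i hi => ?_)
  rw [← Nat.add_sub_cancel' (h i hi), repunit_add, Nat.add_sub_cancel_left]
  ring

theorem ResidueDetermined.mono (h : ResidueDetermined D a S l N) (hN : N ∣ N') (hN' : 0 < N') :
    ResidueDetermined D a S l N' := fun _ _ hm hm' hmm' =>
  h (hm.mono (Nat.le_of_dvd hN' hN)) (hm'.mono (Nat.le_of_dvd hN' hN))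
    fun i hi => (hmm' i hi).of_dvd hN

theorem exists_iterate_eq_of_modEq {X : Type*} {F : X → X} {x : X}
    (h : (Set.range fun n => F^[n] x).Finite) :
    ∃ N > 0, ∀ m n, N ≤ m → N ≤ n → m ≡ n [MOD N] → F^[m] x = F^[n] x := by
  obtain ⟨i, -, j, -, hij, heq⟩ := Set.infinite_univ.exists_lt_map_eq_of_mapsTo
    (fun n _ => Set.mem_range_self n) h
  have hper : Function.IsPeriodicPt F (j - i) (F^[i] x) := by
    rw [Function.IsPeriodicPt, Function.IsFixedPt, ← Function.iterate_add_apply,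
      Nat.sub_add_cancel hij.le]
    exact heq.symm
  have reduce {n : ℕ} (hn : i ≤ n) : F^[n] x = F^[(n - i) % (j - i)] (F^[i] x) := by
    rw [hper.iterate_mod_apply, ← Function.iterate_add_apply, Nat.sub_add_cancel hn]
  have hi : i ≤ (j - i) * j := hij.le.trans (Nat.le_mul_of_pos_left j (Nat.sub_pos_of_lt hij))
  refine ⟨(j - i) * j, Nat.mul_pos (Nat.sub_pos_of_lt hij) (by lia), fun m n hm hn hmn => ?_⟩
  rw [reduce (hi.trans hm), reduce (hi.trans hn)]
  congr 1
  refine Nat.ModEq.add_right_cancel' i ?_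
  rw [Nat.sub_add_cancel (hi.trans hm), Nat.sub_add_cancel (hi.trans hn)]
  exact hmn.of_mul_right j

theorem FiniteKernel.iterate_pull (hD : 0 < D) (hS : FiniteKernel D S) (e : ℤ) (g : ℕ) :
    FiniteKernel D ((StableAutomatic.pull D e)^[g] S) := by
  rw [StableAutomatic.iterate_pull]
  exact hS.pull hD g _

theorem FiniteKernel.finite_range_iterate_pull (hD : 2 ≤ D) (hS : FiniteKernel D S) (e : ℤ) :
    (Set.range fun g => (StableAutomatic.pull D e)^[g] S).Finite := by
  refine (hS e.natAbs).subset ?_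
  rintro _ ⟨g, rfl⟩
  refine ⟨g, e * repunit D g, ?_, StableAutomatic.iterate_pull D e S g⟩
  rw [abs_mul, Int.natCast_natAbs, abs_of_nonneg (repunit_nonneg (by linarith) g)]
  gcongr
  exact repunit_le hD g

theorem Separated.value_mem_iff (h : Separated N (i :: l) m) :
    value D a (i :: l) m ∈ S ↔
      value D a l (fun j => m j - m i) ∈ (pull D ((i :: l).map a).sum)^[m i] S := by
  rw [value_eq_add fun _ => h.head_le, iterate_pull, mem_pull]
  simp [value, repunit_zero]

theorem exists_residueDetermined (hD : 2 ≤ D) (hS : FiniteKernel D S) (a : ℕ → ℤ) (l : List ℕ) :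
    ∃ N > 0, ResidueDetermined D a S l N := by
  induction l generalizing S with
  | nil => exact ⟨1, one_pos, fun _ _ _ _ _ => Iff.rfl⟩
  | cons i l ih =>
    let e := ((i :: l).map a).sum
    have hfin := hS.finite_range_iterate_pull hD e
    obtain ⟨N₁, hN₁, h₁⟩ := exists_iterate_eq_of_modEq hfin
    obtain ⟨N₂, hN₂, h₂⟩ := exists_common_multiple hfin
      (P := fun T N => ResidueDetermined D a T l N) (fun _ _ _ hN hN' h => h.mono hN hN') <| by
        rintro _ ⟨g, rfl⟩
        exact ih (hS.iterate_pull (by linarith) e g)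
    have hN := Nat.mul_pos hN₁ hN₂
    refine ⟨N₁ * N₂, hN, fun m m' hm hm' hmm' => ?_⟩
    have hi := hmm' i List.mem_cons_self
    have large {m : ℕ → ℕ} (hm : Separated (N₁ * N₂) (i :: l) m) : N₁ ≤ m i :=
      (Nat.le_mul_of_pos_right N₁ hN₂).trans (hm.1 i List.mem_cons_self)
    rw [hm.value_mem_iff, hm'.value_mem_iff,
      h₁ _ _ (large hm) (large hm') (hi.of_mul_right N₂)]
    refine (h₂ _ ⟨m' i, rfl⟩).mono (Nat.dvd_mul_left _ _) hN hm.tail hm'.tail fun j hj => ?_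
    have hj := List.mem_cons_of_mem i hj
    refine Nat.ModEq.add_right_cancel hi ?_
    rw [Nat.sub_add_cancel (hm.head_le hj), Nat.sub_add_cancel (hm'.head_le hj)]
    exact hmm' j hj

end Residue

/-! ### Minimal patterns -/

/-- The base-`D` pattern with the given data belongs to `p`, and no base-`D` pattern in `p` has
fewer summands. -/
structure IsMinPattern (D : ℤ) (p : Ultrafilter ℤ) (β : ℤ) (I : Finset ℕ) (a : ℕ → ℤ) : Prop where
  mem : pattern D β I a ∈ p
  card_le : ∀ ⦃β' I' a'⦄, pattern D β' I' a' ∈ p → I.card ≤ I'.card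

/-- The part of a pattern whose exponents are `c i + N`, `c i + 2 * N`, ... -/
def subpattern (D β : ℤ) (I : Finset ℕ) (a : ℕ → ℤ) (c : ℕ → ℕ) (N : ℕ) : Set ℤ :=
  {x | ∃ n : ℕ → ℕ, x = β + ∑ i ∈ I, a i * repunit D (c i + N * (n i + 1))}

/-- The limit of `t * repunit D (c + N * n)` along a nonprincipal ultrafilter on `n`. -/
noncomputable def repunitLimit (D t : ℤ) (c N : ℕ) : Ultrafilter ℤ :=
  (hyperfilter ℕ).map fun n => t * repunit D (c + N * n)

section MinPattern

variable {D β : ℤ} {I : Finset ℕ} {a : ℕ → ℤ} {p : Ultrafilter ℤ}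

theorem HasPattern.exists_isMinPattern (h : HasPattern D p) : ∃ β I a, IsMinPattern D p β I a := by
  obtain ⟨β, I, a, h⟩ := h
  obtain ⟨⟨β, I, a⟩, hmem, hmin⟩ := exists_minimalFor_of_wellFoundedLT
    (fun x : ℤ × Finset ℕ × (ℕ → ℤ) => pattern D x.1 x.2.1 x.2.2 ∈ p) (fun x => x.2.1.card)
    ⟨(β, I, a), h⟩
  refine ⟨β, I, a, hmem, fun β' I' a' h' => ?_⟩
  exact (le_total _ _).elim id (hmin (j := (β', I', a')) h')

theorem subpattern_subset (D β : ℤ) (I : Finset ℕ) (a : ℕ → ℤ) (c : ℕ → ℕ) (N : ℕ) :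
    subpattern D β I a c N ⊆ pattern D β I a := by
  rintro x ⟨n, rfl⟩
  exact ⟨fun i => c i + N * (n i + 1), rfl⟩

section Exponents

variable (h : IsMinPattern D p β I a) {m : ℤ → ℕ → ℕ}
  (hm : ∀ᶠ x in (p : Filter ℤ), x = β + ∑ i ∈ I, a i * repunit D (m x i))
include h hm

/- A constant exponent could be absorbed into the constant term. -/
theorem IsMinPattern.eventually_ne {i : ℕ} (hi : i ∈ I) (c : ℕ) :
    ∀ᶠ x in (p : Filter ℤ), m x i ≠ c := by
  refine Ultrafilter.eventually_not.2 fun hc => (Finset.card_erase_lt_of_mem hi).not_ge <|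
    h.card_le (β' := β + a i * repunit D c) (a' := a) ?_
  filter_upwards [hm, hc] with x hx hxc
  refine ⟨m x, ?_⟩
  rw [← hxc, add_assoc, Finset.add_sum_erase _ (fun i => a i * repunit D (m x i)) hi]
  exact hx

/- Two summands whose exponents differ by a constant could be merged. -/
theorem IsMinPattern.eventually_ne_add {i j : ℕ} (hi : i ∈ I) (hj : j ∈ I) (hij : i ≠ j) (c : ℕ) :
    ∀ᶠ x in (p : Filter ℤ), m x j ≠ c + m x i := by
  refine Ultrafilter.eventually_not.2 fun hc => (Finset.card_erase_lt_of_mem hj).not_ge <|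
    h.card_le (β' := β + a j * repunit D c) (a' := a + Pi.single i (a j * D ^ c)) ?_
  filter_upwards [hm, hc] with x hx hxc
  refine ⟨m x, hx.trans ?_⟩
  rw [← Finset.add_sum_erase _ _ hj, hxc, repunit_add]
  simp only [Pi.add_apply, Pi.single_apply, add_mul, ite_mul, zero_mul, Finset.sum_add_distrib,
    Finset.sum_ite_eq', if_pos (Finset.mem_erase.2 ⟨hij, hi⟩)]
  ring

theorem IsMinPattern.eventually_le (N : ℕ) : ∀ᶠ x in (p : Filter ℤ), ∀ i ∈ I, N ≤ m x i := by
  refine (eventually_all_finset I).2 fun i hi => ?_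
  refine ((eventually_all_finset (Finset.range N)).2 fun c _ => h.eventually_ne hm hi c).mono ?_
  exact fun x hx => le_of_not_gt fun hlt => hx _ (Finset.mem_range.2 hlt) rfl

theorem IsMinPattern.eventually_add_le (N : ℕ) : ∀ᶠ x in (p : Filter ℤ),
    ∀ i ∈ I, ∀ j ∈ I, i ≠ j → m x i ≤ m x j → m x i + N ≤ m x j := by
  refine (eventually_all_finset I).2 fun i hi => (eventually_all_finset I).2 fun j hj =>
    eventually_imp_distrib_left.2 fun hij => ?_
  refine ((eventually_all_finset (Finset.range N)).2 fun c _ =>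
    h.eventually_ne_add hm hi hj hij c).mono fun x hx hle => le_of_not_gt fun hlt => ?_
  exact hx (m x j - m x i) (Finset.mem_range.2 (by lia)) (Nat.sub_add_cancel hle).symm

theorem IsMinPattern.eventually_separated (N : ℕ) : ∀ᶠ x in (p : Filter ℤ),
    ∃ l, l.Perm I.toList ∧ Separated N l (m x) := by
  filter_upwards [h.eventually_le hm N, h.eventually_add_le hm N] with x hle hadd
  let r (i j : ℕ) : Prop := m x i ≤ m x j
  have : Std.Total r := ⟨fun i j => le_total _ _⟩
  have : IsTrans ℕ r := ⟨fun i j k => le_trans⟩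
  have hperm := List.perm_insertionSort r I.toList
  have hmem {i : ℕ} (hi : i ∈ List.insertionSort r I.toList) : i ∈ I :=
    Finset.mem_toList.1 (hperm.mem_iff.1 hi)
  refine ⟨_, hperm, fun i hi => hle i (hmem hi), ?_⟩
  exact ((List.pairwise_insertionSort r I.toList).and
    (hperm.nodup_iff.2 I.nodup_toList)).imp_of_mem fun hi hj hij =>
      hadd _ (hmem hi) _ (hmem hj) hij.2 hij.1

end Exponents

theorem IsMinPattern.exists_subpattern_mem (h : IsMinPattern D p β I a) {N : ℕ} (hN : 0 < N) :
    ∃ c, subpattern D β I a c N ∈ p := by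
  obtain ⟨m, hm⟩ := Eventually.choice h.mem
  choose c _ hc using fun i => exists_eventually_eq (Set.finite_Iio N) p
    (fun x => Set.mem_Iio.2 (Nat.mod_lt (m x i) hN))
  refine ⟨c, ?_⟩
  filter_upwards [hm, (eventually_all_finset I).2 fun i _ => hc i, h.eventually_le hm N]
    with x hx hxc hle
  refine ⟨fun i => m x i / N - 1, hx.trans ?_⟩
  refine congrArg _ (Finset.sum_congr rfl fun i hi => ?_)
  rw [Nat.sub_add_cancel (Nat.div_pos (hle i hi) hN), ← hxc i hi, Nat.mod_add_div]

theorem mem_iterLim_repunitLimit_iff {A : Set ℤ} {c : ℕ → ℕ} {N b : ℕ} {v : Prop} {l : List ℕ}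
    (hN : 0 < N) (hl : l.Nodup)
    (h : ∀ m, (∀ i ∈ l, b ≤ m i) → l.Pairwise (fun i j => m i + N ≤ m j) →
      (∀ i ∈ l, m i ≡ c i [MOD N]) → (β + value D a l m ∈ A ↔ v)) :
    β ∈ iterLim (fun i => repunitLimit D (a i) (c i) N) l A ↔ v := by
  induction l generalizing β b with
  | nil => simpa [value, iterLim_nil] using h 0
  | cons i l ih =>
    obtain ⟨hi, hl⟩ := List.nodup_cons.1 hl
    rw [iterLim_cons, mem_translateLim, repunitLimit, Ultrafilter.coe_map, eventually_map]
    refine Iff.trans (eventually_congr ?_) eventually_const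
    filter_upwards [Nat.hyperfilter_le_atTop (eventually_ge_atTop b)] with n hn
    set g := c i + N * n with hg
    have hbg : b ≤ g := hn.trans ((Nat.le_mul_of_pos_left n hN).trans (Nat.le_add_left _ _))
    refine ih hl (b := g + N) fun m hm hsep hmod => ?_
    have hupd {j : ℕ} (hj : j ∈ l) : Function.update m i g j = m j :=
      Function.update_of_ne (ne_of_mem_of_not_mem hj hi) _ _
    have hval : value D a (i :: l) (Function.update m i g) = a i * repunit D g + value D a l m := by
      rw [value, List.map_cons, List.sum_cons, Function.update_self, value]
      exact congrArg _ (congrArg _ (List.map_congr_left fun j hj => by rw [hupd hj]))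
    rw [add_assoc, ← hval]
    refine h _ (List.forall_mem_cons.2 ⟨?_, fun j hj => ?_⟩) (List.pairwise_cons.2
      ⟨fun j hj => ?_, hsep.imp_of_mem fun hj hk hjk => ?_⟩)
      (List.forall_mem_cons.2 ⟨?_, fun j hj => ?_⟩)
    · rwa [Function.update_self]
    · rw [hupd hj]
      exact hbg.trans ((Nat.le_add_right _ _).trans (hm j hj))
    · rw [Function.update_self, hupd hj]
      exact hm j hj
    · rwa [hupd hj, hupd hk]
    · rw [Function.update_self, hg]
      exact Nat.add_mul_mod_self_left _ _ _
    · rw [hupd hj]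
      exact hmod j hj

/- The order of the exponents may depend on `p`; stability makes the iterated limit independent
of it. -/
theorem IsMinPattern.mem_iff (h : IsMinPattern D p β I a) {A : Set ℤ} (hA : LimitsCommute A)
    {c : ℕ → ℕ} {N : ℕ} (hN : 0 < N) (hc : subpattern D β I a c N ∈ p)
    (hdet : ∀ l : List ℕ, l.Perm I.toList → ResidueDetermined D a (pull 1 β A) l N) :
    A ∈ p ↔ β ∈ iterLim (fun i => repunitLimit D (a i) (c i) N) I.toList A := by
  obtain ⟨n, hn⟩ := Eventually.choice hc
  refine Iff.trans (eventually_congr ?_) eventually_const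
  filter_upwards [hn, h.eventually_separated (m := fun x i => c i + N * (n x i + 1)) hn N]
    with x hx hsep
  obtain ⟨l, hl, hsep⟩ := hsep
  have hval : value D a l (fun i => c i + N * (n x i + 1)) =
      ∑ i ∈ I, a i * repunit D (c i + N * (n x i + 1)) := by
    rw [value, (hl.map _).sum_eq, Finset.sum_map_toList]
  rw [← hA.iterLim_perm hl]
  refine (mem_iterLim_repunitLimit_iff hN (hl.nodup_iff.2 I.nodup_toList) (b := N)
    fun m hm hm' hmod => ?_).symm
  have := hdet l hl ⟨hm, hm'⟩ hsep fun i hi => (hmod i hi).trans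
    (Nat.add_mul_mod_self_left _ _ _).symm
  rwa [mem_pull, mem_pull, one_mul, one_mul, hval, ← hx] at this

end MinPattern

/-! ### Generators of the Boolean algebra -/

/-- The generators of the first kind: the cosets of subgroups of the integers. -/
def cosets : Set (Set ℤ) :=
  {S | ∃ (H : AddSubgroup ℤ) (c : ℤ), S = {x | ∃ h ∈ H, x = c + h}}

/-- The generators of the second kind: translates of sums of finitely many sets `Cset d a δ`
with `δ ≥ 1`. -/
def repunitSums (d : ℤ) : Set (Set ℤ) :=
  {S | ∃ (k : ℕ) (β : ℤ) (a : Fin k → ℤ) (δ : Fin k → ℕ), (∀ i, 1 ≤ δ i) ∧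
    S = {x | ∃ c : Fin k → ℤ, (∀ i, c i ∈ Cset d (a i) (δ i)) ∧ x = β + ∑ i : Fin k, c i}}

theorem mem_Cset_iff {d a x : ℤ} {δ : ℕ} :
    x ∈ Cset d a δ ↔ ∃ n : ℕ, x = a * repunit (d ^ δ) (n + 1) := by
  refine exists_congr fun n => ?_
  rw [repunit, Finset.mul_sum]
  simp only [← pow_mul, mul_comm a, mul_comm δ]

theorem setOf_sum_mem_repunitSums {ι : Type*} [Fintype ι] (d β : ℤ) (a : ι → ℤ) {δ : ℕ}
    (hδ : 0 < δ) : {x | ∃ n : ι → ℕ, x = β + ∑ i, a i * repunit (d ^ δ) (n i + 1)} ∈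
      repunitSums d := by
  let e := (Fintype.equivFin ι).symm
  refine ⟨Fintype.card ι, β, a ∘ e, fun _ => δ, fun _ => hδ, Set.ext fun x => ⟨?_, ?_⟩⟩
  · rintro ⟨n, rfl⟩
    exact ⟨fun k => a (e k) * repunit (d ^ δ) (n (e k) + 1), fun k => mem_Cset_iff.2 ⟨_, rfl⟩,
      congrArg _ (e.sum_comp _).symm⟩
  · rintro ⟨y, hy, rfl⟩
    choose n hn using fun k => mem_Cset_iff.1 (hy k)
    refine ⟨n ∘ e.symm, congrArg _ ?_⟩
    rw [← e.sum_comp]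
    simp only [hn, Function.comp_apply, Equiv.symm_apply_apply]

theorem subpattern_mem_repunitSums (d β : ℤ) (I : Finset ℕ) (a : ℕ → ℤ) (c : ℕ → ℕ) {δ N : ℕ}
    (hδ : 0 < δ) (hN : 0 < N) : subpattern (d ^ δ) β I a c N ∈ repunitSums d := by
  have hterm (i n : ℕ) : a i * repunit (d ^ δ) (c i + N * (n + 1)) = a i * repunit (d ^ δ) (c i) +
      a i * (d ^ δ) ^ c i * repunit (d ^ δ) N * repunit (d ^ (δ * N)) (n + 1) := by
    rw [repunit_add, repunit_mul, pow_mul d δ N]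
    ring
  convert setOf_sum_mem_repunitSums d (β + ∑ i ∈ I, a i * repunit (d ^ δ) (c i))
    (fun i : I => a i * (d ^ δ) ^ c i * repunit (d ^ δ) N) (Nat.mul_pos hδ hN) using 1
  ext x
  simp only [subpattern, Set.mem_ofPred_eq, hterm, Finset.sum_add_distrib, ← add_assoc]
  constructor
  · rintro ⟨n, rfl⟩
    exact ⟨fun i => n i, congrArg _ (Finset.sum_coe_sort I _).symm⟩
  · rintro ⟨n, rfl⟩
    refine ⟨fun i => if h : i ∈ I then n ⟨i, h⟩ else 0, congrArg _ ?_⟩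
    rw [← Finset.sum_coe_sort I]
    exact Finset.sum_congr rfl fun i _ => by simp only [dif_pos i.2]

/-! ### Ultrafilters agreeing on the generators -/

section Transfer

variable {p q : Ultrafilter ℤ} {A : Set ℤ}

theorem mem_iff_mem_of_periodic (hpq : ∀ s ∈ cosets, s ∈ p ↔ s ∈ q) {T : ℤ} (hT : 0 < T)
    {P : Set ℤ} (hP : Function.Periodic (· ∈ P) T) : P ∈ p ↔ P ∈ q := by
  obtain ⟨c, -, hc⟩ := exists_eventually_emod_eq hT p id
  have hset : {x | T ∣ x - c} ∈ cosets := by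
    refine ⟨AddSubgroup.zmultiples T, c, Set.ext fun x => ⟨fun h => ?_, ?_⟩⟩
    · exact ⟨x - c, Int.mem_zmultiples_iff.2 h, (add_sub_cancel c x).symm⟩
    · rintro ⟨y, hy, rfl⟩
      simpa [Int.mem_zmultiples_iff] using hy
  have hcp : {x | T ∣ x - c} ∈ p := hc.mono fun x hx => hx ▸ Int.dvd_self_sub_emod
  have key {r : Ultrafilter ℤ} (hr : {x | T ∣ x - c} ∈ r) : P ∈ r ↔ c ∈ P :=
    (eventually_congr (Eventually.mono hr fun x => mem_iff_of_dvd hP)).trans eventually_const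
  rw [key hcp, key ((hpq _ hset).1 hcp)]

variable {d : ℤ} (hpq : ∀ s ∈ repunitSums d, s ∈ p ↔ s ∈ q)
include hpq

theorem IsMinPattern.pattern_mem {δ : ℕ} (hδ : 0 < δ) {β : ℤ} {I : Finset ℕ} {a : ℕ → ℤ}
    (h : IsMinPattern (d ^ δ) p β I a) : pattern (d ^ δ) β I a ∈ q := by
  obtain ⟨c, hc⟩ := h.exists_subpattern_mem one_pos
  exact mem_of_superset ((hpq _ (subpattern_mem_repunitSums d β I a c hδ one_pos)).1 hc)
    (subpattern_subset _ _ _ _ _ _)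

theorem IsMinPattern.transfer {δ : ℕ} (hδ : 0 < δ) {β : ℤ} {I : Finset ℕ} {a : ℕ → ℤ}
    (h : IsMinPattern (d ^ δ) p β I a) : IsMinPattern (d ^ δ) q β I a := by
  refine ⟨h.pattern_mem hpq hδ, fun β' I' a' h' => ?_⟩
  obtain ⟨β₁, I₁, a₁, h₁⟩ := HasPattern.exists_isMinPattern ⟨β', I', a', h'⟩
  exact (h.card_le (h₁.pattern_mem (fun s hs => (hpq s hs).symm) hδ)).trans (h₁.card_le h')

theorem IsMinPattern.mem_iff_mem (hd : 2 ≤ d) (hA : LimitsCommute A) (hF : FiniteKernel d A)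
    {δ : ℕ} (hδ : 0 < δ) {β : ℤ} {I : Finset ℕ} {a : ℕ → ℤ}
    (h : IsMinPattern (d ^ δ) p β I a) : A ∈ p ↔ A ∈ q := by
  have hD : 2 ≤ d ^ δ := hd.trans (le_self_pow₀ (by lia) hδ.ne')
  have hB : FiniteKernel (d ^ δ) (pull 1 β A) := by
    simpa using (hF.pull (by lia) 0 β).pow δ
  obtain ⟨N, hN, hdet⟩ := exists_common_multiple (List.finite_toSet I.toList.permutations)
    (P := fun l N => ResidueDetermined (d ^ δ) a (pull 1 β A) l N)
    (fun _ _ _ hN hN' h => h.mono hN hN') fun l _ => exists_residueDetermined hD hB a l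
  replace hdet (l : List ℕ) (hl : l.Perm I.toList) := hdet l (List.mem_permutations.2 hl)
  obtain ⟨c, hc⟩ := h.exists_subpattern_mem hN
  have hc' := (hpq _ (subpattern_mem_repunitSums d β I a c hδ hN)).1 hc
  rw [h.mem_iff hA hN hc hdet, (h.transfer hpq hδ).mem_iff hA hN hc' hdet]

theorem mem_iff_mem_of_agree (hcosets : ∀ s ∈ cosets, s ∈ p ↔ s ∈ q) (hd : 2 ≤ d)
    (hA : LimitsCommute A) (hF : FiniteKernel d A) : A ∈ p ↔ A ∈ q := by
  obtain ⟨T, hT, P, hP, hN⟩ := exists_periodic_negligible hA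
  obtain ⟨δ, hδ, hcov⟩ := exists_covered hd (hF.symmDiff (finiteKernel_of_periodic hT hP))
    (hA.symmDiff (limitsCommute_of_periodic hT hP)) hN
  by_cases hS : symmDiff A P ∉ p ∧ symmDiff A P ∉ q
  · have key {r : Ultrafilter ℤ} (hr : symmDiff A P ∉ r) : A ∈ r ↔ P ∈ r := by
      refine eventually_congr ((Ultrafilter.eventually_not.2 hr).mono fun x hx => ?_)
      by_contra h
      exact hx (Set.mem_symmDiff.2 (by tauto))
    rw [key hS.1, key hS.2, mem_iff_mem_of_periodic hcosets hT hP]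
  · obtain hS | hS : symmDiff A P ∈ p ∨ symmDiff A P ∈ q := by tauto
    · obtain ⟨β, I, a, h⟩ := (hcov hS).exists_isMinPattern
      exact h.mem_iff_mem hpq hd hA hF hδ
    · obtain ⟨β, I, a, h⟩ := (hcov hS).exists_isMinPattern
      exact (h.mem_iff_mem (fun s hs => (hpq s hs).symm) hd hA hF hδ).symm

end Transfer

/-! ### Boolean algebras and ultrafilters -/

section BoolAlg

variable {X : Type*} {𝒮 : Set (Set X)} {A s t : Set X}

theorem inBoolAlg_inter (hs : InBoolAlg 𝒮 s) (ht : InBoolAlg 𝒮 t) : InBoolAlg 𝒮 (s ∩ t) := by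
  simpa only [Set.compl_union, compl_compl] using (hs.compl.union _ _ ht.compl).compl

theorem inBoolAlg_of_finset {F : Finset 𝒮}
    (h : ∀ x y, (∀ s ∈ F, x ∈ s.1 ↔ y ∈ s.1) → x ∈ A → y ∈ A) : InBoolAlg 𝒮 A := by
  induction F using Finset.induction_on generalizing A with
  | empty =>
    obtain rfl | ⟨x, hx⟩ := A.eq_empty_or_nonempty
    · exact .empty
    · rw [Set.eq_univ_of_forall fun y => h x y (by simp) hx, ← Set.compl_empty]
      exact .compl _ .empty
  | insert s F _ ih =>
    let saturation (B : Set X) : Set X := {y | ∃ x ∈ B, ∀ t ∈ F, x ∈ t.1 ↔ y ∈ t.1}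
    have hsat (B : Set X) : InBoolAlg 𝒮 (saturation B) := ih fun y z hyz ⟨x, hx, hxy⟩ =>
      ⟨x, hx, fun t ht => (hxy t ht).trans (hyz t ht)⟩
    have hs : InBoolAlg 𝒮 s.1 := .base _ s.2
    have hA : A = saturation (A ∩ s) ∩ s ∪ saturation (A ∩ (s : Set X)ᶜ) ∩ (s : Set X)ᶜ := by
      ext y
      constructor
      · intro hy
        by_cases hys : y ∈ s.1
        · exact .inl ⟨⟨y, ⟨hy, hys⟩, fun _ _ => .rfl⟩, hys⟩
        · exact .inr ⟨⟨y, ⟨hy, hys⟩, fun _ _ => .rfl⟩, hys⟩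
      · rintro (⟨⟨x, ⟨hx, hxs⟩, hxy⟩, hys⟩ | ⟨⟨x, ⟨hx, hxs⟩, hxy⟩, hys⟩)
        · exact h x y ((Finset.forall_mem_insert _ _ _).2 ⟨iff_of_true hxs hys, hxy⟩) hx
        · exact h x y ((Finset.forall_mem_insert _ _ _).2 ⟨iff_of_false hxs hys, hxy⟩) hx
    rw [hA]
    exact (inBoolAlg_inter (hsat _) hs).union _ _ (inBoolAlg_inter (hsat _) hs.compl)

theorem inBoolAlg_of_ultrafilters
    (h : ∀ p q : Ultrafilter X, (∀ s ∈ 𝒮, s ∈ p ↔ s ∈ q) → (A ∈ p ↔ A ∈ q)) :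
    InBoolAlg 𝒮 A := by
  by_contra hA
  have hpair (F : Finset 𝒮) : ∃ x y, (∀ s ∈ F, x ∈ s.1 ↔ y ∈ s.1) ∧ x ∈ A ∧ y ∉ A := by
    by_contra! hF
    exact hA (inBoolAlg_of_finset hF)
  choose x y hxy hx hy using hpair
  let u : Ultrafilter (Finset 𝒮) := Ultrafilter.of atTop
  have hu {s : Set X} (hs : s ∈ 𝒮) : s ∈ u.map x ↔ s ∈ u.map y := by
    refine eventually_congr (f := u) (p := (x · ∈ s)) (q := (y · ∈ s)) ?_
    filter_upwards [Ultrafilter.of_le _ (eventually_ge_atTop {⟨s, hs⟩})] with F hF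
    exact hxy F _ (Finset.singleton_subset_iff.1 hF)
  have hAx : A ∈ u.map x := Ultrafilter.mem_map.2 (univ_mem' hx)
  obtain ⟨F, hF⟩ := u.nonempty_of_mem ((h _ _ fun s => hu).1 hAx)
  exact hy F hF

end BoolAlg

end StableAutomatic

open StableAutomatic in
theorem stmt8_general (d : ℕ) (hd : 2 ≤ d) (A : Set ℤ) (hauto : AutomaticZ d A)
    (hlad : ∀ a b : ℕ → ℤ, ¬ ∀ i j, a i + b j ∈ A ↔ i ≤ j) :
    InBoolAlg
      ({S : Set ℤ | ∃ (H : AddSubgroup ℤ) (c : ℤ), S = {x | ∃ h ∈ H, x = c + h}} ∪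
        {S : Set ℤ | ∃ (k : ℕ) (β : ℤ) (a : Fin k → ℤ) (δ : Fin k → ℕ),
          (∀ i, 1 ≤ δ i) ∧
          S = {x | ∃ c : Fin k → ℤ,
            (∀ i, c i ∈ Cset d (a i) (δ i)) ∧ x = β + ∑ i : Fin k, c i}})
      A :=
  inBoolAlg_of_ultrafilters fun _ _ hpq => mem_iff_mem_of_agree (fun s hs => hpq s (.inr hs))
    (fun s hs => hpq s (.inl hs)) (by exact_mod_cast hd) (.of_no_infinite_ladder hlad)
    (.of_automatic hd hauto)

theorem stmt8 (d : ℕ) (hd : 2 ≤ d) (A : Set ℤ)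
    (hauto : AutomaticZ d A) (hst : StableIn A) :
    InBoolAlg
      ({S : Set ℤ | ∃ (H : AddSubgroup ℤ) (c : ℤ), S = {x | ∃ h ∈ H, x = c + h}} ∪
        {S : Set ℤ | ∃ (k : ℕ) (β : ℤ) (a : Fin k → ℤ) (δ : Fin k → ℕ),
          (∀ i, 1 ≤ δ i) ∧
          S = {x | ∃ c : Fin k → ℤ,
            (∀ i, c i ∈ Cset d (a i) (δ i)) ∧ x = β + ∑ i : Fin k, c i}})
      A :=
  stmt8_general d hd A hauto fun a b h => hst.elim fun _ hN =>
    hN ⟨fun i => a i, fun j => b j, fun i j => h i j⟩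
end
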